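/- arXiv:math/0609644 — 2 statements merged into one kernel-verified Lean document; each statement's English description precedes it below -/
import Mathlib

section
/- For every Young diagram Y (encoded by any weakly increasing b : {1,…,n} → {1,…,n} with y ≤ b(y) for all y), the cardinalities of the sets of pattern-avoiding transversals satisfy |S_Y(213)| ≤ |S_Y(123)| and |S_Y(123)| ≤ |S_Y(312)|. -/
/-!
Read the boundary of the diagram as a word of east steps, each opening the next column, and north
steps, each closing the lowest open row. Between two steps the live columns are the opened ones
whose dot lies in an open row; list them by the height of their dots. An east step inserts a new
largest entry into this list, a north step removes its first entry, and the transversal avoids `τ`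
if and only if no list contains the inverse pattern. For the patterns 213, 123 and (after reversing
the lists) 321, which entries may be inserted where depends only on the places of the descents,
respectively ascents, of the list: the breaks. So avoiders are counted by walks on Boolean words.

*213 against 123.* The number of walks for 213 can only grow when breaks are removed from the
initial word. The words reached by an east step for 213 and for 123 match up, except that one
of them has an additional break for 213, and induction on the boundary word gives the inequality.

*123 against 321.* The walks differ only in whether a north step removes the first or the last
letter. Take the peaks of the lattice words with `a` up-steps and `m` down-steps as breaks.
On the sum over all these words, both removals amount to a removal of a step, and an east step
to the addition of a step, up to a correction by the word without breaks. Hence the two counts,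
summed over these words, obey the same recursion along the boundary; the claim is the case
`a = m = 0`.

*321 against 312.* A transversal avoiding 321 is determined by its left-to-right maxima, and the
lexicographically largest transversal with given left-to-right maxima avoids 312.
-/

open Equiv

/-- `π` is a transversal of the Young diagram with row lengths `b` (zero-indexed:
the row at height `h` has `b h` cells, i.e. column `i` (1-indexed `i+1`) lies in that row
iff `(i:ℕ)+1 ≤ b h`). -/
def IsTransversal {n : ℕ} (b : Fin n → ℕ) (π : Equiv.Perm (Fin n)) : Prop :=
  ∀ i : Fin n, (i : ℕ) + 1 ≤ b (π i)

/-- The transversal `π` contains the pattern `τ` inside the Young diagram `b`: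
there are columns `f 0 < f 1 < …` whose dots are in the relative order prescribed by `τ`
and all rows and columns through these dots intersect inside the diagram. -/
def ContainsIn {n k : ℕ} (b : Fin n → ℕ) (π : Equiv.Perm (Fin n))
    (τ : Equiv.Perm (Fin k)) : Prop :=
  ∃ f : Fin k → Fin n, StrictMono f ∧
    (∀ s t : Fin k, τ s < τ t ↔ π (f s) < π (f t)) ∧
    (∀ s t : Fin k, (f s : ℕ) + 1 ≤ b (π (f t)))

/-- `|S_Y(τ)|`: the number of transversals of the Young diagram `b` avoiding `τ` in `Y`. -/
noncomputable def SYcard {n k : ℕ} (b : Fin n → ℕ) (τ : Equiv.Perm (Fin k)) : ℕ :=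
  Nat.card {π : Equiv.Perm (Fin n) // IsTransversal b π ∧ ¬ ContainsIn b π τ}

/-- Classical pattern containment for permutations. -/
def ContainsPat {n k : ℕ} (π : Equiv.Perm (Fin n)) (τ : Equiv.Perm (Fin k)) : Prop :=
  ∃ f : Fin k → Fin n, StrictMono f ∧ ∀ s t : Fin k, τ s < τ t ↔ π (f s) < π (f t)

/-- `|S_n(τ)|`: the number of permutations of length `n` avoiding `τ`. -/
noncomputable def SnCard (n : ℕ) {k : ℕ} (τ : Equiv.Perm (Fin k)) : ℕ :=
  Nat.card {π : Equiv.Perm (Fin n) // ¬ ContainsPat π τ}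

def p123 : Equiv.Perm (Fin 3) := Equiv.refl _
def p213 : Equiv.Perm (Fin 3) :=
  ⟨![1, 0, 2], ![1, 0, 2], by intro x; fin_cases x <;> rfl, by intro x; fin_cases x <;> rfl⟩
def p312 : Equiv.Perm (Fin 3) :=
  ⟨![2, 0, 1], ![1, 2, 0], by intro x; fin_cases x <;> rfl, by intro x; fin_cases x <;> rfl⟩
def p321 : Equiv.Perm (Fin 3) :=
  ⟨![2, 1, 0], ![2, 1, 0], by intro x; fin_cases x <;> rfl, by intro x; fin_cases x <;> rfl⟩

/-- `(σ|τ)`: the block sum with the block of `σ` before and entirely above the block of `τ`. -/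
def blockSum {m k : ℕ} (σ : Equiv.Perm (Fin m)) (τ : Equiv.Perm (Fin k)) :
    Equiv.Perm (Fin (m + k)) :=
  finSumFinEquiv.symm.trans ((((Equiv.sumCongr σ τ).trans
    (Equiv.sumComm (Fin m) (Fin k))).trans finSumFinEquiv).trans
    (finCongr (Nat.add_comm k m)))

/-- `|S_{↘Y}(τ)|`: avoiders whose two leftmost entries are decreasing. -/
noncomputable def SYcardLeftDesc {m k : ℕ} (b : Fin m → ℕ) (τ : Equiv.Perm (Fin k)) : ℕ :=
  Nat.card {π : Equiv.Perm (Fin m) // IsTransversal b π ∧ ¬ ContainsIn b π τ ∧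
    ∀ i j : Fin m, (i : ℕ) = 0 → (j : ℕ) = 1 → π j < π i}

/-- `|S_{↗Y}(τ)|`: avoiders whose two leftmost entries are increasing. -/
noncomputable def SYcardLeftAsc {m k : ℕ} (b : Fin m → ℕ) (τ : Equiv.Perm (Fin k)) : ℕ :=
  Nat.card {π : Equiv.Perm (Fin m) // IsTransversal b π ∧ ¬ ContainsIn b π τ ∧
    ∀ i j : Fin m, (i : ℕ) = 0 → (j : ℕ) = 1 → π i < π j}

/-- `|S^{↘}_Y(τ)|`: avoiders in which the value `m` occurs to the left of the value `m-1`. -/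
noncomputable def SYcardTopDesc {m k : ℕ} (b : Fin m → ℕ) (τ : Equiv.Perm (Fin k)) : ℕ :=
  Nat.card {π : Equiv.Perm (Fin m) // IsTransversal b π ∧ ¬ ContainsIn b π τ ∧
    ∀ u v : Fin m, (u : ℕ) + 1 = m → (v : ℕ) + 2 = m → π⁻¹ u < π⁻¹ v}

/-- `|S^{↗}_Y(τ)|`: avoiders in which the value `m-1` occurs to the left of the value `m`. -/
noncomputable def SYcardTopAsc {m k : ℕ} (b : Fin m → ℕ) (τ : Equiv.Perm (Fin k)) : ℕ :=
  Nat.card {π : Equiv.Perm (Fin m) // IsTransversal b π ∧ ¬ ContainsIn b π τ ∧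
    ∀ u v : Fin m, (u : ℕ) + 1 = m → (v : ℕ) + 2 = m → π⁻¹ v < π⁻¹ u}

/-! ### Runs along the boundary -/

/-- The steps of the boundary of a Young diagram, from its lower left to its upper right corner:
`east` opens the next column and `north` closes the lowest open row. -/
inductive Step
  | east
  | north

section Runs

lemma mem_insertions_iff {α : Type*} {x : α} {L L' : List α} :
    L' ∈ List.permutations'Aux x L ↔ ∃ pre post, L = pre ++ post ∧ L' = pre ++ x :: post := by
  induction L generalizing L' with
  | nil => simp [List.permutations'Aux]
  | cons a L ih =>
    simp only [List.permutations'Aux, List.mem_cons, List.mem_map, ih]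
    constructor
    · rintro (rfl | ⟨_, ⟨pre, post, rfl, rfl⟩, rfl⟩)
      · exact ⟨[], _, rfl, rfl⟩
      · exact ⟨a :: pre, post, rfl, rfl⟩
    · rintro ⟨_ | ⟨c, pre⟩, post, h, rfl⟩
      · exact .inl (by simpa using h.symm)
      · obtain ⟨rfl, rfl⟩ := List.cons_eq_cons.1 h
        exact .inr ⟨_, ⟨pre, post, rfl, rfl⟩, rfl⟩

lemma filter_ne_eq_self {α : Type*} [DecidableEq α] {x : α} {L : List α} (hx : x ∉ L) :
    L.filter (· ≠ x) = L :=
  List.filter_eq_self.2 fun a ha => by simpa using ne_of_mem_of_not_mem ha hx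

lemma mem_insertions_iff_filter {α : Type*} [DecidableEq α] {x : α} {L L' : List α} (hx : x ∉ L) :
    L' ∈ List.permutations'Aux x L ↔ L'.filter (· ≠ x) = L ∧ L'.count x = 1 := by
  rw [mem_insertions_iff]
  constructor
  · rintro ⟨pre, post, rfl, rfl⟩
    rw [List.mem_append, not_or] at hx
    rw [List.filter_append, List.filter_cons_of_neg (by simp), filter_ne_eq_self hx.1,
      filter_ne_eq_self hx.2, List.count_append, List.count_cons_self,
      List.count_eq_zero_of_not_mem hx.1, List.count_eq_zero_of_not_mem hx.2]
    exact ⟨rfl, rfl⟩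
  · rintro ⟨hL, hcount⟩
    obtain ⟨pre, post, rfl⟩ := List.append_of_mem (List.count_pos_iff.1 (hcount ▸ one_pos))
    rw [List.count_append, List.count_cons_self] at hcount
    have hpre : x ∉ pre := List.count_eq_zero.1 (by omega)
    have hpost : x ∉ post := List.count_eq_zero.1 (by omega)
    refine ⟨pre, post, ?_, rfl⟩
    rw [← hL, List.filter_append, List.filter_cons_of_neg (by simp), filter_ne_eq_self hpre,
      filter_ne_eq_self hpost]

lemma filter_lt_succ_mem_insertions_iff {x : ℕ} {L l : List ℕ} (hL : ∀ a ∈ L, a < x) :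
    l.filter (· < x + 1) ∈ List.permutations'Aux x L ↔
      l.filter (· < x) = L ∧ l.count x = 1 := by
  have hfilter : (l.filter (· < x + 1)).filter (· ≠ x) = l.filter (· < x) := by
    rw [List.filter_filter]
    exact List.filter_congr fun a _ => by rw [← Bool.decide_and]; congr 1; ext; omega
  rw [mem_insertions_iff_filter fun h => (hL x h).false, hfilter,
    List.count_filter (by simp)]

variable (P : List ℕ → Prop)

/-- `IsRun P w x l`: the boundary word `w`, starting when the columns below `x` have been opened,
can be followed with `l` as the list of the columns of the dots in the rows closed by `w`, in order.
The columns live after an east step are those in the rest of `l` that have been opened already, and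
they have to form a list satisfying `P`. -/
def IsRun : List Step → ℕ → List ℕ → Prop
  | [], _, l => l = []
  | .east :: w, x, l => l.count x = 1 ∧ P (l.filter (· < x + 1)) ∧ IsRun w (x + 1) l
  | .north :: w, x, l => ∃ c l', l = c :: l' ∧ c < x ∧ IsRun w x l'

/-- The lists `l` with `IsRun P w x l` whose live columns at the start form the list `L`, generated
step by step: an east step inserts `x` into `L` and a north step removes the head of `L`. -/
def runs [DecidablePred P] : List Step → ℕ → List ℕ → List (List ℕ)
  | [], _, [] => [[]]
  | [], _, _ :: _ => []
  | .east :: w, x, L => ((List.permutations'Aux x L).filter P).flatMap (runs w (x + 1))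
  | .north :: _, _, [] => []
  | .north :: w, x, c :: L => (runs w x L).map (c :: ·)

variable {P}

lemma lt_succ_of_mem_insertions {x : ℕ} {L L' : List ℕ} (hL : ∀ a ∈ L, a < x)
    (h : L' ∈ List.permutations'Aux x L) : ∀ a ∈ L', a < x + 1 := by
  obtain ⟨pre, post, rfl, rfl⟩ := mem_insertions_iff.1 h
  simp only [List.mem_append, List.mem_cons] at hL ⊢
  rintro a (ha | rfl | ha)
  · exact (hL a (.inl ha)).trans x.lt_succ_self
  · exact a.lt_succ_self
  · exact (hL a (.inr ha)).trans x.lt_succ_self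

lemma mem_runs [DecidablePred P] {w : List Step} {x : ℕ} {L l : List ℕ} (hL : ∀ a ∈ L, a < x) :
    l ∈ runs P w x L ↔ IsRun P w x l ∧ l.filter (· < x) = L := by
  induction w generalizing x L l with
  | nil =>
    cases L with
    | nil => simpa [runs, IsRun] using fun h => by simp [h]
    | cons c L => simpa [runs, IsRun] using fun h => by simp [h]
  | cons s w ih =>
    cases s with
    | east =>
      simp only [runs, List.mem_flatMap, List.mem_filter, decide_eq_true_eq, IsRun]
      constructor
      · rintro ⟨L', ⟨hL', hP⟩, hl⟩
        obtain ⟨hrun, rfl⟩ := (ih (lt_succ_of_mem_insertions hL hL')).1 hl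
        obtain ⟨hfilter, hcount⟩ := (filter_lt_succ_mem_insertions_iff hL).1 hL'
        exact ⟨⟨hcount, hP, hrun⟩, hfilter⟩
      · rintro ⟨⟨hcount, hP, hrun⟩, hfilter⟩
        have hL' := (filter_lt_succ_mem_insertions_iff hL).2 ⟨hfilter, hcount⟩
        exact ⟨_, ⟨hL', hP⟩, (ih (lt_succ_of_mem_insertions hL hL')).2 ⟨hrun, rfl⟩⟩
    | north =>
      cases L with
      | nil =>
        simp only [runs, List.not_mem_nil, IsRun, false_iff]
        rintro ⟨⟨c, l', rfl, hc, -⟩, hfilter⟩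
        simp [hc] at hfilter
      | cons c L =>
        have hcx := hL c (by simp)
        have hrest : ∀ a ∈ L, a < x := fun a ha => hL a (List.mem_cons_of_mem c ha)
        simp only [runs, List.mem_map, ih hrest, IsRun]
        constructor
        · rintro ⟨l', ⟨hrun, rfl⟩, rfl⟩
          exact ⟨⟨c, l', rfl, hcx, hrun⟩, by simp [hcx]⟩
        · rintro ⟨⟨c', l', rfl, hc, hrun⟩, hfilter⟩
          rw [List.filter_cons_of_pos (by simpa using hc), List.cons_eq_cons] at hfilter
          exact ⟨l', ⟨hrun, hfilter.2⟩, by rw [hfilter.1]⟩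

lemma nodup_runs [DecidablePred P] {w : List Step} {x : ℕ} {L : List ℕ} (hL : ∀ a ∈ L, a < x) :
    (runs P w x L).Nodup := by
  induction w generalizing x L with
  | nil => cases L <;> simp [runs]
  | cons s w ih =>
    cases s with
    | east =>
      rw [runs, List.nodup_flatMap]
      have hlt : ∀ L' ∈ (List.permutations'Aux x L).filter P, ∀ a ∈ L', a < x + 1 := fun L' hL' =>
        lt_succ_of_mem_insertions hL (List.mem_of_mem_filter hL')
      have hnodup := (List.nodup_permutations'Aux_of_notMem L x fun h => (hL x h).false).filter P
      refine ⟨fun L' hL' => ih (hlt L' hL'), hnodup.imp_of_mem fun hL₁ hL₂ hne l hl₁ hl₂ => hne ?_⟩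
      rw [← ((mem_runs (hlt _ hL₁)).1 hl₁).2, ((mem_runs (hlt _ hL₂)).1 hl₂).2]
    | north =>
      cases L with
      | nil => exact List.nodup_nil
      | cons c L =>
        exact (ih fun a ha => hL a (List.mem_cons_of_mem c ha)).map (List.cons_injective)

/-- The boundary of the diagram with weakly increasing row lengths `B` above a row of length `x`. -/
def boundaryWord : ℕ → List ℕ → List Step
  | _, [] => []
  | x, c :: B => List.replicate (c - x) .east ++ .north :: boundaryWord c B

/-- The columns live when column `z` has just been opened, by height: row by row, `l` lists the
columns of the dots and `B` the row lengths, so a row is still open if it is longer than `z`. -/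
def liveAt (l B : List ℕ) (z : ℕ) : List ℕ :=
  ((l.zip B).filter fun d => z < d.2 ∧ d.1 < z + 1).map Prod.fst

lemma isRun_replicate_east_append {k x : ℕ} {w : List Step} {l : List ℕ} :
    IsRun P (List.replicate k .east ++ w) x l ↔
      (∀ z, x ≤ z → z < x + k → l.count z = 1 ∧ P (l.filter (· < z + 1))) ∧
        IsRun P w (x + k) l := by
  induction k generalizing x with
  | zero => simpa using fun _ z hz hz' => absurd hz hz'.not_ge
  | succ k ih =>
    rw [List.replicate_succ, List.cons_append, IsRun, ih, show x + 1 + k = x + (k + 1) by ring,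
      ← and_assoc, ← and_assoc]
    refine and_congr_left fun _ => ⟨fun ⟨hx, h⟩ z hz hz' => ?_, fun h =>
      ⟨h x le_rfl (by omega), fun z hz hz' => h z (by omega) hz'⟩⟩
    obtain rfl | hz := hz.eq_or_lt
    exacts [hx, h z hz hz']

lemma liveAt_of_forall_lt {l B : List ℕ} {z : ℕ} (hlen : l.length = B.length)
    (hB : ∀ c ∈ B, z < c) : liveAt l B z = l.filter (· < z + 1) := by
  have hfilter : (l.zip B).filter (fun d => z < d.2 ∧ d.1 < z + 1) =
      (l.zip B).filter ((· < z + 1) ∘ Prod.fst) :=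
    List.filter_congr fun d hd => by simp [hB _ (List.of_mem_zip hd).2]
  rw [liveAt, hfilter, ← List.filter_map, List.map_fst_zip hlen.le]

lemma liveAt_cons_of_le {a c z : ℕ} {l B : List ℕ} (hcz : c ≤ z) :
    liveAt (a :: l) (c :: B) z = liveAt l B z := by
  simp [liveAt, hcz.not_gt]

lemma isRun_boundaryWord {x : ℕ} {l B : List ℕ} (hB : (x :: B).Pairwise (· ≤ ·)) :
    IsRun P (boundaryWord x B) x l ↔ List.Forall₂ (· < ·) l B ∧
      ∀ z, x ≤ z → (∃ c ∈ B, z < c) → l.count z = 1 ∧ P (liveAt l B z) := by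
  induction B generalizing x l with
  | nil => simp [boundaryWord, IsRun]
  | cons c B ih =>
    obtain ⟨hx, hcB⟩ := List.pairwise_cons.1 hB
    have hcB' : ∀ c' ∈ B, c ≤ c' := (List.pairwise_cons.1 hcB).1
    rw [boundaryWord, isRun_replicate_east_append, Nat.add_sub_cancel' (hx c (by simp)), IsRun]
    have hlow {l : List ℕ} {z : ℕ} (hl : List.Forall₂ (· < ·) l (c :: B)) (hz : z < c) :
        liveAt l (c :: B) z = l.filter (· < z + 1) :=
      liveAt_of_forall_lt hl.length_eq
        (List.forall_mem_cons.2 ⟨hz, fun c' hc' => hz.trans_le (hcB' c' hc')⟩)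
    constructor
    · rintro ⟨hruns, a, l, rfl, hac, hrun⟩
      obtain ⟨hl, hlive⟩ := (ih hcB).1 hrun
      refine ⟨.cons hac hl, fun z hxz hz => ?_⟩
      obtain hzc | hcz := lt_or_ge z c
      · rw [hlow (.cons hac hl) hzc]
        exact hruns z hxz hzc
      · rw [liveAt_cons_of_le hcz, List.count_cons_of_ne (hac.trans_le hcz).ne]
        exact hlive z hcz (by simpa [hcz.not_gt] using hz)
    · rintro ⟨hl, hlive⟩
      refine ⟨fun z hxz hzc => ?_, ?_⟩
      · rw [← hlow hl hzc]
        exact hlive z hxz ⟨c, by simp, hzc⟩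
      · cases hl with | @cons a _ l _ hac hl =>
        refine ⟨a, l, rfl, hac, (ih hcB).2 ⟨hl, fun z hcz ⟨c', hc', hzc'⟩ => ?_⟩⟩
        rw [← liveAt_cons_of_le hcz, ← List.count_cons_of_ne (hac.trans_le hcz).ne]
        exact hlive z ((hx c (by simp)).trans hcz) ⟨c', by simp [hc'], hzc'⟩

end Runs

/-! ### Transversals as runs -/

section Columns

variable {n : ℕ}

/-- No sublist of `L` is ordered like the inverse of `τ`. The inverse appears because `L` lists the
columns of dots by height, while `τ` lists heights by column. -/
def ListAvoids {k : ℕ} (τ : Perm (Fin k)) (L : List ℕ) : Prop :=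
  ∀ c : Fin k → ℕ, StrictMono c → ¬ (List.ofFn (c ∘ τ.symm)).Sublist L

/-- The columns of the dots of `π`, row by row, numbered from 0. -/
def columns (π : Perm (Fin n)) : List ℕ := List.ofFn fun y => (π.symm y : ℕ)

lemma columns_injective : Function.Injective (columns : Perm (Fin n) → List ℕ) := by
  intro π σ h
  exact Equiv.symm_bijective.injective
    (Equiv.ext fun y => Fin.ext (congrFun (List.ofFn_injective h) y))

lemma forall₂_ofFn_iff {α β : Type*} {r : α → β → Prop} {f : Fin n → α} {g : Fin n → β} :
    List.Forall₂ r (List.ofFn f) (List.ofFn g) ↔ ∀ i, r (f i) (g i) := by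
  induction n with
  | zero => simp
  | succ n ih => simp [List.ofFn_succ, Fin.forall_fin_succ, ih]

lemma forall₂_columns_iff {b : Fin n → ℕ} {π : Perm (Fin n)} :
    List.Forall₂ (· < ·) (columns π) (List.ofFn b) ↔ IsTransversal b π := by
  rw [columns, forall₂_ofFn_iff]
  exact π.symm.forall_congr fun y => by rw [Equiv.apply_symm_apply, Nat.add_one_le_iff]

lemma mem_columns {π : Perm (Fin n)} {a : ℕ} : a ∈ columns π ↔ a < n := by
  rw [columns, List.mem_ofFn]
  exact ⟨fun ⟨y, hy⟩ => hy ▸ (π.symm y).2, fun ha => ⟨π ⟨a, ha⟩, by simp⟩⟩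

lemma nodup_columns (π : Perm (Fin n)) : (columns π).Nodup :=
  List.nodup_ofFn.2 (Fin.val_injective.comp π.symm.injective)

lemma sorted_zero_cons_ofFn {b : Fin n → ℕ} (hmono : Monotone b) :
    (0 :: List.ofFn b).Pairwise (· ≤ ·) :=
  List.pairwise_cons.2 ⟨fun _ _ => Nat.zero_le _, hmono.sortedLE_ofFn.pairwise⟩

lemma liveAt_ofFn (g b : Fin n → ℕ) (z : ℕ) :
    liveAt (List.ofFn g) (List.ofFn b) z =
      ((List.finRange n).filter fun y => z < b y ∧ g y < z + 1).map g := by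
  rw [liveAt, List.ofFn_eq_map, List.ofFn_eq_map, List.zip_map', List.filter_map, List.map_map]
  rfl

lemma sublist_map_filter_finRange_iff {α : Type*} {g : Fin n → α} {q : Fin n → Prop}
    [DecidablePred q] {k : ℕ} {c : Fin k → α} :
    (List.ofFn c).Sublist (((List.finRange n).filter q).map g) ↔
      ∃ h : Fin k → Fin n, StrictMono h ∧ (∀ u, q (h u)) ∧ c = g ∘ h := by
  rw [List.sublist_map_iff]
  constructor
  · rintro ⟨l, hl, hcl⟩
    obtain rfl : k = l.length := by simpa using congrArg List.length hcl
    refine ⟨l.get, List.pairwise_iff_get.1 ((List.pairwise_lt_finRange n).sublist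
      (hl.trans List.filter_sublist)), fun u => ?_, ?_⟩
    · simpa using List.of_mem_filter (hl.subset (l.get_mem u))
    · rw [← List.ofFn_injective.eq_iff, hcl, ← List.map_ofFn, List.ofFn_get]
  · rintro ⟨h, hh, hq, rfl⟩
    refine ⟨List.ofFn h, List.sublist_of_subperm_of_pairwise (r := (· ≤ ·)) ?_ ?_ ?_,
      (List.map_ofFn ..).symm⟩
    · refine (List.nodup_ofFn.2 hh.injective).subperm fun y hy => ?_
      obtain ⟨u, rfl⟩ := List.mem_ofFn.1 hy
      simpa using hq u
    · exact hh.monotone.sortedLE_ofFn.pairwise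
    · exact ((List.pairwise_lt_finRange n).filter _).imp le_of_lt

lemma containsIn_iff_exists_liveAt {b : Fin n → ℕ} {π : Perm (Fin n)} {k : ℕ}
    {τ : Perm (Fin (k + 1))} :
    ContainsIn b π τ ↔
      ∃ z, (∃ c ∈ List.ofFn b, z < c) ∧ ¬ ListAvoids τ (liveAt (columns π) (List.ofFn b) z) := by
  simp only [ListAvoids, not_forall, not_not, columns, liveAt_ofFn,
    sublist_map_filter_finRange_iff, exists_prop]
  constructor
  · rintro ⟨f, hf, hτ, hb⟩
    refine ⟨f (Fin.last k), ⟨_, List.mem_ofFn.2 ⟨_, rfl⟩, hb _ (Fin.last k)⟩, fun s => f s, hf,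
      fun u => π (f (τ.symm u)), fun u v huv => ?_, fun u => ⟨hb _ _, ?_⟩, ?_⟩
    · exact (hτ _ _).1 (by simpa using huv)
    · rw [Equiv.symm_apply_apply]
      exact Nat.lt_succ_of_le (hf.monotone (Fin.le_last _))
    · ext u
      simp
  · rintro ⟨z, -, c, hc, h, hh, hlive, hch⟩
    have hcol (s : Fin (k + 1)) : (π.symm (h (τ s)) : ℕ) = c s := by
      simpa using (congrFun hch (τ s)).symm
    refine ⟨fun s => π.symm (h (τ s)), fun s t hst => ?_, fun s t => ?_, fun s t => ?_⟩
    · rw [Fin.lt_def, hcol, hcol]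
      exact hc hst
    · simpa using hh.lt_iff_lt.symm
    · rw [Equiv.apply_symm_apply]
      exact Nat.succ_le_of_lt ((Nat.lt_succ_iff.1 (hlive _).2).trans_lt (hlive _).1)

lemma isRun_columns_iff {b : Fin n → ℕ} (hmono : Monotone b) (hbn : ∀ y, b y ≤ n) {k : ℕ}
    {τ : Perm (Fin (k + 1))} {π : Perm (Fin n)} :
    IsRun (ListAvoids τ) (boundaryWord 0 (List.ofFn b)) 0 (columns π) ↔
      IsTransversal b π ∧ ¬ ContainsIn b π τ := by
  rw [isRun_boundaryWord (sorted_zero_cons_ofFn hmono), forall₂_columns_iff,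
    containsIn_iff_exists_liveAt]
  push Not
  refine and_congr_right fun _ => forall_congr' fun z => ?_
  have hcount (hz : ∃ c ∈ List.ofFn b, z < c) : (columns π).count z = 1 := by
    obtain ⟨_, hc, hzc⟩ := hz
    obtain ⟨y, rfl⟩ := List.mem_ofFn.1 hc
    exact List.count_eq_one_of_mem (nodup_columns π) (mem_columns.2 (hzc.trans_le (hbn y)))
  exact ⟨fun h hz => (h z.zero_le hz).2, fun h _ hz => ⟨hcount hz, h hz⟩⟩

lemma exists_columns_eq_of_isRun {b : Fin n → ℕ} (hmono : Monotone b) (hbn : ∀ y, b y ≤ n)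
    {P : List ℕ → Prop} {l : List ℕ} (hl : IsRun P (boundaryWord 0 (List.ofFn b)) 0 l) :
    ∃ π : Perm (Fin n), columns π = l := by
  obtain ⟨hlt, hcount⟩ := (isRun_boundaryWord (sorted_zero_cons_ofFn hmono)).1 hl
  obtain rfl : l.length = n := by simpa using hlt.length_eq
  have hlb (y : Fin l.length) : l.get y < b y := by
    simpa using (List.forall₂_iff_get.1 hlt).2 y y.2 (by simp)
  let g (y : Fin l.length) : Fin l.length := ⟨l.get y, (hlb y).trans_le (hbn y)⟩
  have hg : Function.Injective g := fun y y' h =>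
    List.nodup_iff_injective_get.1 (List.nodup_iff_count_eq_one.2 fun a ha => by
      obtain ⟨y, rfl⟩ := List.get_of_mem ha
      exact (hcount _ (Nat.zero_le _) ⟨_, List.mem_ofFn.2 ⟨y, rfl⟩, hlb y⟩).1) (Fin.ext_iff.1 h)
  refine ⟨(Equiv.ofBijective g (Finite.injective_iff_bijective.1 hg)).symm, ?_⟩
  exact List.ofFn_get l

lemma SYcard_eq_length_runs {b : Fin n → ℕ} (hmono : Monotone b) (hbn : ∀ y, b y ≤ n) {k : ℕ}
    {τ : Perm (Fin (k + 1))} {P : List ℕ → Prop} [DecidablePred P]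
    (hP : ∀ L, P L ↔ ListAvoids τ L) :
    SYcard b τ = (runs P (boundaryWord 0 (List.ofFn b)) 0 []).length := by
  obtain rfl : P = ListAvoids τ := funext fun L => propext (hP L)
  have himage : columns '' {π | IsTransversal b π ∧ ¬ ContainsIn b π τ} =
      (runs (ListAvoids τ) (boundaryWord 0 (List.ofFn b)) 0 []).toFinset := by
    ext l
    rw [List.coe_toFinset, Set.mem_ofPred_eq, mem_runs (List.forall_mem_nil _)]
    simp only [Nat.not_lt_zero, decide_false, List.filter_false, and_true]
    constructor
    · rintro ⟨π, hπ, rfl⟩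
      exact (isRun_columns_iff hmono hbn).2 hπ
    · intro hl
      obtain ⟨π, rfl⟩ := exists_columns_eq_of_isRun hmono hbn hl
      exact ⟨π, (isRun_columns_iff hmono hbn).1 hl, rfl⟩
  calc SYcard b τ = {π | IsTransversal b π ∧ ¬ ContainsIn b π τ}.ncard := rfl
    _ = (columns '' {π | IsTransversal b π ∧ ¬ ContainsIn b π τ}).ncard :=
      (Set.ncard_image_of_injective _ columns_injective).symm
    _ = (runs (ListAvoids τ) (boundaryWord 0 (List.ofFn b)) 0 []).length := by
      rw [himage, Set.ncard_coe_finset,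
        List.toFinset_card_of_nodup (nodup_runs (List.forall_mem_nil _))]

end Columns

/-! ### Avoidance through break words -/

section Breaks

/-- Entries `a`, `c` form a break: an ascent if `β` is `true`, as relevant for 123, and a
descent if `β` is `false`, as relevant for 213. -/
def Breaks : Bool → ℕ → ℕ → Prop
  | true, a, c => a < c
  | false, a, c => c < a

instance (β : Bool) (a c : ℕ) : Decidable (Breaks β a c) :=
  match β with
  | true => inferInstanceAs (Decidable (a < c))
  | false => inferInstanceAs (Decidable (c < a))

/-- No break is followed by an entry larger than both of its entries. Here breaks are formed by
arbitrary, not only by adjacent entries. -/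
def BreakFree (β : Bool) (L : List ℕ) : Prop :=
  L.Triplewise fun a c e => Breaks β a c → a < e → ¬ c < e

variable {β : Bool} {a c e x : ℕ} {L pre post : List ℕ}

lemma breaks_iff_of_lt (h : a < x) : Breaks β a x ↔ β = true := by
  cases β <;> simp [Breaks, h, h.le]

lemma breaks_iff_of_gt (h : a < x) : Breaks β x a ↔ β = false := by
  cases β <;> simp [Breaks, h, h.le]

lemma not_breaks_trans (hac : ¬ Breaks β a c) (hce : ¬ Breaks β c e) : ¬ Breaks β a e := by
  cases β <;> simp only [Breaks] at * <;> omega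

lemma breakFree_nil : BreakFree β [] := .nil

lemma BreakFree.of_cons (h : BreakFree β (a :: L)) : BreakFree β L :=
  (List.triplewise_cons.1 h).2

lemma breakFree_insertion_iff (hL : BreakFree β (pre ++ post)) (hx : ∀ a ∈ pre ++ post, a < x) :
    BreakFree β (pre ++ x :: post) ↔ pre.Pairwise fun a c => ¬ Breaks β a c := by
  obtain ⟨hpre, hpost, hpre_post, hpost_pre⟩ := List.triplewise_append.1 hL
  simp only [List.mem_append, or_imp, forall_and] at hx
  simp only [BreakFree, List.triplewise_append, List.triplewise_cons, List.pairwise_cons,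
    List.forall_mem_cons]
  constructor
  · rintro ⟨-, -, -, hpre_x, -⟩
    exact hpre_x.imp_of_mem fun ha hc h hac => h hac (hx.1 _ ha) (hx.1 _ hc)
  · refine fun h => ⟨hpre, ⟨?_, hpost⟩, fun a ha => ⟨?_, hpre_post a ha⟩, ?_, hpost_pre⟩
    · exact List.pairwise_of_forall_mem_list fun _ _ e he _ hxe => absurd hxe (hx.2 e he).not_gt
    · exact fun e he _ _ => (hx.2 e he).not_gt
    · exact h.imp fun hac h => absurd h hac

lemma BreakFree.cons_max (hL : BreakFree β (a :: L)) (hx : ∀ d ∈ a :: L, d < x) :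
    BreakFree β (a :: x :: L) :=
  (breakFree_insertion_iff (pre := [a]) hL hx).2 (List.pairwise_singleton _ _)

lemma breakFree_cons_cons_insertion_iff {L' : List ℕ} (hL : BreakFree β (a :: c :: L))
    (hx : ∀ d ∈ a :: c :: L, d < x) (hL' : L' ∈ List.permutations'Aux x L) :
    BreakFree β (a :: c :: L') ↔ ¬ Breaks β a c ∧ BreakFree β (c :: L') := by
  obtain ⟨pre, post, rfl, rfl⟩ := mem_insertions_iff.1 hL'
  have hac := breakFree_insertion_iff (pre := a :: c :: pre) hL hx
  have hc := breakFree_insertion_iff (pre := c :: pre) hL.of_cons fun d hd => hx d (.tail a hd)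
  simp only [List.cons_append] at hac hc
  rw [hac, hc, List.pairwise_cons, List.forall_mem_cons]
  refine ⟨fun h => ⟨h.1.1, h.2⟩, fun ⟨h, hpre⟩ => ⟨⟨h, fun d hd => ?_⟩, hpre⟩⟩
  exact not_breaks_trans h (List.rel_of_pairwise_cons hpre hd)

/-- The word marking by `true` the entries of the list that form a break with the entry before them,
the first one being preceded by `a`. -/
def breaksAfter (β : Bool) : ℕ → List ℕ → List Bool
  | _, [] => []
  | a, c :: L => decide (Breaks β a c) :: breaksAfter β c L

/-- The word marking the breaks between adjacent entries. It starts with a spare letter `false`, so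
that it has one letter for each entry. -/
def breakWord (β : Bool) : List ℕ → List Bool
  | [] => []
  | a :: L => false :: breaksAfter β a L

/-- The words obtained by inserting a new largest entry into a list `L` with break word `false :: t`
behind its first entry, without the spare letter: the insertion must not be preceded by a break. -/
def insertBreak (β : Bool) : List Bool → Multiset (List Bool)
  | [] => {[β]}
  | true :: t => {β :: (!β) :: t}
  | false :: t => (β :: (!β) :: t) ::ₘ (insertBreak β t).map (false :: ·)

/-- The break words reached from a break word by an east step. -/
def openColumn (β : Bool) : List Bool → Multiset (List Bool)
  | [] => {[false]}
  | _ :: t => (false :: (!β) :: t) ::ₘ (insertBreak β t).map (false :: ·)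

/-- Removal of the first entry from a break word: its successor takes over the spare letter. -/
def dropFirst (s : List Bool) : List Bool := s.tail.modifyHead fun _ => false

/-- The break words reached by a north step that removes an entry by `drop`: none if no column is
live. They form a multiset so that both kinds of steps can be summed over alike. -/
def closeRow (drop : List Bool → List Bool) : List Bool → Multiset (List Bool)
  | [] => 0
  | a :: t => {drop (a :: t)}

/-- The number of ways to follow a boundary word from the break word `s` to the empty word. -/
def walkCount (β : Bool) (drop : List Bool → List Bool) : List Step → List Bool → ℕ
  | [], s => if s = [] then 1 else 0
  | .east :: w, s => ((openColumn β s).map (walkCount β drop w)).sum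
  | .north :: w, s => ((closeRow drop s).map (walkCount β drop w)).sum

lemma breaksAfter_cons_of_lt (hx : a < x) : breaksAfter β a (x :: L) = β :: breaksAfter β x L := by
  simp [breaksAfter, breaks_iff_of_lt hx]

lemma breaksAfter_cons_of_gt (hx : c < x) :
    breaksAfter β x (c :: L) = (!β) :: breaksAfter β c L := by
  cases β <;> simp [breaksAfter, breaks_iff_of_gt hx]

lemma map_breaksAfter_insertions [DecidablePred (BreakFree β)] (hL : BreakFree β (a :: L))
    (hx : ∀ d ∈ a :: L, d < x) :
    ((((List.permutations'Aux x L).filter fun L' => BreakFree β (a :: L')).map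
      (breaksAfter β a) : List _) : Multiset (List Bool)) = insertBreak β (breaksAfter β a L) := by
  induction L generalizing a with
  | nil =>
    simp [List.permutations'Aux, hL.cons_max hx, breaksAfter_cons_of_lt (hx a List.mem_cons_self),
      breaksAfter.eq_1, insertBreak]
  | cons c L ih =>
    have hcx : ∀ d ∈ c :: L, d < x := fun d hd => hx d (.tail a hd)
    have hfilter : (List.permutations'Aux x L).filter (fun L' => BreakFree β (a :: c :: L')) =
        (List.permutations'Aux x L).filter fun L' => ¬ Breaks β a c ∧ BreakFree β (c :: L') :=
      List.filter_congr fun L' hL' =>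
        decide_eq_decide.2 (breakFree_cons_cons_insertion_iff hL hx hL')
    rw [List.permutations'Aux, List.filter_cons_of_pos (by simpa using hL.cons_max hx),
      List.map_cons, List.filter_map, Function.comp_def, hfilter, List.map_map,
      breaksAfter_cons_of_lt (hx a List.mem_cons_self),
      breaksAfter_cons_of_gt (hcx c List.mem_cons_self)]
    by_cases hac : Breaks β a c
    · simp [hac, breaksAfter, insertBreak]
    · simp [hac, breaksAfter, insertBreak, ← ih hL.of_cons hcx, Function.comp_def]

lemma map_breakWord_insertions [DecidablePred (BreakFree β)] (hL : BreakFree β L)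
    (hx : ∀ d ∈ L, d < x) :
    ((((List.permutations'Aux x L).filter (BreakFree β)).map (breakWord β) : List _) :
      Multiset (List Bool)) = openColumn β (breakWord β L) := by
  have hmax : BreakFree β (x :: L) := (breakFree_insertion_iff (pre := []) hL hx).2 .nil
  cases L with
  | nil => simp [List.permutations'Aux, hmax, breakWord, breaksAfter, openColumn]
  | cons c L =>
    simp [List.permutations'Aux, hmax, breakWord, openColumn, List.filter_map, Function.comp_def,
      breaksAfter_cons_of_gt (hx c List.mem_cons_self), ← map_breaksAfter_insertions hL hx]

lemma breakWord_eq_nil_iff : breakWord β L = [] ↔ L = [] := by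
  cases L <;> simp [breakWord]

lemma closeRow_dropFirst_breakWord_cons (a : ℕ) (L : List ℕ) :
    closeRow dropFirst (breakWord β (a :: L)) = {breakWord β L} := by
  cases L <;> rfl

lemma breaksAfter_dropLast (a : ℕ) (L : List ℕ) :
    breaksAfter β a L.dropLast = (breaksAfter β a L).dropLast := by
  induction L generalizing a with
  | nil => rfl
  | cons c L ih =>
    cases L with
    | nil => rfl
    | cons e L =>
      rw [List.dropLast_cons_cons, breaksAfter, ih]
      rfl

lemma breakWord_dropLast (L : List ℕ) :
    breakWord β L.dropLast = (breakWord β L).dropLast := by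
  match L with
  | [] | [_] => rfl
  | a :: c :: L =>
    rw [List.dropLast_cons_cons, breakWord, breaksAfter_dropLast]
    rfl

lemma closeRow_dropLast_breakWord_concat (a : ℕ) (L : List ℕ) :
    closeRow List.dropLast (breakWord β (L ++ [a])) = {breakWord β L} := by
  have hword : ∀ s : List Bool, s ≠ [] → closeRow List.dropLast s = {s.dropLast}
    | _ :: _, _ => rfl
  rw [hword _ (by simp [breakWord_eq_nil_iff]), ← breakWord_dropLast, List.dropLast_concat]

lemma insertions_reverse_perm {α : Type*} {x : α} {L : List α} (hx : x ∉ L) :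
    ((List.permutations'Aux x L).map List.reverse).Perm (List.permutations'Aux x L.reverse) := by
  refine (List.perm_ext_iff_of_nodup ?_ ?_).2 fun L' => ?_
  · exact (List.nodup_permutations'Aux_of_notMem L x hx).map List.reverse_injective
  · exact List.nodup_permutations'Aux_of_notMem _ x (by simpa using hx)
  · simp only [List.mem_map, mem_insertions_iff]
    constructor
    · rintro ⟨_, ⟨pre, post, rfl, rfl⟩, rfl⟩
      exact ⟨post.reverse, pre.reverse, by simp, by simp⟩
    · rintro ⟨pre, post, hL, rfl⟩
      exact ⟨_, ⟨post.reverse, pre.reverse, by simpa using congrArg List.reverse hL, rfl⟩, by simp⟩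

lemma map_breakWord_reverse_insertions [DecidablePred (BreakFree β)]
    (hL : BreakFree β L.reverse) (hx : ∀ d ∈ L, d < x) :
    ((((List.permutations'Aux x L).filter fun L' => BreakFree β L'.reverse).map
      fun L' => breakWord β L'.reverse : List _) : Multiset (List Bool)) =
      openColumn β (breakWord β L.reverse) := by
  have hperm := (insertions_reverse_perm fun h => (hx x h).false).filter (BreakFree β)
  rw [← map_breakWord_insertions hL (by simpa using hx), ← Multiset.coe_eq_coe.2 (hperm.map _),
    List.filter_map, List.map_map]
  rfl

end Breaks

lemma length_runs_eq_walkCount {P : List ℕ → Prop} [DecidablePred P] {β : Bool}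
    {drop : List Bool → List Bool} {word : List ℕ → List Bool}
    (hnil : ∀ L, word L = [] ↔ L = []) (hP : ∀ c L, P (c :: L) → P L)
    (heast : ∀ x L, P L → (∀ a ∈ L, a < x) →
      ((((List.permutations'Aux x L).filter P).map word : List _) : Multiset (List Bool)) =
        openColumn β (word L))
    (hnorth : ∀ c L, closeRow drop (word (c :: L)) = {word L}) {w : List Step} {x : ℕ}
    {L : List ℕ} (hL : P L) (hx : ∀ a ∈ L, a < x) :
    (runs P w x L).length = walkCount β drop w (word L) := by
  induction w generalizing x L with
  | nil => cases L <;> simp [runs, walkCount, hnil]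
  | cons s w ih =>
    cases s with
    | east =>
      rw [runs, walkCount, List.length_flatMap, ← heast x L hL hx, Multiset.map_coe,
        Multiset.sum_coe, List.map_map]
      refine congrArg List.sum (List.map_congr_left fun L' hL' => ?_)
      obtain ⟨hins, hP'⟩ := List.mem_filter.1 hL'
      exact ih (of_decide_eq_true hP') (lt_succ_of_mem_insertions hx hins)
    | north =>
      cases L with
      | nil => simp [runs, walkCount, (hnil []).2 rfl, closeRow]
      | cons c L =>
        simp [runs, walkCount, hnorth, ih (hP c L hL) fun a ha => hx a (.tail c ha)]

lemma length_runs_breakFree {β : Bool} [DecidablePred (BreakFree β)] (w : List Step) (x : ℕ) :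
    (runs (BreakFree β) w x []).length = walkCount β dropFirst w [] :=
  length_runs_eq_walkCount (word := breakWord β) (fun _ => breakWord_eq_nil_iff)
    (fun _ _ h => h.of_cons) (fun _ _ => map_breakWord_insertions)
    closeRow_dropFirst_breakWord_cons breakFree_nil (List.forall_mem_nil _)

lemma length_runs_breakFree_reverse {β : Bool} [DecidablePred (BreakFree β)] (w : List Step)
    (x : ℕ) :
    (runs (fun L => BreakFree β L.reverse) w x []).length = walkCount β List.dropLast w [] := by
  refine length_runs_eq_walkCount (word := fun L => breakWord β L.reverse) (fun L => ?_)
    (fun c L h => ?_) (fun _ _ => map_breakWord_reverse_insertions) (fun c L => ?_) breakFree_nil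
    (List.forall_mem_nil _)
  · rw [breakWord_eq_nil_iff, List.reverse_eq_nil_iff]
  · rw [List.reverse_cons] at h
    exact (List.triplewise_append.1 h).1
  · rw [List.reverse_cons, closeRow_dropLast_breakWord_concat]

lemma triplewise_iff_forall_sublist {α : Type*} {p : α → α → α → Prop} {L : List α} :
    L.Triplewise p ↔ ∀ a c e, [a, c, e].Sublist L → p a c e := by
  induction L with
  | nil => simp
  | cons d L ih =>
    simp only [List.triplewise_cons, ih, List.pairwise_iff_forall_sublist, List.sublist_cons_iff]
    grind

lemma listAvoids_three_iff {τ : Perm (Fin 3)} {L : List ℕ} :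
    ListAvoids τ L ↔ ∀ u v w, u < v → v < w →
      ¬ [![u, v, w] (τ.symm 0), ![u, v, w] (τ.symm 1), ![u, v, w] (τ.symm 2)].Sublist L := by
  constructor
  · intro h u v w huv hvw
    exact h ![u, v, w] (Fin.strictMono_iff_lt_succ.2 (Fin.forall_fin_two.2 ⟨huv, hvw⟩))
  · intro h c hc
    have hcons : c = ![c 0, c 1, c 2] := (FinVec.etaExpand_eq c).symm
    rw [hcons]
    exact h _ _ _ (hc (by decide)) (hc (by decide))

lemma breakFree_true_iff_listAvoids {L : List ℕ} : BreakFree true L ↔ ListAvoids p123 L := by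
  rw [BreakFree, triplewise_iff_forall_sublist, listAvoids_three_iff]
  exact ⟨fun h u v w huv hvw hL => h u v w hL huv (huv.trans hvw) hvw,
    fun h a c e hL hac _ hce => h a c e hac hce hL⟩

lemma breakFree_false_iff_listAvoids {L : List ℕ} : BreakFree false L ↔ ListAvoids p213 L := by
  rw [BreakFree, triplewise_iff_forall_sublist, listAvoids_three_iff]
  exact ⟨fun h u v w huv hvw hL => h v u w hL huv hvw (huv.trans hvw),
    fun h a c e hL hca hae _ => h c a e hca hae hL⟩

lemma breakFree_true_reverse_iff_listAvoids {L : List ℕ} :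
    BreakFree true L.reverse ↔ ListAvoids p321 L := by
  rw [BreakFree, List.triplewise_reverse, triplewise_iff_forall_sublist, listAvoids_three_iff]
  exact ⟨fun h u v w huv hvw hL => h w v u hL huv (huv.trans hvw) hvw,
    fun h a c e hL hec _ hca => h e c a hec hca hL⟩

section Cardinalities

variable {n : ℕ} {b : Fin n → ℕ}

lemma SYcard_p123 (hmono : Monotone b) (hbn : ∀ y, b y ≤ n) :
    SYcard b p123 = walkCount true dropFirst (boundaryWord 0 (List.ofFn b)) [] := by
  classical
  rw [SYcard_eq_length_runs hmono hbn fun L => breakFree_true_iff_listAvoids,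
    length_runs_breakFree]

lemma SYcard_p213 (hmono : Monotone b) (hbn : ∀ y, b y ≤ n) :
    SYcard b p213 = walkCount false dropFirst (boundaryWord 0 (List.ofFn b)) [] := by
  classical
  rw [SYcard_eq_length_runs hmono hbn fun L => breakFree_false_iff_listAvoids,
    length_runs_breakFree]

lemma SYcard_p321 (hmono : Monotone b) (hbn : ∀ y, b y ≤ n) :
    SYcard b p321 = walkCount true List.dropLast (boundaryWord 0 (List.ofFn b)) [] := by
  classical
  rw [SYcard_eq_length_runs hmono hbn fun L => breakFree_true_reverse_iff_listAvoids,
    length_runs_breakFree_reverse]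

end Cardinalities

/-! ### From 213 to 123 -/

/-- `φ` does not decrease when breaks are removed from a word, that is, when letters `true` are
replaced by `false`. -/
def FavoursFewerBreaks (φ : List Bool → ℕ) : Prop :=
  ∀ ⦃t u⦄, List.Forall₂ (· ≤ ·) t u → φ u ≤ φ t

lemma FavoursFewerBreaks.comp_cons {φ : List Bool → ℕ} (hφ : FavoursFewerBreaks φ) (a : Bool) :
    FavoursFewerBreaks fun t => φ (a :: t) :=
  fun _ _ h => hφ (.cons le_rfl h)

lemma sum_insertBreak_cons_false (β : Bool) (φ : List Bool → ℕ) (t : List Bool) :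
    ((insertBreak β (false :: t)).map φ).sum =
      φ (β :: (!β) :: t) + ((insertBreak β t).map fun u => φ (false :: u)).sum := by
  simp [insertBreak]

lemma sum_openColumn_cons (β : Bool) (φ : List Bool → ℕ) (a : Bool) (t : List Bool) :
    ((openColumn β (a :: t)).map φ).sum =
      φ (false :: (!β) :: t) + ((insertBreak β t).map fun u => φ (false :: u)).sum := by
  simp [openColumn]

lemma FavoursFewerBreaks.sum_insertBreak_false {φ : List Bool → ℕ} (hφ : FavoursFewerBreaks φ) :
    FavoursFewerBreaks fun t => ((insertBreak false t).map φ).sum := by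
  intro t u h
  induction h generalizing φ with
  | nil => exact le_rfl
  | @cons a b t u hab h ih =>
    have hφt : φ (false :: true :: u) ≤ φ (false :: true :: t) :=
      hφ (.cons le_rfl (.cons le_rfl h))
    have hrest := ih (hφ.comp_cons false)
    match a, b with
    | true, true => simpa [insertBreak] using hφt
    | false, true =>
      simp only [sum_insertBreak_cons_false]
      simpa [insertBreak] using hφt.trans (Nat.le_add_right _ _)
    | false, false =>
      simp only [sum_insertBreak_cons_false]
      exact Nat.add_le_add hφt hrest

lemma favoursFewerBreaks_walkCount (w : List Step) :
    FavoursFewerBreaks (walkCount false dropFirst w) := by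
  induction w with
  | nil =>
    intro t u h
    cases h <;> simp [walkCount]
  | cons a w ih =>
    intro t u h
    match a, h with
    | _, .nil => exact le_rfl
    | .east, .cons _ h =>
      simp only [walkCount, sum_openColumn_cons]
      exact Nat.add_le_add (ih (.cons le_rfl (.cons le_rfl h)))
        ((ih.comp_cons false).sum_insertBreak_false h)
    | .north, .cons _ .nil => exact le_rfl
    | .north, .cons _ (.cons _ h) =>
      simpa [walkCount, closeRow, dropFirst] using ih (.cons le_rfl h)

lemma FavoursFewerBreaks.add_sum_insertBreak_le {φ : List Bool → ℕ} (hφ : FavoursFewerBreaks φ)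
    (t : List Bool) :
    φ (true :: t) + ((insertBreak false t).map φ).sum ≤
      φ (false :: t) + ((insertBreak true t).map φ).sum := by
  -- The summands match up until the first break of `t`, where the left side has one break more.
  induction t generalizing φ with
  | nil => simp [insertBreak, add_comm]
  | cons a t ih =>
    cases a with
    | true =>
      have h : φ (true :: true :: t) ≤ φ (true :: false :: t) :=
        hφ (.cons le_rfl (.cons (Bool.false_le _) (List.forall₂_refl _)))
      simpa [insertBreak, add_comm] using h
    | false =>
      have hrest := ih (hφ.comp_cons false)
      simp only [sum_insertBreak_cons_false, Bool.not_true, Bool.not_false]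
      omega

lemma walkCount_false_le_true (w : List Step) (s : List Bool) :
    walkCount false dropFirst w s ≤ walkCount true dropFirst w s := by
  induction w generalizing s with
  | nil => exact le_rfl
  | cons a w ih =>
    match a, s with
    | .east, [] => simpa [walkCount, openColumn] using ih _
    | .east, _ :: t =>
      simp only [walkCount]
      refine le_trans ?_ (Multiset.sum_map_le_sum_map _ _ fun s _ => ih s)
      simp only [sum_openColumn_cons]
      exact ((favoursFewerBreaks_walkCount w).comp_cons false).add_sum_insertBreak_le t
    | .north, [] => exact le_rfl
    | .north, _ :: _ => simpa [walkCount, closeRow] using ih _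

/-! ### From 123 to 321 -/

/-- The peaks of all lattice words with `a` up-steps and `m` down-steps: each word has one letter
per step, which is `true` if the step goes down directly after an up-step. For the first step, `p`
tells whether it is preceded by an up-step. -/
def peakWords (p : Bool) : ℕ → ℕ → Multiset (List Bool)
  | 0, 0 => {[]}
  | a + 1, 0 => (peakWords true a 0).map (false :: ·)
  | 0, m + 1 => (peakWords false 0 m).map (p :: ·)
  | a + 1, m + 1 =>
    (peakWords true a (m + 1)).map (false :: ·) + (peakWords false (a + 1) m).map (p :: ·)

lemma peakWords_zero_right (p : Bool) (a : ℕ) : peakWords p a 0 = {List.replicate a false} := by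
  induction a generalizing p with
  | zero => simp [peakWords]
  | succ a ih => simp [peakWords, ih, List.replicate_succ]

lemma bind_insertBreak_map_false (S : Multiset (List Bool)) :
    (S.map (false :: ·)).bind (insertBreak true) =
      (S.map (false :: ·)).map (true :: ·) + (S.bind (insertBreak true)).map (false :: ·) := by
  simp [Multiset.bind_map, insertBreak, Multiset.map_bind, Multiset.bind_cons]

lemma bind_insertBreak_map_true (S : Multiset (List Bool)) :
    (S.map (true :: ·)).bind (insertBreak true) = (S.map (false :: ·)).map (true :: ·) := by
  simp [Multiset.bind_map, insertBreak, Multiset.bind_singleton]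

lemma bind_openColumn_map_false (S : Multiset (List Bool)) :
    (S.map (false :: ·)).bind (openColumn true) =
      (S.map (false :: ·)).map (false :: ·) + (S.bind (insertBreak true)).map (false :: ·) := by
  simp [Multiset.bind_map, openColumn, Multiset.map_bind, Multiset.bind_cons]

lemma peakWords_true_bind_insertBreak (a m : ℕ) :
    (peakWords true a m).bind (insertBreak true) = peakWords true a (m + 1) := by
  induction a generalizing m with
  | zero =>
    cases m with
    | zero => simp [peakWords, insertBreak]
    | succ m => simp only [peakWords, bind_insertBreak_map_true]
  | succ a ih =>
    cases m with
    | zero => simp only [peakWords, bind_insertBreak_map_false, ih, add_comm]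
    | succ m =>
      simp only [peakWords, Multiset.add_bind, bind_insertBreak_map_false,
        bind_insertBreak_map_true, ih, Multiset.map_add]
      abel

lemma peakWords_false_bind_insertBreak (a m : ℕ) :
    (peakWords false a m).bind (insertBreak true) + {List.replicate (a + m + 1) false} =
      peakWords true a (m + 1) + peakWords false (a + 1) m := by
  induction m with
  | zero =>
    rw [peakWords_zero_right, ← peakWords_zero_right true, peakWords_true_bind_insertBreak,
      peakWords_zero_right, add_zero]
  | succ m ih =>
    have hshift := congrArg (Multiset.map (false :: ·)) ih
    simp only [Multiset.map_add, Multiset.map_singleton, ← List.replicate_succ] at hshift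
    rw [show a + (m + 1) + 1 = a + m + 1 + 1 by ring]
    cases a with
    | zero =>
      simp only [peakWords, bind_insertBreak_map_false] at hshift ⊢
      rw [add_assoc, hshift]
    | succ a =>
      simp only [peakWords, Multiset.add_bind, bind_insertBreak_map_false,
        peakWords_true_bind_insertBreak, Multiset.map_add] at hshift ⊢
      simp only [add_assoc] at hshift ⊢
      rw [hshift]
      abel

/-- The word without breaks occurs in both multisets on the right, but only once on the left. It is
added there, since subtraction of multisets is truncated. -/
lemma peakWords_bind_openColumn (a m : ℕ) :
    (peakWords false a m).bind (openColumn true) + peakWords false (a + m + 1) 0 =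
      peakWords false (a + 1) m + peakWords false a (m + 1) := by
  rw [peakWords_zero_right]
  cases m with
  | zero =>
    cases a with
    | zero => simp [peakWords, openColumn]
    | succ a =>
      rw [add_zero, ← peakWords_zero_right false]
      simp only [peakWords, bind_openColumn_map_false, peakWords_true_bind_insertBreak]
      abel
  | succ m =>
    have hshift := congrArg (Multiset.map (false :: ·)) (peakWords_false_bind_insertBreak a m)
    simp only [Multiset.map_add, Multiset.map_singleton, ← List.replicate_succ] at hshift
    rw [show a + (m + 1) + 1 = a + m + 1 + 1 by ring]
    cases a with
    | zero =>
      simp only [peakWords, bind_openColumn_map_false] at hshift ⊢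
      rw [add_assoc, hshift]
      abel
    | succ a =>
      simp only [peakWords, Multiset.add_bind, bind_openColumn_map_false,
        peakWords_true_bind_insertBreak, Multiset.map_add] at hshift ⊢
      simp only [add_assoc] at hshift ⊢
      rw [hshift]
      abel

/-- The peaks of all lattice words obtained by leaving out one of `a` up-steps or one of `m`
down-steps. -/
def shorterPeakWords (p : Bool) : ℕ → ℕ → Multiset (List Bool)
  | 0, 0 => 0
  | a + 1, 0 => peakWords p a 0
  | 0, m + 1 => peakWords p 0 m
  | a + 1, m + 1 => peakWords p a (m + 1) + peakWords p (a + 1) m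

lemma peakWords_map_modifyHead (p : Bool) (a m : ℕ) :
    (peakWords p a m).map (List.modifyHead fun _ => false) = peakWords false a m := by
  match a, m with
  | 0, 0 | a + 1, 0 | 0, m + 1 | a + 1, m + 1 => simp [peakWords]

lemma bind_closeRow_dropFirst_map_cons (p : Bool) (S : Multiset (List Bool)) :
    (S.map (p :: ·)).bind (closeRow dropFirst) = S.map (List.modifyHead fun _ => false) := by
  simp [Multiset.bind_map, closeRow, Multiset.bind_singleton, dropFirst]

lemma peakWords_bind_closeRow_dropFirst (a m : ℕ) :
    (peakWords false a m).bind (closeRow dropFirst) = shorterPeakWords false a m := by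
  match a, m with
  | 0, 0 => simp [peakWords, closeRow, shorterPeakWords]
  | a + 1, 0 | 0, m + 1 | a + 1, m + 1 =>
    simp only [peakWords, Multiset.add_bind, bind_closeRow_dropFirst_map_cons,
      peakWords_map_modifyHead, shorterPeakWords]

lemma nil_notMem_peakWords {p : Bool} {a m : ℕ} (h : 0 < a + m) : [] ∉ peakWords p a m := by
  match a, m with
  | a + 1, 0 | 0, m + 1 | a + 1, m + 1 => simp [peakWords]

lemma bind_closeRow_dropLast_map_cons (p : Bool) {S : Multiset (List Bool)} (hS : [] ∉ S) :
    (S.map (p :: ·)).bind (closeRow List.dropLast) =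
      (S.bind (closeRow List.dropLast)).map (p :: ·) := by
  rw [Multiset.bind_map, Multiset.map_bind]
  refine Multiset.bind_congr fun t ht => ?_
  cases t with
  | nil => exact absurd ht hS
  | cons c t => rfl

lemma peakWords_bind_closeRow_dropLast (p : Bool) (a m : ℕ) :
    (peakWords p a m).bind (closeRow List.dropLast) = shorterPeakWords p a m := by
  fun_induction peakWords p a m with
  | case1 => simp [closeRow, shorterPeakWords]
  | case2 p a ih =>
    cases a with
    | zero => simp [peakWords, closeRow, shorterPeakWords]
    | succ a =>
      rw [bind_closeRow_dropLast_map_cons _ (nil_notMem_peakWords (by simp)), ih]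
      simp only [shorterPeakWords, peakWords]
  | case3 p m ih =>
    cases m with
    | zero => simp [peakWords, closeRow, shorterPeakWords]
    | succ m =>
      rw [bind_closeRow_dropLast_map_cons _ (nil_notMem_peakWords (by simp)), ih]
      simp only [shorterPeakWords, peakWords]
  | case4 p a m ih₁ ih₂ =>
    rw [Multiset.add_bind, bind_closeRow_dropLast_map_cons _ (nil_notMem_peakWords (by simp)),
      bind_closeRow_dropLast_map_cons _ (nil_notMem_peakWords (by simp)), ih₁, ih₂]
    cases a <;> cases m <;>
      simp only [shorterPeakWords, peakWords, Multiset.map_add] <;> abel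

lemma sum_walkCount_east (β : Bool) (drop : List Bool → List Bool) (w : List Step)
    (S : Multiset (List Bool)) :
    (S.map (walkCount β drop (.east :: w))).sum =
      ((S.bind (openColumn β)).map (walkCount β drop w)).sum := by
  simp [Multiset.map_bind, Multiset.sum_bind, walkCount]

lemma sum_walkCount_north (β : Bool) (drop : List Bool → List Bool) (w : List Step)
    (S : Multiset (List Bool)) :
    (S.map (walkCount β drop (.north :: w))).sum =
      ((S.bind (closeRow drop)).map (walkCount β drop w)).sum := by
  simp [Multiset.map_bind, Multiset.sum_bind, walkCount]

lemma sum_walkCount_peakWords (w : List Step) (a m : ℕ) :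
    ((peakWords false a m).map (walkCount true dropFirst w)).sum =
      ((peakWords false a m).map (walkCount true List.dropLast w)).sum := by
  induction w generalizing a m with
  | nil => rfl
  | cons s w ih =>
    cases s with
    | east =>
      rw [sum_walkCount_east, sum_walkCount_east,
        ← Nat.add_right_cancel_iff
          (n := ((peakWords false (a + m + 1) 0).map (walkCount true dropFirst w)).sum)]
      nth_rewrite 2 [ih]
      simp only [← Multiset.sum_add, ← Multiset.map_add, peakWords_bind_openColumn]
      simp only [Multiset.sum_add, Multiset.map_add, ih]
    | north =>
      rw [sum_walkCount_north, sum_walkCount_north, peakWords_bind_closeRow_dropFirst,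
        peakWords_bind_closeRow_dropLast]
      match a, m with
      | 0, 0 => rfl
      | a + 1, 0 | 0, m + 1 | a + 1, m + 1 =>
        simp only [shorterPeakWords, Multiset.map_add, Multiset.sum_add, ih]

lemma walkCount_dropFirst_eq_dropLast (w : List Step) :
    walkCount true dropFirst w [] = walkCount true List.dropLast w [] := by
  simpa [peakWords] using sum_walkCount_peakWords w 0 0

/-! ### From 321 to 312 through left-to-right maxima -/

section LRMax

variable {α β : Type*} [LinearOrder α]

/-- The positions and values of the left-to-right maxima of `f`. -/
def lrMax [Preorder β] (f : α → β) : Set (α × β) :=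
  {d | f d.1 = d.2 ∧ ∀ j < d.1, f j < d.2}

lemma lrMax_subset_lrMax_comp_swap [Preorder β] {f : α → β} {c i j : α} (hci : c < i)
    (hcj : c < j) (hi : f i < f c) (hj : f j < f c) : lrMax f ⊆ lrMax (f ∘ swap i j) := by
  rintro ⟨k, v⟩ ⟨rfl : f k = v, hmax : ∀ j < k, f j < f k⟩
  have hki : k ≠ i := by
    rintro rfl
    exact lt_asymm hi (hmax c hci)
  have hkj : k ≠ j := by
    rintro rfl
    exact lt_asymm hj (hmax c hcj)
  refine ⟨congrArg f (swap_apply_of_ne_of_ne hki hkj), fun l hl => ?_⟩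
  rw [Function.comp_apply]
  obtain rfl | hli := eq_or_ne l i
  · rw [swap_apply_left]
    exact hj.trans (hmax c (hci.trans hl))
  obtain rfl | hlj := eq_or_ne l j
  · rw [swap_apply_right]
    exact hi.trans (hmax c (hcj.trans hl))
  rw [swap_apply_of_ne_of_ne hli hlj]
  exact hmax l hl

lemma lrMax_comp_swap [Preorder β] {f : α → β} {c i j : α} (hci : c < i) (hcj : c < j)
    (hi : f i < f c) (hj : f j < f c) : lrMax (f ∘ swap i j) = lrMax f := by
  refine Set.Subset.antisymm ?_ (lrMax_subset_lrMax_comp_swap hci hcj hi hj)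
  have hswap : (f ∘ swap i j) ∘ swap i j = f := by
    ext k
    exact congrArg f ((swap i j).symm_apply_apply k)
  conv_rhs => rw [← hswap]
  refine lrMax_subset_lrMax_comp_swap hci hcj ?_ ?_ <;>
    simpa [swap_apply_of_ne_of_ne hci.ne hcj.ne]

lemma not_lt_of_lrMax_eq [LinearOrder β] {f g : α → β} (hf : Function.Injective f)
    (hg : Function.Bijective g) (hdesc : ∀ i j k, i < j → j < k → g j < g i → ¬ g k < g j)
    (h : lrMax f = lrMax g) {i : α} (ih : ∀ j < i, f j = g j) : ¬ f i < g i := by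
  intro hlt
  have hmax : ¬ ∀ j < i, g j < g i := fun hmax =>
    have hi : (i, g i) ∈ lrMax f := h ▸ ⟨rfl, hmax⟩
    hlt.ne hi.1
  push Not at hmax
  obtain ⟨c, hci, hle⟩ := hmax
  obtain ⟨k, hk⟩ := hg.2 (f i)
  have hik : i < k := by
    rcases lt_trichotomy i k with hik | rfl | hki
    · exact hik
    · exact absurd hk hlt.ne'
    · exact absurd (hf ((ih k hki).trans hk)) hki.ne
  exact hdesc c i k hci hik (lt_of_le_of_ne hle (hg.1.ne hci.ne')) (hk ▸ hlt)

lemma eq_of_lrMax_eq [WellFoundedLT α] [LinearOrder β] {f g : α → β} (hf : Function.Bijective f)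
    (hg : Function.Bijective g) (hfdesc : ∀ i j k, i < j → j < k → f j < f i → ¬ f k < f j)
    (hgdesc : ∀ i j k, i < j → j < k → g j < g i → ¬ g k < g j) (h : lrMax f = lrMax g) :
    f = g := by
  ext i
  induction i using WellFoundedLT.induction with
  | _ i ih =>
    exact le_antisymm
      (not_lt.1 (not_lt_of_lrMax_eq hg.1 hf hfdesc h.symm fun j hj => (ih j hj).symm))
      (not_lt.1 (not_lt_of_lrMax_eq hf.1 hg hgdesc h ih))

end LRMax

section Transversals

variable {n : ℕ} {b : Fin n → ℕ} {π : Perm (Fin n)} {i j k : Fin n}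

lemma IsTransversal.mul_swap (hπ : IsTransversal b π) (hij : i ≤ j)
    (hji : (j : ℕ) + 1 ≤ b (π i)) : IsTransversal b (π * swap i j) := by
  intro l
  rw [Perm.mul_apply]
  obtain rfl | hli := eq_or_ne l i
  · rw [swap_apply_left]
    exact (Nat.succ_le_succ hij).trans (hπ j)
  obtain rfl | hlj := eq_or_ne l j
  · rwa [swap_apply_right]
  rw [swap_apply_of_ne_of_ne hli hlj]
  exact hπ l

lemma IsTransversal.exists_lrMax_eq_not_containsIn_p312 (hπ : IsTransversal b π) :
    ∃ σ : Perm (Fin n), (IsTransversal b σ ∧ ¬ ContainsIn b σ p312) ∧ lrMax σ = lrMax π := by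
  -- The lexicographically largest transversal with these left-to-right maxima works: exchanging
  -- the two lower dots of an occurrence of 312 would give a larger one.
  obtain ⟨σ, ⟨hσ, hσπ⟩, hlargest⟩ := Set.exists_max_image
    {σ : Perm (Fin n) | IsTransversal b σ ∧ lrMax σ = lrMax π}
    (fun σ => toLex (σ : Fin n → Fin n)) (Set.toFinite _) ⟨π, hπ, rfl⟩
  refine ⟨σ, ⟨hσ, fun ⟨f, hf, hpattern, hinside⟩ => ?_⟩, hσπ⟩
  have hf₀₁ : f 0 < f 1 := hf (by decide)
  have hf₁₂ : f 1 < f 2 := hf (by decide)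
  have hσ₁₀ : σ (f 1) < σ (f 0) := (hpattern 1 0).1 (by decide)
  have hσ₂₀ : σ (f 2) < σ (f 0) := (hpattern 2 0).1 (by decide)
  have hσ₁₂ : σ (f 1) < σ (f 2) := (hpattern 1 2).1 (by decide)
  have hlrMax : lrMax (σ * swap (f 1) (f 2)) = lrMax π :=
    (lrMax_comp_swap hf₀₁ (hf₀₁.trans hf₁₂) hσ₁₀ hσ₂₀).trans hσπ
  refine (hlargest _ ⟨hσ.mul_swap hf₁₂.le (hinside 2 1), hlrMax⟩).not_gt
    ⟨f 1, fun k hk => ?_, ?_⟩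
  · simp [swap_apply_of_ne_of_ne hk.ne (hk.trans hf₁₂).ne]
  · simpa using hσ₁₂

lemma IsTransversal.containsIn_p321 (hmono : Monotone b) (hπ : IsTransversal b π) (hij : i < j)
    (hjk : j < k) (hji : π j < π i) (hkj : π k < π j) : ContainsIn b π p321 := by
  have hcolumns : StrictMono ![i, j, k] :=
    Fin.strictMono_iff_lt_succ.2 (Fin.forall_fin_two.2 ⟨hij, hjk⟩)
  have hrows : StrictAnti (π ∘ ![i, j, k]) :=
    Fin.strictAnti_iff_succ_lt.2 (Fin.forall_fin_two.2 ⟨hji, hkj⟩)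
  have hreverse : StrictAnti p321 := by
    unfold StrictAnti
    decide
  refine ⟨![i, j, k], hcolumns, fun s t => ?_, fun s t => ?_⟩
  · exact hreverse.lt_iff_gt.trans hrows.lt_iff_gt.symm
  -- The last dot of the occurrence is both its rightmost and its lowest.
  · calc (![i, j, k] s : ℕ) + 1 ≤ k + 1 :=
          Nat.succ_le_succ (hcolumns.monotone (Fin.le_last s))
      _ ≤ b (π k) := hπ k
      _ ≤ b (π (![i, j, k] t)) := hmono (hrows.antitone (Fin.le_last t))

lemma SYcard_p321_le_p312 (hmono : Monotone b) : SYcard b p321 ≤ SYcard b p312 := by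
  choose f hf hlrMax using fun π : {π : Perm (Fin n) // IsTransversal b π ∧
    ¬ ContainsIn b π p321} => π.2.1.exists_lrMax_eq_not_containsIn_p312
  refine Nat.card_le_card_of_injective (fun π => ⟨f π, hf π⟩) fun σ τ h => ?_
  have hdesc (π : {π : Perm (Fin n) // IsTransversal b π ∧ ¬ ContainsIn b π p321}) (i j k)
      (hij : i < j) (hjk : j < k) (hji : π.1 j < π.1 i) : ¬ π.1 k < π.1 j := fun hkj =>
    π.2.2 (π.2.1.containsIn_p321 hmono hij hjk hji hkj)
  have hστ : lrMax σ.1 = lrMax τ.1 := by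
    rw [← hlrMax, ← hlrMax, Subtype.mk.inj h]
  exact Subtype.ext (DFunLike.coe_injective
    (eq_of_lrMax_eq σ.1.bijective τ.1.bijective (hdesc σ) (hdesc τ) hστ))

end Transversals

theorem stmt0 (n : ℕ) (b : Fin n → ℕ) (hmono : Monotone b)
    (hb : ∀ y : Fin n, (y : ℕ) + 1 ≤ b y ∧ b y ≤ n) :
    SYcard b p213 ≤ SYcard b p123 ∧ SYcard b p123 ≤ SYcard b p312 := by
  have hbn : ∀ y, b y ≤ n := fun y => (hb y).2
  constructor
  · rw [SYcard_p213 hmono hbn, SYcard_p123 hmono hbn]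
    exact walkCount_false_le_true _ _
  · calc SYcard b p123 = SYcard b p321 := by
          rw [SYcard_p123 hmono hbn, SYcard_p321 hmono hbn, walkCount_dropFirst_eq_dropLast]
      _ ≤ SYcard b p312 := SYcard_p321_le_p312 hmono
end

section
/- For every Young diagram Y: |S_Y(213)| < |S_Y(123)| if and only if Y has an i-critical point with i ≥ 2 (i.e. there exists y < n with b(y+1) > b(y) and b(y) − y ≥ 2); and |S_Y(123)| < |S_Y(312)| if and only if Y has an i-critical point with i ≥ 3 (i.e. there exists y < n with b(y+1) > b(y) and b(y) − y ≥ 3). -/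
/-!
*213 against 123.* Reflection in the antidiagonal preserves 123, the index of critical points and
properness, and turns 213 into 132, so it suffices to compare 132 with 123. Both are counted row by
row from the bottom. Placing the lowest dot in column `k` of a row of length `m` forces the columns
of that row to the right of `k` to be increasing (132) or decreasing (123), so the state of the
recursion is a set `D` of adjacent columns whose order is forced. The dot may be placed at the first
column of each maximal run of `D` for 132, and at the last column for 123; otherwise the recursions
agree. Passing from the first to the last column of a run leaves fewer forced adjacencies, and the
counts decrease in `D`; hence there are at most as many 132-avoiders as 123-avoiders. The inequality
is strict as soon as a run stops before the end of its row, which is what a critical point of index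
at least 2 makes possible; otherwise `D` is always a final segment of the row and the counts agree.

*123 against 312.* First, 123 and 321 have equally many avoiders in every diagram: both row-by-row
recursions are evaluations of one linear functional on polynomials, where the state of the 123
recursion enters through the continuant of the path with edge set `D`, and that of the 321 recursion
through a Chebyshev polynomial times a power of `X`.

Then 321 is compared with 312 column by column from the left, keeping a lower bound for the first
entry. If the first two entries increase, deleting the first dot gives the same recursion for both
patterns. If they decrease, a 321-avoider has its lowest dot in column `1`, and deleting it gives a
smaller instance. For 312 let `T` be the set of values below the first entry that lie in columns of
the lowest row. The cyclic shift of `T` maps the transversals with lowest dot in column `1` that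
avoid 312 outside that column injectively to 312-avoiders starting with a descent; hence there are
at least as many 312-avoiders as 321-avoiders. Without critical points of index at least 3 the map
is onto; a critical point of index at least 3 in the lowest row leaves an explicit permutation
outside the image, and one in a higher row is reduced to this case.
-/

open Equiv

namespace ShapeWilf

section Counting

theorem ncard_setOf_eq_sum_fiberwise {α β : Type*} [Finite α] [Fintype β] (P : α → Prop)
    (g : α → β) : {a | P a}.ncard = ∑ b, {a | P a ∧ g a = b}.ncard := by
  classical
  have := Fintype.ofFinite α
  simp only [Set.ncard_eq_toFinset_card', Set.toFinset_ofPred, ← Finset.filter_filter]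
  exact Finset.card_eq_sum_card_fiberwise fun _ _ => Finset.mem_coe.2 (Finset.mem_univ _)

theorem ncard_setOf_and_add_ncard_setOf_and_not {α : Type*} [Finite α] (P Q : α → Prop) :
    {a | P a ∧ Q a}.ncard + {a | P a ∧ ¬ Q a}.ncard = {a | P a}.ncard :=
  Set.ncard_inter_add_ncard_sdiff_eq_ncard {a | P a} {a | Q a} (Set.toFinite _)

theorem ncard_setOf_of_isEmpty_index {P : Perm (Fin 0) → Prop} (h : ∀ π, P π) :
    {π | P π}.ncard = 1 := by
  rw [(Set.eq_univ_iff_forall (s := {π | P π})).2 h, Set.ncard_univ, Nat.card_unique]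

theorem sum_fin_eq_sum_range_filter {M : Type*} [AddCommMonoid M] {n m : ℕ} (hm : m ≤ n)
    (c : ℕ → Prop) [DecidablePred c] {f : Fin n → M} {g : ℕ → M}
    (hfg : ∀ k : Fin n, (k : ℕ) < m → c k → f k = g k)
    (hf : ∀ k : Fin n, ¬ ((k : ℕ) < m ∧ c k) → f k = 0) :
    ∑ k, f k = ∑ k ∈ Finset.range m with c k, g k := by
  have hterm : ∀ k : Fin n, f k = if (k : ℕ) < m ∧ c k then g k else 0 := fun k => by
    split_ifs with h
    exacts [hfg k h.1 h.2, hf k h]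
  rw [Finset.sum_congr rfl fun k _ => hterm k,
    Fin.sum_univ_eq_sum_range (fun k : ℕ => if k < m ∧ c k then g k else 0), ← Finset.sum_filter]
  refine Finset.sum_congr (Finset.ext fun k => ?_) fun _ _ => rfl
  simp only [Finset.mem_filter, Finset.mem_range]
  grind

end Counting

section InsertDot

variable {n : ℕ}

/-- The permutation matrix of `σ` with a new dot inserted in a new column `k` and a new row `y`:
the permutation that sends `k` to `y` and is order-isomorphic to `σ` elsewhere. -/
def insertDot (k y : Fin (n + 1)) (σ : Perm (Fin n)) : Perm (Fin (n + 1)) :=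
  (finSuccEquiv' k).trans (σ.optionCongr.trans (finSuccEquiv' y).symm)

@[simp] theorem insertDot_self (k y : Fin (n + 1)) (σ : Perm (Fin n)) :
    insertDot k y σ k = y := by
  simp [insertDot]

@[simp] theorem insertDot_succAbove (k y : Fin (n + 1)) (σ : Perm (Fin n)) (i : Fin n) :
    insertDot k y σ (k.succAbove i) = y.succAbove (σ i) := by
  simp [insertDot]

@[simp] theorem insertDot_zero_succ (y : Fin (n + 1)) (σ : Perm (Fin n)) (i : Fin n) :
    insertDot 0 y σ i.succ = y.succAbove (σ i) := by
  rw [← Fin.succAbove_zero, insertDot_succAbove]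

theorem insertDot_injective (k y : Fin (n + 1)) : Function.Injective (insertDot k y) :=
  fun σ τ h => Equiv.ext fun i => Fin.succAbove_right_injective (p := y) <| by
    simpa only [insertDot_succAbove] using congrArg (· (k.succAbove i)) h

theorem exists_insertDot_eq {k y : Fin (n + 1)} {π : Perm (Fin (n + 1))} (h : π k = y) :
    ∃ σ, insertDot k y σ = π := by
  subst h
  let e : Perm (Option (Fin n)) :=
    (finSuccEquiv' k).symm.trans (π.trans (finSuccEquiv' (π k)))
  have he : (Equiv.removeNone e).optionCongr = e := by
    rw [map_equiv_removeNone, show e none = none by simp [e], swap_self]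
    rfl
  exact ⟨Equiv.removeNone e, Equiv.ext fun i => by simp [insertDot, he, e]⟩

theorem ncard_setOf_apply_eq (k y : Fin (n + 1)) (P : Perm (Fin (n + 1)) → Prop) :
    {π | P π ∧ π k = y}.ncard = {σ | P (insertDot k y σ)}.ncard := by
  rw [← Set.ncard_image_of_injective _ (insertDot_injective k y)]
  congr 1
  ext π
  constructor
  · rintro ⟨hπ, hk⟩
    obtain ⟨σ, rfl⟩ := exists_insertDot_eq hk
    exact ⟨σ, hπ, rfl⟩
  · rintro ⟨σ, hσ, rfl⟩
    exact ⟨hσ, insertDot_self k y σ⟩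

theorem ncard_eq_sum_insertDot_row_zero (P : Perm (Fin (n + 1)) → Prop) :
    {π | P π}.ncard = ∑ k, {σ | P (insertDot k 0 σ)}.ncard := by
  rw [ncard_setOf_eq_sum_fiberwise P fun π => π.symm 0]
  refine Finset.sum_congr rfl fun k _ => ?_
  rw [← ncard_setOf_apply_eq]
  simp only [Equiv.symm_apply_eq, eq_comm (a := (0 : Fin (n + 1)))]

theorem ncard_eq_sum_insertDot_col_zero (P : Perm (Fin (n + 1)) → Prop) :
    {π | P π}.ncard = ∑ y, {σ | P (insertDot 0 y σ)}.ncard := by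
  rw [ncard_setOf_eq_sum_fiberwise P fun π => π 0]
  exact Finset.sum_congr rfl fun y _ => ncard_setOf_apply_eq 0 y P

end InsertDot

section Diagrams

variable {n : ℕ} {B : ℕ → ℕ}

/-- `π` is a transversal of the diagram whose row at height `y` consists of the columns `< B y`.
Diagrams are encoded by row-length functions on all of `ℕ`, so that they can be reindexed freely;
for a permutation of `Fin n` only the rows `< n` matter. -/
def FitsIn (B : ℕ → ℕ) (π : Perm (Fin n)) : Prop := ∀ i : Fin n, (i : ℕ) < B (π i)

/-- The diagram left after deleting row `y` and one column that meets every remaining row. -/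
def deleteRow (y : ℕ) (B : ℕ → ℕ) : ℕ → ℕ := fun i => B (if i < y then i else i + 1) - 1

theorem val_succAbove (k : Fin (n + 1)) (i : Fin n) :
    (k.succAbove i : ℕ) = if (i : ℕ) < k then (i : ℕ) else i + 1 := by
  simp only [Fin.succAbove, Fin.lt_def, Fin.val_castSucc, apply_ite Fin.val, Fin.val_succ]

theorem lt_succAbove_iff_val_le {k : Fin (n + 1)} {c : Fin n} :
    k < k.succAbove c ↔ (k : ℕ) ≤ c := Fin.lt_succAbove_iff_le_castSucc k c

theorem succAbove_lt_iff_val_lt {k : Fin (n + 1)} {c : Fin n} :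
    k.succAbove c < k ↔ (c : ℕ) < k := Fin.succAbove_lt_iff_castSucc_lt k c

@[simp] theorem deleteRow_zero_apply (B : ℕ → ℕ) (i : ℕ) : deleteRow 0 B i = B (i + 1) - 1 := rfl

theorem deleteRow_monotone (hB : Monotone B) (y : ℕ) : Monotone (deleteRow y B) :=
  fun i j hij => Nat.sub_le_sub_right (hB (by grind)) 1

theorem val_succAbove_lt_iff {k : Fin (n + 1)} {m : ℕ} (h : (k : ℕ) = 0 ∨ (k : ℕ) < m)
    (c : Fin n) : (k.succAbove c : ℕ) < m ↔ (c : ℕ) < m - 1 := by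
  rw [val_succAbove]
  split_ifs <;> omega

theorem val_succAbove_lt_row_iff {k y : Fin (n + 1)} {d : Fin n}
    (h : (k : ℕ) = 0 ∨ (k : ℕ) < B (y.succAbove d)) (c : Fin n) :
    (k.succAbove c : ℕ) < B (y.succAbove d) ↔ (c : ℕ) < deleteRow y B d := by
  rw [val_succAbove_lt_iff h, deleteRow, val_succAbove]

theorem fitsIn_insertDot {k y : Fin (n + 1)} {σ : Perm (Fin n)}
    (h : ∀ d : Fin n, (k : ℕ) = 0 ∨ (k : ℕ) < B (y.succAbove d)) :
    FitsIn B (insertDot k y σ) ↔ (k : ℕ) < B y ∧ FitsIn (deleteRow y B) σ := by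
  simp only [FitsIn, Fin.forall_iff_succAbove k, insertDot_self, insertDot_succAbove,
    val_succAbove_lt_row_iff (h _)]

theorem fitsIn_insertDot_row_zero (hB : Monotone B) {k : Fin (n + 1)} {σ : Perm (Fin n)} :
    FitsIn B (insertDot k 0 σ) ↔ (k : ℕ) < B 0 ∧ FitsIn (deleteRow 0 B) σ := by
  by_cases hk : (k : ℕ) < B 0
  · exact fitsIn_insertDot fun d => .inr (hk.trans_le (hB (Nat.zero_le _)))
  · refine iff_of_false (fun h => hk ?_) fun h => hk h.1
    simpa only [insertDot_self, Fin.val_zero] using h k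

theorem fitsIn_insertDot_col_zero {y : Fin (n + 1)} {σ : Perm (Fin n)} :
    FitsIn B (insertDot 0 y σ) ↔ 0 < B y ∧ FitsIn (deleteRow y B) σ :=
  fitsIn_insertDot fun _ => .inl rfl

end Diagrams

/-! ### Row-by-row recursions -/

section MinFirst

variable {n : ℕ} {B : ℕ → ℕ} {D : Set ℕ} {r : ℕ → ℕ → Prop}

/-- Avoidance, inside the diagram `B`, of the patterns of length three that start with their
minimum: `123` if `r` is `<`, and `132` if `r` is `>`. -/
def AvoidsMinFirst (r : ℕ → ℕ → Prop) (B : ℕ → ℕ) (π : Perm (Fin n)) : Prop :=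
  ∀ i j k : Fin n, i < j → j < k → π i < π j → π i < π k → r (π j) (π k) → ¬ (k : ℕ) < B (π i)

/-- At each position in `D` the permutation descends (if `r` is `<`) or ascends (if `r` is `>`). -/
def Forced (r : ℕ → ℕ → Prop) (D : Set ℕ) (π : Perm (Fin n)) : Prop :=
  ∀ x y : Fin n, (y : ℕ) = x + 1 → (x : ℕ) ∈ D → r (π y) (π x)

/-- The columns in which the forced adjacencies `D` allow the lowest dot to stand; `r 1 0` holds if
`r` is `>`, and `r 0 1` if `r` is `<`. -/
def Admissible (r : ℕ → ℕ → Prop) (D : Set ℕ) (k : ℕ) : Prop :=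
  ∀ x ∈ D, (x = k → r 1 0) ∧ (x + 1 = k → r 0 1)

/-- The forced adjacencies after the dot of the lowest row (of length `m`) is removed from column
`k`: the old ones left of `k`, and all those among the columns `≥ k` of that row. -/
def nextForced (D : Set ℕ) (m k : ℕ) : Set ℕ := {x | x ∈ D ∧ x + 1 < k} ∪ {x | k ≤ x ∧ x + 2 < m}

open scoped Classical in
/-- The row-by-row recursion for the number of transversals that avoid a pattern starting with its
minimum and satisfy the adjacencies forced by `D`. -/
noncomputable def forcedCount (r : ℕ → ℕ → Prop) : ℕ → (ℕ → ℕ) → Set ℕ → ℕ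
  | 0, _, _ => 1
  | n + 1, B, D => ∑ k ∈ Finset.range (B 0) with Admissible r D k,
      forcedCount r n (deleteRow 0 B) (nextForced D (B 0) k)

theorem admissible_lt_iff {k : ℕ} : Admissible (· < ·) D k ↔ k ∉ D := by
  simp only [Admissible]
  grind

theorem admissible_gt_iff {k : ℕ} : Admissible (· > ·) D k ↔ k = 0 ∨ k - 1 ∉ D := by
  simp only [Admissible]
  grind

theorem insertDot_row_zero_val (k : Fin (n + 1)) (σ : Perm (Fin n)) (c : Fin n) :
    (insertDot k 0 σ (k.succAbove c) : ℕ) = σ c + 1 := by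
  simp

theorem rel_of_rel_of_val_eq_succ {s : Fin n → Fin n → Prop} (hs : ∀ a b c, s a b → s b c → s a c)
    {a c : ℕ} (h : ∀ x y : Fin n, (y : ℕ) = x + 1 → a ≤ x → (y : ℕ) < c → s x y) (i : Fin n) :
    ∀ j : Fin n, a ≤ i → i < j → (j : ℕ) < c → s i j := by
  rintro ⟨j, hj⟩ hai hij hjc
  induction j with
  | zero => exact absurd hij (by simp [Fin.lt_def])
  | succ j ih =>
    simp only [Fin.lt_def] at hij hjc ih
    obtain hij | hij := (Nat.lt_succ_iff.1 hij).lt_or_eq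
    · exact hs _ _ _ (ih (by lia) hij (by lia)) (h _ _ rfl (by grind) hjc)
    · exact h _ _ (by simp [hij]) hai hjc

theorem forall_not_rel_iff_forced (hr : r = (· < ·) ∨ r = (· > ·)) {k m : ℕ} {σ : Perm (Fin n)} :
    (∀ a b : Fin n, k ≤ a → a < b → (b : ℕ) + 1 < m → ¬ r (σ a) (σ b)) ↔
      Forced r {x | k ≤ x ∧ x + 2 < m} σ := by
  have hflip : ∀ a b : Fin n, a < b → (¬ r (σ a) (σ b) ↔ r (σ b) (σ a)) := fun a b hab => by
    have : (σ a : ℕ) ≠ σ b := fun h => hab.ne (σ.injective (Fin.ext h))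
    obtain rfl | rfl := hr <;> lia
  constructor
  · rintro h x y hxy ⟨hkx, hxm⟩
    have hlt : x < y := by rw [Fin.lt_def]; lia
    exact (hflip x y hlt).1 (h x y hkx hlt (by lia))
  · intro h a b hka hab hbm
    refine (hflip a b hab).2 (rel_of_rel_of_val_eq_succ (s := fun x y => r (σ y) (σ x)) (c := m - 1)
      (fun x y z hxy hyz => ?_) (fun x y hxy hkx hym => h x y hxy ⟨hkx, by lia⟩) a b hka hab
      (by lia))
    obtain rfl | rfl := hr
    exacts [hyz.trans hxy, hxy.trans hyz]

theorem avoidsMinFirst_insertDot (hr : r = (· < ·) ∨ r = (· > ·)) (hB : Monotone B)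
    {k : Fin (n + 1)} (hk : (k : ℕ) < B 0) {σ : Perm (Fin n)} :
    AvoidsMinFirst r B (insertDot k 0 σ) ↔ AvoidsMinFirst r (deleteRow 0 B) σ ∧
      ∀ a b : Fin n, (k : ℕ) ≤ a → a < b → (b : ℕ) + 1 < B 0 → ¬ r (σ a) (σ b) := by
  have hr' : ∀ a b, r (a + 1) (b + 1) ↔ r a b := by obtain rfl | rfl := hr <;> simp
  have hrow : ∀ c y, (k.succAbove c : ℕ) < B (y + 1) ↔ (c : ℕ) < deleteRow 0 B y := fun c y =>
    val_succAbove_lt_iff (.inr (hk.trans_le (hB (Nat.zero_le _)))) c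
  simp only [AvoidsMinFirst, Fin.forall_iff_succAbove k, insertDot_self, insertDot_succAbove,
    Fin.succAbove_lt_succAbove_iff, Fin.not_lt_zero, false_imp_iff, imp_true_iff,
    true_and, lt_succAbove_iff_val_le, Fin.zero_succAbove, hrow, Fin.succ_lt_succ_iff,
    Fin.val_succ, hr', Fin.succ_pos, true_imp_iff, Fin.val_zero]
  rw [and_comm]
  refine and_congr_right fun _ => forall₂_congr fun a b => forall₂_congr fun hka hab => ?_
  rw [val_succAbove, if_neg (by lia), imp_not_comm]

theorem forced_union {E : Set ℕ} {σ : Perm (Fin n)} :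
    Forced r (D ∪ E) σ ↔ Forced r D σ ∧ Forced r E σ := by
  simp only [Forced, Set.mem_union]
  grind

theorem forced_insertDot (hr : r = (· < ·) ∨ r = (· > ·)) {m : ℕ} (hm : m ≤ n + 1)
    (hD : ∀ x ∈ D, x + 1 < m) {k : Fin (n + 1)} {σ : Perm (Fin n)}
    (hσ : Forced r {x | k ≤ x ∧ x + 2 < m} σ) :
    Forced r D (insertDot k 0 σ) ↔
      Admissible r D k ∧ Forced r {x | x ∈ D ∧ x + 1 < (k : ℕ)} σ := by
  have hr' : ∀ a b, r (a + 1) (b + 1) ↔ r a b := by obtain rfl | rfl := hr <;> simp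
  have hr0 : ∀ a, (r (a + 1) 0 ↔ r 1 0) ∧ (r 0 (a + 1) ↔ r 0 1) := by
    obtain rfl | rfl := hr <;> simp
  constructor
  · intro h
    refine ⟨fun x hx => ⟨?_, ?_⟩, fun x y hxy ⟨hx, hxk⟩ => ?_⟩
    · rintro rfl
      have hk := hD k hx
      have := h k (k.succAbove ⟨k, by lia⟩) (by simp [val_succAbove]) hx
      rwa [insertDot_self, insertDot_row_zero_val, Fin.val_zero, (hr0 _).1] at this
    · intro hxk
      have := h (k.succAbove ⟨x, by lia⟩) k (by simp [val_succAbove]; lia) (by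
        simpa [val_succAbove, show x < k by lia] using hx)
      rwa [insertDot_self, insertDot_row_zero_val, Fin.val_zero, (hr0 _).2] at this
    · have := h (k.succAbove x) (k.succAbove y) (by grind [val_succAbove])
        (by rwa [val_succAbove, if_pos (by lia)])
      rwa [insertDot_row_zero_val, insertDot_row_zero_val, hr'] at this
  · rintro ⟨hadm, h⟩ x y hxy hx
    obtain rfl | ⟨a, rfl⟩ := Fin.eq_self_or_eq_succAbove k x
    · obtain rfl | ⟨b, rfl⟩ := Fin.eq_self_or_eq_succAbove x y
      · lia
      rw [insertDot_self, insertDot_row_zero_val, Fin.val_zero, (hr0 _).1]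
      exact (hadm x hx).1 rfl
    obtain rfl | ⟨b, rfl⟩ := Fin.eq_self_or_eq_succAbove k y
    · rw [insertDot_self, insertDot_row_zero_val, Fin.val_zero, (hr0 _).2]
      exact (hadm _ hx).2 hxy.symm
    rw [insertDot_row_zero_val, insertDot_row_zero_val, hr']
    have hxm := hD _ hx
    simp only [val_succAbove] at hxy hx hxm
    by_cases hak : (a : ℕ) < k
    · rw [if_pos hak] at hx hxy
      exact h a b (by split_ifs at hxy <;> lia) ⟨hx, by split_ifs at hxy <;> lia⟩
    · rw [if_neg hak] at hxy hxm
      exact hσ a b (by split_ifs at hxy <;> lia) ⟨by lia, by lia⟩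

theorem minFirst_insertDot (hr : r = (· < ·) ∨ r = (· > ·)) (hB : Monotone B) (hn : B 0 ≤ n + 1)
    (hD : ∀ x ∈ D, x + 1 < B 0) (k : Fin (n + 1)) (σ : Perm (Fin n)) :
    (FitsIn B (insertDot k 0 σ) ∧ AvoidsMinFirst r B (insertDot k 0 σ) ∧
        Forced r D (insertDot k 0 σ)) ↔
      ((k : ℕ) < B 0 ∧ Admissible r D k) ∧ FitsIn (deleteRow 0 B) σ ∧
        AvoidsMinFirst r (deleteRow 0 B) σ ∧ Forced r (nextForced D (B 0) k) σ := by
  by_cases hk : (k : ℕ) < B 0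
  · rw [fitsIn_insertDot_row_zero hB, avoidsMinFirst_insertDot hr hB hk,
      forall_not_rel_iff_forced hr, nextForced, forced_union]
    have := @forced_insertDot n D r hr _ hn hD k σ
    tauto
  · rw [fitsIn_insertDot_row_zero hB]
    tauto

theorem add_one_lt_of_mem_nextForced (hB : Monotone B) {k : ℕ} (hk : k < B 0) :
    ∀ x ∈ nextForced D (B 0) k, x + 1 < deleteRow 0 B 0 := by
  have := hB (Nat.zero_le 1)
  simp only [nextForced, deleteRow_zero_apply]
  grind

theorem deleteRow_le {y : ℕ} (h : ∀ i, B i ≤ n + 1) (i : ℕ) : deleteRow y B i ≤ n :=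
  Nat.sub_le_of_le_add (h _)

theorem ncard_minFirst_eq_forcedCount (hr : r = (· < ·) ∨ r = (· > ·)) (hB : Monotone B)
    (hn : ∀ i, B i ≤ n) (hD : ∀ x ∈ D, x + 1 < B 0) :
    {π : Perm (Fin n) | FitsIn B π ∧ AvoidsMinFirst r B π ∧ Forced r D π}.ncard =
      forcedCount r n B D := by
  induction n generalizing B D with
  | zero =>
    exact ncard_setOf_of_isEmpty_index fun π =>
      ⟨fun i => i.elim0, fun i => i.elim0, fun i => i.elim0⟩
  | succ n ih =>
    classical
    rw [ncard_eq_sum_insertDot_row_zero, forcedCount]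
    simp only [minFirst_insertDot hr hB (hn 0) hD]
    refine sum_fin_eq_sum_range_filter (hn 0) _ (fun k hk hadm => ?_) fun k hk => ?_
    · simp only [hk, hadm, true_and]
      exact ih (deleteRow_monotone hB 0) (deleteRow_le hn) (add_one_lt_of_mem_nextForced hB hk)
    · simp [hk]

end MinFirst

section Avoids321

variable {n : ℕ} {B : ℕ → ℕ}

/-- Avoidance of `321`. In such a pattern the last dot is also the lowest, so for a transversal the
pattern always lies in the diagram and no shape condition is needed. -/
def Avoids321 (π : Perm (Fin n)) : Prop :=
  ∀ i j k : Fin n, i < j → j < k → π k < π j → ¬ π j < π i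

/-- The first `t` entries of `π` are increasing. -/
def IncreasingUpTo (t : ℕ) (π : Perm (Fin n)) : Prop :=
  ∀ i j : Fin n, i < j → (j : ℕ) < t → π i < π j

/-- The row-by-row recursion for the number of `321`-avoiding transversals whose first `t` entries
increase. -/
def increasingCount : ℕ → (ℕ → ℕ) → ℕ → ℕ
  | 0, _, _ => 1
  | n + 1, B, t => ∑ k ∈ Finset.range (B 0) with k = 0 ∨ t ≤ k,
      increasingCount n (deleteRow 0 B) (if t ≤ k then k else t - 1)

theorem avoids321_insertDot {k : Fin (n + 1)} {σ : Perm (Fin n)} :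
    Avoids321 (insertDot k 0 σ) ↔ Avoids321 σ ∧ IncreasingUpTo k σ := by
  have hne : ∀ a b, a < b → (σ a < σ b ↔ ¬ σ b < σ a) := fun a b hab => by
    have := σ.injective.ne hab.ne
    lia
  simp only [Avoids321, IncreasingUpTo, Fin.forall_iff_succAbove k, insertDot_self,
    insertDot_succAbove, Fin.succAbove_lt_succAbove_iff, Fin.not_lt_zero, Fin.zero_succAbove,
    Fin.succ_pos, Fin.succ_lt_succ_iff, lt_succAbove_iff_val_le, succAbove_lt_iff_val_lt]
  grind

theorem increasingUpTo_insertDot {t : ℕ} {k : Fin (n + 1)} {σ : Perm (Fin n)} :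
    IncreasingUpTo t (insertDot k 0 σ) ↔
      ((k : ℕ) = 0 ∨ t ≤ k) ∧ IncreasingUpTo (if t ≤ k then t else t - 1) σ := by
  have hadm : (∀ a : Fin n, (a : ℕ) < k → ¬ (k : ℕ) < t) ↔ (k : ℕ) = 0 ∨ t ≤ k := by
    refine ⟨fun h => ?_, by grind⟩
    by_contra! hk
    exact h ⟨0, by lia⟩ (by grind) hk.2
  have hval : ((k : ℕ) = 0 ∨ t ≤ k) → ∀ b : Fin n,
      ((k.succAbove b : ℕ) < t ↔ (b : ℕ) < if t ≤ k then t else t - 1) := by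
    grind [val_succAbove]
  simp only [IncreasingUpTo, Fin.forall_iff_succAbove k, insertDot_self, insertDot_succAbove,
    Fin.succAbove_lt_succAbove_iff, Fin.not_lt_zero, Fin.zero_succAbove, Fin.succ_pos,
    Fin.succ_lt_succ_iff, lt_succAbove_iff_val_le, succAbove_lt_iff_val_lt, lt_irrefl]
  rw [← hadm] at hval ⊢
  grind

theorem avoids321_increasingUpTo_insertDot {t : ℕ} {k : Fin (n + 1)} {σ : Perm (Fin n)} :
    (Avoids321 (insertDot k 0 σ) ∧ IncreasingUpTo t (insertDot k 0 σ)) ↔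
      ((k : ℕ) = 0 ∨ t ≤ k) ∧ Avoids321 σ ∧ IncreasingUpTo (if t ≤ k then k else t - 1) σ := by
  rw [avoids321_insertDot, increasingUpTo_insertDot]
  have hmax : ((k : ℕ) = 0 ∨ t ≤ k) → (IncreasingUpTo (if t ≤ k then k else t - 1) σ ↔
      IncreasingUpTo k σ ∧ IncreasingUpTo (if t ≤ k then t else t - 1) σ) := by
    simp only [IncreasingUpTo]
    grind
  tauto

theorem ncard_avoids321_eq_increasingCount (hB : Monotone B) (hn : ∀ i, B i ≤ n) {t : ℕ} :
    {π : Perm (Fin n) | FitsIn B π ∧ Avoids321 π ∧ IncreasingUpTo t π}.ncard =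
      increasingCount n B t := by
  induction n generalizing B t with
  | zero =>
    exact ncard_setOf_of_isEmpty_index fun π =>
      ⟨fun i => i.elim0, fun i => i.elim0, fun i => i.elim0⟩
  | succ n ih =>
    rw [ncard_eq_sum_insertDot_row_zero, increasingCount]
    simp only [fitsIn_insertDot_row_zero hB, avoids321_increasingUpTo_insertDot]
    refine sum_fin_eq_sum_range_filter (hn 0) _ (fun k hk hkt => ?_) fun k hk => ?_
    · simp only [hk, hkt, true_and]
      exact ih (deleteRow_monotone hB 0) (deleteRow_le hn)
    · simp only [show ∀ p q r s : Prop, (p ∧ q) ∧ r ∧ s ↔ (p ∧ r) ∧ q ∧ s by tauto, hk,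
        false_and, Set.ofPred_false, Set.ncard_empty]

end Avoids321

section Proper

variable {n i : ℕ} {B : ℕ → ℕ}

/-- The diagram of size `n` with row lengths `B` is proper: it contains the staircase. -/
def Proper (n : ℕ) (B : ℕ → ℕ) : Prop := ∀ j < n, j + 1 ≤ B j

/-- The diagram of size `n` with row lengths `B` has a critical point of index at least `i`. Rows
are numbered from `0`, so row `j` has height `j + 1` and a critical point there has index
`B j - (j + 1)`. -/
def HasCriticalPoint (i n : ℕ) (B : ℕ → ℕ) : Prop :=
  ∃ j, j + 1 < n ∧ B j < B (j + 1) ∧ j + 1 + i ≤ B j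

theorem Proper.deleteRow_zero (h : Proper (n + 1) B) : Proper n (deleteRow 0 B) := fun j hj => by
  have := h (j + 1) (by lia)
  rw [deleteRow_zero_apply]; lia

theorem HasCriticalPoint.of_deleteRow {y : ℕ} (hB : Monotone B)
    (h : HasCriticalPoint i n (deleteRow y B)) : HasCriticalPoint i (n + 1) B := by
  obtain ⟨r, hr, hlt, hi⟩ := h
  have h1 := hB (Nat.le_add_right r 1)
  have h2 := hB (Nat.le_add_right (r + 1) 1)
  simp only [deleteRow] at hlt hi
  by_cases hc : r < y ∧ B r < B (r + 1)
  · exact ⟨r, by lia, hc.2, by grind⟩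
  · exact ⟨r + 1, by lia, by grind, by grind⟩

end Proper

section ForcedCount

variable {n m k : ℕ} {B : ℕ → ℕ} {D E : Set ℕ}

/-- The number of `123`-avoiding transversals with a descent at every position in `D`. -/
noncomputable abbrev count123 : ℕ → (ℕ → ℕ) → Set ℕ → ℕ := forcedCount (· < ·)

/-- The number of `132`-avoiding transversals with an ascent at every position in `D`. -/
noncomputable abbrev count132 : ℕ → (ℕ → ℕ) → Set ℕ → ℕ := forcedCount (· > ·)

open scoped Classical in
theorem count123_succ (n : ℕ) (B : ℕ → ℕ) (D : Set ℕ) :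
    count123 (n + 1) B D = ∑ k ∈ Finset.range (B 0) with k ∉ D,
      count123 n (deleteRow 0 B) (nextForced D (B 0) k) := by
  simp only [forcedCount, admissible_lt_iff]

open scoped Classical in
theorem count132_succ (n : ℕ) (B : ℕ → ℕ) (D : Set ℕ) :
    count132 (n + 1) B D = ∑ k ∈ Finset.range (B 0) with k = 0 ∨ k - 1 ∉ D,
      count132 n (deleteRow 0 B) (nextForced D (B 0) k) := by
  simp only [forcedCount, admissible_gt_iff]

theorem nextForced_subset_nextForced (h : D ⊆ E) (m k : ℕ) :
    nextForced D m k ⊆ nextForced E m k :=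
  Set.union_subset_union_left _ fun _ hx => ⟨h hx.1, hx.2⟩

theorem count123_anti (h : D ⊆ E) : count123 n B E ≤ count123 n B D := by
  classical
  induction n generalizing B D E with
  | zero => rfl
  | succ n ih =>
    rw [count123_succ, count123_succ]
    refine (Finset.sum_le_sum fun k _ => ih (nextForced_subset_nextForced h _ k)).trans
      (Finset.sum_le_sum_of_subset ?_)
    exact Finset.monotone_filter_right _ fun k _ hk hD => hk (h hD)

theorem count123_pos (hB : Monotone B) (hp : Proper n B) (hD : ∀ x ∈ D, x + 1 < B 0) :
    0 < count123 n B D := by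
  classical
  induction n generalizing B D with
  | zero => exact Nat.one_pos
  | succ n ih =>
    have h0 := hp 0 (Nat.succ_pos n)
    rw [count123_succ]
    refine Finset.sum_pos' (fun _ _ => Nat.zero_le _) ⟨B 0 - 1, ?_, ?_⟩
    · simp only [Finset.mem_filter, Finset.mem_range]
      exact ⟨by lia, fun h => by have := hD _ h; lia⟩
    · exact ih (deleteRow_monotone hB 0) hp.deleteRow_zero
        (add_one_lt_of_mem_nextForced hB (by lia))

theorem count123_strict_anti (hB : Monotone B) (hp : Proper (n + 1) B) (h : D ⊂ E)
    (hE : ∀ x ∈ E, x + 1 < B 0) : count123 (n + 1) B E < count123 (n + 1) B D := by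
  classical
  obtain ⟨hDE, x, hxE, hxD⟩ := Set.ssubset_iff_exists.1 h
  have hx := hE x hxE
  rw [count123_succ, count123_succ]
  refine (Finset.sum_le_sum fun k _ =>
    count123_anti (nextForced_subset_nextForced hDE _ k)).trans_lt ?_
  refine Finset.sum_lt_sum_of_subset (i := x)
    (Finset.monotone_filter_right _ fun k _ hk hD => hk (hDE hD)) ?_ ?_ ?_
    fun _ _ _ => Nat.zero_le _
  · simpa only [Finset.mem_filter, Finset.mem_range] using ⟨by lia, hxD⟩
  · simp [hxE]
  · exact count123_pos (deleteRow_monotone hB 0) hp.deleteRow_zero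
      (add_one_lt_of_mem_nextForced hB (by lia))

end ForcedCount

/-! ### Comparison of 132 with 123 -/

section RunEnd

variable {n m k q : ℕ} {B : ℕ → ℕ} {D : Set ℕ}

/-- The last column of the maximal run of forced adjacencies `D` that passes through column `k`.
It exists only if `D` does not contain all of `{k, k + 1, …}`. -/
noncomputable def runEnd (D : Set ℕ) (k : ℕ) : ℕ := sInf {q | k ≤ q ∧ q ∉ D}

theorem mem_of_lt_runEnd {x : ℕ} (hkx : k ≤ x) (hx : x < runEnd D k) : x ∈ D := by
  by_contra hxD
  exact Nat.notMem_of_lt_sInf hx ⟨hkx, hxD⟩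

theorem runEnd_eq (hkq : k ≤ q) (hq : q ∉ D) (h : ∀ x, k ≤ x → x < q → x ∈ D) :
    runEnd D k = q := by
  refine le_antisymm (Nat.sInf_le ⟨hkq, hq⟩) (le_csInf ⟨q, hkq, hq⟩ fun x hx => ?_)
  by_contra! hxq
  exact hx.2 (h x hx.1 hxq)

theorem runEnd_spec (hD : ∀ x ∈ D, x + 1 < m) (hk : k < m) :
    k ≤ runEnd D k ∧ runEnd D k < m ∧ runEnd D k ∉ D := by
  have hlast : k ≤ m - 1 ∧ m - 1 ∉ D := ⟨by lia, fun h => by have := hD _ h; lia⟩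
  have hmem : runEnd D k ∈ {q | k ≤ q ∧ q ∉ D} := Nat.sInf_mem ⟨m - 1, hlast⟩
  have hle : runEnd D k ≤ m - 1 := Nat.sInf_le hlast
  exact ⟨hmem.1, by lia, hmem.2⟩

theorem runEnd_injOn (hD : ∀ x ∈ D, x + 1 < m) :
    Set.InjOn (runEnd D) {k | k < m ∧ (k = 0 ∨ k - 1 ∉ D)} := by
  have hlt : ∀ k l, k < l → l < m → (l = 0 ∨ l - 1 ∉ D) → runEnd D k ≠ runEnd D l := by
    rintro k l hkl hlm (rfl | hl) heq
    · exact absurd hkl (Nat.not_lt_zero k)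
    · have := (runEnd_spec hD hlm).1
      exact hl (mem_of_lt_runEnd (k := k) (by lia) (by lia))
  rintro k ⟨hk, hks⟩ l ⟨hl, hls⟩ heq
  obtain h | h | h := lt_trichotomy k l
  exacts [absurd heq (hlt k l h hl hls), h, absurd heq.symm (hlt l k h hk hks)]

theorem nextForced_runEnd_subset (hD : ∀ x ∈ D, x + 1 < m) (hk : k < m)
    (hstart : k = 0 ∨ k - 1 ∉ D) : nextForced D m (runEnd D k) ⊆ nextForced D m k := by
  obtain ⟨hle, hlt, -⟩ := runEnd_spec hD hk
  rintro x (⟨hx, hxk⟩ | ⟨hx, hxm⟩)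
  · by_cases h : x + 1 = k
    · exact absurd hx (by grind)
    · by_cases h' : x + 1 < k
      exacts [.inl ⟨hx, h'⟩, .inr ⟨by lia, by lia⟩]
  · exact .inr ⟨by lia, hxm⟩

open scoped Classical in
theorem sum_runEnd_le_count123 (hD : ∀ x ∈ D, x + 1 < B 0) :
    ∑ k ∈ Finset.range (B 0) with k = 0 ∨ k - 1 ∉ D,
      count123 n (deleteRow 0 B) (nextForced D (B 0) (runEnd D k)) ≤ count123 (n + 1) B D := by
  have hinj : Set.InjOn (runEnd D)
      ((Finset.range (B 0)).filter fun k => k = 0 ∨ k - 1 ∉ D : Finset ℕ) :=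
    (runEnd_injOn hD).mono fun k hk => by simpa using hk
  rw [count123_succ, ← Finset.sum_image hinj
    (f := fun q => count123 n (deleteRow 0 B) (nextForced D (B 0) q))]
  refine Finset.sum_le_sum_of_subset fun q hq => ?_
  obtain ⟨k, hk, rfl⟩ := Finset.mem_image.1 hq
  simp only [Finset.mem_filter, Finset.mem_range] at hk ⊢
  exact (runEnd_spec hD hk.1).2

theorem count132_le_count123 (hB : Monotone B) (hD : ∀ x ∈ D, x + 1 < B 0) :
    count132 n B D ≤ count123 n B D := by
  classical
  induction n generalizing B D with
  | zero => rfl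
  | succ n ih =>
    rw [count132_succ]
    refine (Finset.sum_le_sum fun k hk => ?_).trans (sum_runEnd_le_count123 hD)
    simp only [Finset.mem_filter, Finset.mem_range] at hk
    exact (ih (deleteRow_monotone hB 0) (add_one_lt_of_mem_nextForced hB hk.1)).trans
      (count123_anti (nextForced_runEnd_subset hD hk.1 hk.2))

theorem count132_lt_count123_of_runEnd (hB : Monotone B) (hD : ∀ x ∈ D, x + 1 < B 0)
    (hk : k < B 0) (hstart : k = 0 ∨ k - 1 ∉ D)
    (hlt : count132 n (deleteRow 0 B) (nextForced D (B 0) k) <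
      count123 n (deleteRow 0 B) (nextForced D (B 0) (runEnd D k))) :
    count132 (n + 1) B D < count123 (n + 1) B D := by
  classical
  rw [count132_succ]
  refine (Finset.sum_lt_sum (fun l hl => ?_) ⟨k, by simp [hk, hstart], hlt⟩).trans_le
    (sum_runEnd_le_count123 hD)
  simp only [Finset.mem_filter, Finset.mem_range] at hl
  exact (count132_le_count123 (deleteRow_monotone hB 0)
    (add_one_lt_of_mem_nextForced hB hl.1)).trans
      (count123_anti (nextForced_runEnd_subset hD hl.1 hl.2))

end RunEnd

section CompareMinFirst

variable {n m k a : ℕ} {B : ℕ → ℕ} {D : Set ℕ}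

theorem runEnd_empty (k : ℕ) : runEnd ∅ k = k :=
  runEnd_eq le_rfl (Set.notMem_empty k) fun _ h h' => absurd h (not_le.2 h')

theorem nextForced_zero (D : Set ℕ) (m : ℕ) : nextForced D m 0 = {x | x + 2 < m} := by
  simp [nextForced]

theorem nextForced_empty_pred (m : ℕ) : nextForced ∅ m (m - 1) = ∅ := by
  ext x
  simp only [nextForced, Set.mem_union, Set.mem_ofPred_eq, Set.mem_empty_iff_false]
  lia

/-- Two rows suffice to reach different states: with both dots in column `0`, the `132` recursion
forces the adjacency `B 0 - 3`, which the corresponding run ends of the `123` recursion leave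
free. -/
theorem count132_lt_count123_of_lt (hB : Monotone B) (hp : Proper (n + 3) B) (hlt : B 0 < B 1)
    (h3 : 3 ≤ B 0) : count132 (n + 3) B ∅ < count123 (n + 3) B ∅ := by
  have hB' := deleteRow_monotone hB 0
  refine count132_lt_count123_of_runEnd hB (by simp) (k := 0) (by lia) (.inl rfl) ?_
  rw [runEnd_empty, nextForced_zero]
  have hD : ∀ x ∈ {x | x + 2 < B 0}, x + 1 < deleteRow 0 B 0 := fun x hx => by
    rw [deleteRow_zero_apply]; grind
  have hend : runEnd {x | x + 2 < B 0} 0 = B 0 - 2 :=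
    runEnd_eq (Nat.zero_le _) (by grind) (by grind)
  have hrow : B 0 ≤ deleteRow 0 B 0 := by rw [deleteRow_zero_apply]; lia
  refine count132_lt_count123_of_runEnd hB' hD (k := 0) (by lia) (.inl rfl) ?_
  refine (count132_le_count123 (deleteRow_monotone hB' 0)
    (add_one_lt_of_mem_nextForced hB' (by lia))).trans_lt ?_
  refine count123_strict_anti (deleteRow_monotone hB' 0) hp.deleteRow_zero.deleteRow_zero ?_
    (add_one_lt_of_mem_nextForced hB' (by lia))
  rw [hend, nextForced_zero]
  refine Set.ssubset_iff_exists.2 ⟨fun x hx => ?_, B 0 - 3, ?_, fun hx => ?_⟩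
  all_goals grind [nextForced]

theorem count132_lt_count123 (hB : Monotone B) (hn : ∀ j, B j ≤ n) (hp : Proper n B)
    (hc : HasCriticalPoint 2 n B) : count132 n B ∅ < count123 n B ∅ := by
  induction n generalizing B with
  | zero =>
    obtain ⟨j, hj, -⟩ := hc
    exact absurd hj (Nat.not_lt_zero _)
  | succ n ih =>
    obtain ⟨j, hj, hlt, hj2⟩ := hc
    have h0 := hp 0 (Nat.succ_pos n)
    obtain _ | j := j
    · obtain ⟨n, rfl⟩ : ∃ l, n = l + 2 := ⟨n - 2, by have := hn 0; lia⟩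
      exact count132_lt_count123_of_lt hB hp hlt (by lia)
    · refine count132_lt_count123_of_runEnd hB (by simp) (k := B 0 - 1) (by lia) (by simp) ?_
      rw [runEnd_empty, nextForced_empty_pred]
      refine ih (deleteRow_monotone hB 0) (deleteRow_le hn) hp.deleteRow_zero ⟨j, by lia, ?_, ?_⟩
      all_goals simp only [deleteRow_zero_apply]; lia

/-- The forced adjacencies among the columns `≥ a` of a row of length `m`. -/
def finalRun (a m : ℕ) : Set ℕ := {x | a ≤ x ∧ x + 1 < m}

theorem finalRun_eq_empty (h : m ≤ a + 1) : finalRun a m = ∅ := by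
  ext x
  simp only [finalRun, Set.mem_ofPred_eq, Set.mem_empty_iff_false]
  lia

theorem nextForced_finalRun (h : k ≤ a) : nextForced (finalRun a m) m k = finalRun k (m - 1) := by
  ext x
  simp only [nextForced, finalRun, Set.mem_union, Set.mem_ofPred_eq]
  lia

theorem nextForced_finalRun_pred (h : a < m) :
    nextForced (finalRun a m) m (m - 1) = finalRun a (m - 1) := by
  ext x
  simp only [nextForced, finalRun, Set.mem_union, Set.mem_ofPred_eq]
  lia

theorem count132_finalRun_succ (ha : a < B 0) : count132 (n + 1) B (finalRun a (B 0)) =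
    ∑ k ∈ Finset.range (a + 1), count132 n (deleteRow 0 B) (finalRun k (B 0 - 1)) := by
  classical
  have hstarts : (Finset.range (B 0)).filter (fun k => k = 0 ∨ k - 1 ∉ finalRun a (B 0)) =
      Finset.range (a + 1) := by
    ext k
    rw [Finset.mem_filter]
    simp only [finalRun, Finset.mem_range, Set.mem_ofPred_eq]
    lia
  rw [count132_succ, hstarts]
  refine Finset.sum_congr rfl fun k hk => ?_
  rw [nextForced_finalRun (Nat.lt_succ_iff.1 (Finset.mem_range.1 hk))]

theorem count123_finalRun_succ (ha : a < B 0) : count123 (n + 1) B (finalRun a (B 0)) =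
    ∑ k ∈ Finset.range (a + 1), count123 n (deleteRow 0 B) (finalRun k (B 0 - 1)) := by
  classical
  have hends : (Finset.range (B 0)).filter (fun k => k ∉ finalRun a (B 0)) =
      insert (B 0 - 1) (Finset.range a) := by
    ext k
    rw [Finset.mem_filter]
    simp only [finalRun, Finset.mem_range, Set.mem_ofPred_eq, Finset.mem_insert]
    lia
  rw [count123_succ, hends, Finset.sum_insert (by simp; lia), nextForced_finalRun_pred ha,
    add_comm, Finset.sum_range_succ]
  congr 1
  refine Finset.sum_congr rfl fun k hk => ?_
  rw [nextForced_finalRun (Finset.mem_range.1 hk).le]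

/-- Without critical points of index at least `2` the forced adjacencies remain a single run that
reaches the end of the row, so that both recursions pass through the same states. -/
theorem count132_finalRun_eq_count123 (hB : Monotone B) (hc : ¬ HasCriticalPoint 2 n B) (a : ℕ) :
    count132 n B (finalRun a (B 0)) = count123 n B (finalRun a (B 0)) := by
  induction n generalizing B a with
  | zero => rfl
  | succ n ih =>
    have hnext : ∀ k, count132 n (deleteRow 0 B) (finalRun k (B 0 - 1)) =
        count123 n (deleteRow 0 B) (finalRun k (B 0 - 1)) := fun k => by
      obtain _ | n := n
      · rfl
      have hstep := ih (deleteRow_monotone hB 0) (mt (HasCriticalPoint.of_deleteRow hB) hc)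
      obtain h | h := (hB (Nat.zero_le 1)).eq_or_lt
      · simpa only [deleteRow_zero_apply, zero_add, h] using hstep k
      · have hB0 : B 0 ≤ 2 := by
          by_contra! hgt
          exact hc ⟨0, by lia, h, by lia⟩
        have := hstep (deleteRow 0 B 0)
        rwa [finalRun_eq_empty (Nat.le_succ _), ← finalRun_eq_empty (m := B 0 - 1) (by lia)] at this
    obtain h0 | h0 := Nat.eq_zero_or_pos (B 0)
    · simp only [count132_succ, count123_succ, h0, Finset.range_zero, Finset.filter_empty,
        Finset.sum_empty]
    obtain ha | ha := lt_or_ge a (B 0)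
    · rw [count132_finalRun_succ ha, count123_finalRun_succ ha]
      exact Finset.sum_congr rfl fun k _ => hnext k
    · rw [finalRun_eq_empty (by lia), ← finalRun_eq_empty (a := B 0 - 1) (m := B 0) (by lia),
        count132_finalRun_succ (by lia), count123_finalRun_succ (by lia)]
      exact Finset.sum_congr rfl fun k _ => hnext k

theorem count132_lt_count123_iff (hB : Monotone B) (hn : ∀ j, B j ≤ n) (hp : Proper n B) :
    count132 n B ∅ < count123 n B ∅ ↔ HasCriticalPoint 2 n B := by
  refine ⟨fun h => ?_, count132_lt_count123 hB hn hp⟩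
  by_contra hc
  have heq := count132_finalRun_eq_count123 hB hc (B 0)
  rw [finalRun_eq_empty (Nat.le_succ _)] at heq
  exact h.ne heq

end CompareMinFirst

/-! ### Equidistribution of 123 and 321 -/

section Continuant

open Polynomial Polynomial.Chebyshev

variable {D : Set ℕ} {n m k : ℕ} {B : ℕ → ℕ}

open scoped Classical in
/-- The continuant of the path on the vertices `0, …, m - 1` whose edges are the `x ∈ D`, the edge
`x` joining `x` to `x + 1`: the signed matching polynomial in which an unmatched vertex has weight
`X` and a matched edge has weight `-1`. It encodes all that the `123`-recursion needs to know about
the forced adjacencies. -/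
noncomputable def continuant (D : Set ℕ) : ℕ → ℤ[X]
  | 0 => 1
  | 1 => X
  | m + 2 => X * continuant D (m + 1) - if m ∈ D then continuant D m else 0

theorem continuant_succ_of_forall_notMem (h : ∀ x, x + 1 = m → x ∉ D) :
    continuant D (m + 1) = X * continuant D m := by
  rcases m with _ | m
  · simp [continuant]
  · rw [continuant, if_neg (h m rfl), sub_zero]

theorem continuant_natDegree_le (D : Set ℕ) (m : ℕ) : (continuant D m).natDegree ≤ m := by
  induction m using Nat.twoStepInduction with
  | zero => simp [continuant]
  | one => simp [continuant]
  | more m ih ih' =>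
    have hX : (X * continuant D (m + 1)).natDegree ≤ m + 2 := by
      have := natDegree_mul_le_of_le (natDegree_X_le (R := ℤ)) ih'
      lia
    rw [continuant]
    refine (natDegree_sub_le_of_le hX (n := m) ?_).trans (by lia)
    split_ifs
    · exact ih
    · simp

theorem continuant_coeff_self (D : Set ℕ) (m : ℕ) : (continuant D m).coeff m = 1 := by
  induction m using Nat.twoStepInduction with
  | zero => simp [continuant]
  | one => simp [continuant]
  | more m _ ih =>
    classical
    have hlow : (if m ∈ D then continuant D m else 0).coeff (m + 2) = 0 := by
      split_ifs
      · exact coeff_eq_zero_of_natDegree_lt (by have := continuant_natDegree_le D m; lia)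
      · exact coeff_zero _
    rw [continuant, coeff_sub, coeff_X_mul, ih, hlow, sub_zero]

theorem continuant_univ (m : ℕ) : continuant Set.univ m = S ℤ m := by
  induction m using Nat.twoStepInduction with
  | zero => simp [continuant]
  | one => simp [continuant]
  | more m ih ih' =>
    rw [continuant, if_pos (Set.mem_univ m), ih, ih']
    push_cast
    rw [S_add_two]

/-- The expansion of a continuant along its missing edges. The term `k = m - 1` vanishes since
`S (-1) = 0`. -/
theorem continuant_eq_S_add_sum [DecidablePred (· ∈ D)] (m : ℕ) : continuant D m =
    S ℤ m + ∑ k ∈ Finset.range m with k ∉ D, continuant D k * S ℤ (m - 2 - k) := by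
  simp only [Finset.sum_filter]
  induction m using Nat.twoStepInduction with
  | zero => simp [continuant]
  | one => simp [continuant]
  | more m ih ih' =>
    have hstep : ∀ k ∈ Finset.range m,
        (if k ∉ D then continuant D k * S ℤ ((m + 2 : ℕ) - 2 - k) else 0) =
          X * (if k ∉ D then continuant D k * S ℤ ((m + 1 : ℕ) - 2 - k) else 0) -
            if k ∉ D then continuant D k * S ℤ (m - 2 - k) else 0 := by
      intro k _
      have hS := S_add_two ℤ (m - 2 - k : ℤ)
      rw [show ((m + 2 : ℕ) - 2 - k : ℤ) = m - 2 - k + 2 by push_cast; ring,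
        show ((m + 1 : ℕ) - 2 - k : ℤ) = m - 2 - k + 1 by push_cast; ring, hS]
      split_ifs <;> ring
    rw [Finset.sum_range_succ, show ((m + 1 : ℕ) - 2 - m : ℤ) = -1 by push_cast; ring,
      S_neg_one, mul_zero, ite_self, add_zero] at ih'
    rw [Finset.sum_range_succ, Finset.sum_range_succ, Finset.sum_congr rfl hstep,
      Finset.sum_sub_distrib, ← Finset.mul_sum,
      show ((m + 2 : ℕ) - 2 - m : ℤ) = 0 by push_cast; ring,
      show ((m + 2 : ℕ) - 2 - (m + 1 : ℕ) : ℤ) = -1 by push_cast; ring,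
      show ((m + 2 : ℕ) : ℤ) = m + 2 by push_cast; ring, S_add_two, S_zero, S_neg_one, continuant]
    push_cast at ih' ⊢
    by_cases hm : m ∈ D
    · simp only [hm, if_true, not_true_eq_false, if_false, mul_zero, ite_self]
      linear_combination X * ih' - ih
    · simp only [hm, if_false, not_false_eq_true, if_true, mul_zero, ite_self]
      linear_combination X * ih' - ih

theorem continuant_congr {E : Set ℕ} (h : ∀ x, x + 1 < m → (x ∈ D ↔ x ∈ E)) :
    continuant D m = continuant E m := by
  induction m using Nat.twoStepInduction with
  | zero => rfl
  | one => rfl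
  | more m ih ih' =>
    rw [continuant, continuant, ih fun x hx => h x (by lia), ih' fun x hx => h x (by lia)]
    classical
    congr 1
    exact if_congr (h m (by lia)) rfl rfl

theorem continuant_add_eq_mul_S {j : ℕ} (hcut : ∀ x, x + 1 = k → x ∉ D)
    (hfull : ∀ x, k ≤ x → x + 1 < k + j → x ∈ D) :
    continuant D (k + j) = continuant D k * S ℤ j := by
  induction j using Nat.twoStepInduction with
  | zero => simp
  | one => simp [continuant_succ_of_forall_notMem hcut, mul_comm]
  | more j ih ih' =>
    rw [← add_assoc, continuant, if_pos (hfull _ (by lia) (by lia)), add_assoc,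
      ih fun x hx _ => hfull x hx (by lia), ih' fun x hx _ => hfull x hx (by lia)]
    push_cast
    rw [S_add_two]
    ring

/-- Removing the lowest dot from column `k` cuts the path before the vertex `k`: the part left of
`k` keeps its edges, and the rest becomes a full path. -/
theorem continuant_nextForced (hk : k < m) :
    continuant (nextForced D m k) (m - 1) = continuant D k * S ℤ (m - 1 - k) := by
  obtain ⟨j, rfl⟩ : ∃ j, m = k + j + 1 := ⟨m - k - 1, by lia⟩
  have hS : ((k + j + 1 : ℕ) - 1 - k : ℤ) = j := by push_cast; ring
  rw [hS, Nat.add_sub_cancel, continuant_add_eq_mul_S]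
  · congr 1
    refine continuant_congr fun x hx => ?_
    simp only [nextForced, Set.mem_union, Set.mem_ofPred_eq]
    lia
  all_goals
    intro x
    simp only [nextForced, Set.mem_union, Set.mem_ofPred_eq]
    lia

theorem continuant_eq_pow_mul {M : ℕ} (hD : ∀ x ∈ D, x + 1 < M) (hm : M ≤ m) :
    continuant D m = X ^ (m - M) * continuant D M := by
  induction m, hm using Nat.le_induction with
  | base => simp
  | succ m hm ih =>
    rw [continuant_succ_of_forall_notMem, ih, Nat.succ_sub hm, pow_succ']
    · ring
    · intro x hx hxD
      have := hD x hxD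
      lia

end Continuant

section RowFunctional

open Polynomial Polynomial.Chebyshev

variable {D : Set ℕ} {n m t : ℕ} {B : ℕ → ℕ}

/-- The linear functional that evaluates the row-by-row recursions for `123` and for `321`.
Deleting the lowest row, of length `m`, replaces `p` (of degree at most `m`) by `X p` minus the
multiple of `S (m + 1)` that cancels the term of degree `m + 1`, and then multiplies by a power of
`X` for the columns by which the next row is longer. -/
noncomputable def rowFunctional : ℕ → (ℕ → ℕ) → ℤ[X] →ₗ[ℤ] ℤ
  | 0, _ => lcoeff ℤ 0
  | n + 1, B => rowFunctional n (deleteRow 0 B) ∘ₗ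
      LinearMap.mulLeft ℤ (X ^ (deleteRow 0 B 0 - (B 0 - 1))) ∘ₗ
        (LinearMap.mulLeft ℤ X - (lcoeff ℤ (B 0)).smulRight (S ℤ (B 0 + 1)))

theorem rowFunctional_succ_apply {p : ℤ[X]} (hp : p.coeff (B 0) = 1) :
    rowFunctional (n + 1) B p = rowFunctional n (deleteRow 0 B)
      (X ^ (deleteRow 0 B 0 - (B 0 - 1)) * (X * p - S ℤ (B 0 + 1))) := by
  simp [rowFunctional, hp]

theorem count123_eq_rowFunctional (hB : Monotone B) (hn : ∀ i, B i ≤ n)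
    (hD : ∀ x ∈ D, x + 1 < B 0) :
    (count123 n B D : ℤ) = rowFunctional n B (continuant D (B 0)) := by
  classical
  induction n generalizing B D with
  | zero => simp [Nat.le_zero.1 (hn 0), forcedCount, rowFunctional, continuant]
  | succ n ih =>
    have hrow : B 0 - 1 ≤ deleteRow 0 B 0 := Nat.sub_le_sub_right (hB (Nat.zero_le 1)) 1
    have hexp : X * continuant D (B 0) - S ℤ (B 0 + 1) =
        ∑ k ∈ Finset.range (B 0) with k ∉ D, continuant D k * S ℤ (B 0 - 1 - k) := by
      rw [← continuant_succ_of_forall_notMem fun x hx hxD => (hD x hxD).ne hx,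
        continuant_eq_S_add_sum]
      simp only [Finset.sum_filter, Finset.sum_range_succ]
      push_cast
      simp only [show ∀ k : ℤ, (B 0 : ℤ) + 1 - 2 - k = B 0 - 1 - k by intro k; ring]
      simp
    rw [count123_succ, rowFunctional_succ_apply (continuant_coeff_self D _), hexp,
      Finset.mul_sum, map_sum]
    push_cast
    refine Finset.sum_congr rfl fun k hk => ?_
    have hkB : k < B 0 := Finset.mem_range.1 (Finset.mem_filter.1 hk).1
    rw [ih (deleteRow_monotone hB 0) (deleteRow_le hn) (add_one_lt_of_mem_nextForced hB hkB),
      ← continuant_nextForced hkB, ← continuant_eq_pow_mul _ hrow]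
    simp only [nextForced, Set.mem_union, Set.mem_ofPred_eq]
    lia

theorem X_mul_pow_mul_S_sub_S (htm : t ≤ m) :
    X * (X ^ (m - t) * S ℤ t) - S ℤ (m + 1) = ∑ k ∈ Finset.range m with k = 0 ∨ t ≤ k,
      X ^ (m - 1 - if t ≤ k then k else t - 1) * S ℤ (if t ≤ k then k else t - 1 : ℕ) := by
  induction m, htm using Nat.le_induction with
  | base =>
    rw [Nat.sub_self, pow_zero, one_mul, ← S_sub_one]
    rcases t with _ | t
    · simp
    · rw [Finset.sum_eq_single_of_mem 0 (by simp)]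
      · simp
      · simp only [Finset.mem_filter, Finset.mem_range]
        lia
  | succ m htm ih =>
    have hstep : ∀ k ∈ (Finset.range m).filter (fun k => k = 0 ∨ t ≤ k),
        (X ^ (m + 1 - 1 - if t ≤ k then k else t - 1) : ℤ[X]) *
            S ℤ (if t ≤ k then k else t - 1 : ℕ) =
          X * (X ^ (m - 1 - if t ≤ k then k else t - 1) *
            S ℤ (if t ≤ k then k else t - 1 : ℕ)) := by
      intro k hk
      have hkm : k < m := Finset.mem_range.1 (Finset.mem_filter.1 hk).1
      rw [← mul_assoc, ← pow_succ']
      congr 2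
      split_ifs <;> lia
    rw [Finset.range_add_one, Finset.filter_insert, if_pos (Or.inr htm),
      Finset.sum_insert (by simp), Finset.sum_congr rfl hstep, ← Finset.mul_sum, ← ih, if_pos htm,
      Nat.succ_sub htm, pow_succ', show m + 1 - 1 - m = 0 by lia]
    have hS := S_add_two ℤ (m : ℤ)
    push_cast
    rw [show (m : ℤ) + 1 + 1 = m + 2 by ring, hS]
    ring

theorem increasingCount_eq_rowFunctional (hB : Monotone B) (hn : ∀ i, B i ≤ n) (ht : t ≤ B 0) :
    (increasingCount n B t : ℤ) = rowFunctional n B (X ^ (B 0 - t) * S ℤ t) := by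
  induction n generalizing B t with
  | zero =>
    have h0 : B 0 = 0 := Nat.le_zero.1 (hn 0)
    simp [h0, Nat.le_zero.1 (h0 ▸ ht), increasingCount, rowFunctional]
  | succ n ih =>
    have hcoeff : (X ^ (B 0 - t) * S ℤ t).coeff (B 0) = 1 := by
      rw [coeff_X_pow_mul', if_pos (Nat.sub_le _ _), Nat.sub_sub_self ht, ← continuant_univ,
        continuant_coeff_self]
    rw [increasingCount, rowFunctional_succ_apply hcoeff, X_mul_pow_mul_S_sub_S ht,
      Finset.mul_sum, map_sum]
    rw [Nat.cast_sum]
    refine Finset.sum_congr rfl fun k hk => ?_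
    have hkB : k < B 0 := Finset.mem_range.1 (Finset.mem_filter.1 hk).1
    have hrow : B 0 - 1 ≤ deleteRow 0 B 0 := Nat.sub_le_sub_right (hB (Nat.zero_le 1)) 1
    have hnext : (if t ≤ k then k else t - 1) ≤ B 0 - 1 := by split_ifs <;> lia
    rw [ih (deleteRow_monotone hB 0) (deleteRow_le hn) (hnext.trans hrow), ← mul_assoc, ← pow_add]
    congr 3
    lia

theorem count123_eq_increasingCount (hB : Monotone B) (hn : ∀ i, B i ≤ n) :
    count123 n B ∅ = increasingCount n B 0 := by
  have hempty : continuant ∅ (B 0) = X ^ (B 0 - 0) * S ℤ (0 : ℕ) := by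
    rw [continuant_eq_pow_mul (by simp) (Nat.zero_le _)]
    simp [continuant]
  exact_mod_cast (count123_eq_rowFunctional hB hn (by simp)).trans <|
    hempty ▸ (increasingCount_eq_rowFunctional hB hn (Nat.zero_le _)).symm

end RowFunctional

/-! ### Column-by-column comparison of 321 with 312 -/

section FirstEntry

variable {n : ℕ} {B : ℕ → ℕ}

/-- Avoidance of `312` in the diagram `B`. -/
def Avoids312 (B : ℕ → ℕ) (π : Perm (Fin n)) : Prop :=
  ∀ i j k : Fin n, i < j → j < k → π j < π k → π k < π i → ¬ (k : ℕ) < B (π j)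

/-- The number of `312`-avoiding transversals of size `n + 1` with first entry at least `y`. -/
noncomputable def count312 (n : ℕ) (B : ℕ → ℕ) (y : ℕ) : ℕ :=
  {π : Perm (Fin (n + 1)) | (FitsIn B π ∧ Avoids312 B π) ∧ y ≤ π 0}.ncard

/-- The number of `321`-avoiding transversals of size `n + 1` with first entry at least `y`. -/
noncomputable def count321 (n : ℕ) (B : ℕ → ℕ) (y : ℕ) : ℕ :=
  {π : Perm (Fin (n + 1)) | (FitsIn B π ∧ Avoids321 π) ∧ y ≤ π 0}.ncard

/-- The number of `312`-avoiding transversals of size `n + 2` that start with a descent from an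
entry at least `y`. -/
noncomputable def descentCount312 (n : ℕ) (B : ℕ → ℕ) (y : ℕ) : ℕ :=
  {π : Perm (Fin (n + 2)) | (FitsIn B π ∧ Avoids312 B π) ∧ y ≤ π 0 ∧ π 1 < π 0}.ncard

/-- The number of `321`-avoiding transversals of size `n + 2` that start with a descent from an
entry at least `y`. -/
noncomputable def descentCount321 (n : ℕ) (B : ℕ → ℕ) (y : ℕ) : ℕ :=
  {π : Perm (Fin (n + 2)) | (FitsIn B π ∧ Avoids321 π) ∧ y ≤ π 0 ∧ π 1 < π 0}.ncard

theorem lt_insertDot_zero_apply_one {z : Fin (n + 2)} {σ : Perm (Fin (n + 1))} :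
    z < insertDot 0 z σ 1 ↔ (z : ℕ) ≤ σ 0 := by
  rw [← Fin.succ_zero_eq_one, insertDot_zero_succ, lt_succAbove_iff_val_le]

theorem avoids312_insertDot_col_zero {z : Fin (n + 2)} {σ : Perm (Fin (n + 1))}
    (h : (z : ℕ) ≤ σ 0) : Avoids312 B (insertDot 0 z σ) ↔ Avoids312 (deleteRow z B) σ := by
  have hshape : ∀ c d : Fin (n + 1), (c : ℕ) + 1 < B (z.succAbove d) ↔ (c : ℕ) < deleteRow z B d :=
    fun c d => val_succAbove_lt_row_iff (k := 0) (.inl rfl) c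
  have hpos : ∀ b c : Fin (n + 1), σ b < σ c → (σ c : ℕ) < z → 0 < b := fun b c hbc hc =>
    Fin.pos_iff_ne_zero.2 fun hb => by subst hb; lia
  simp only [Avoids312, Fin.forall_fin_succ (n := n + 1), insertDot_self, insertDot_zero_succ,
    Fin.succ_lt_succ_iff, Fin.succAbove_lt_succAbove_iff, Fin.val_succ, hshape,
    succAbove_lt_iff_val_lt, Fin.succ_pos, Fin.not_lt_zero, lt_irrefl]
  grind

theorem avoids321_insertDot_col_zero {z : Fin (n + 2)} {σ : Perm (Fin (n + 1))}
    (h : (z : ℕ) ≤ σ 0) : Avoids321 (insertDot 0 z σ) ↔ Avoids321 σ := by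
  have hpos : ∀ b : Fin (n + 1), (σ b : ℕ) < z → 0 < b := fun b hb =>
    Fin.pos_iff_ne_zero.2 fun h0 => by subst h0; lia
  simp only [Avoids321, Fin.forall_fin_succ (n := n + 1), insertDot_self, insertDot_zero_succ,
    Fin.succ_lt_succ_iff, Fin.succAbove_lt_succAbove_iff,
    succAbove_lt_iff_val_lt, Fin.succ_pos, Fin.not_lt_zero, lt_irrefl]
  grind

theorem ncard_first_ge_eq_sum_add_ncard_descent {P : Perm (Fin (n + 2)) → Prop}
    {P' : Fin (n + 2) → Perm (Fin (n + 1)) → Prop}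
    (h : ∀ (z : Fin (n + 2)) (σ : Perm (Fin (n + 1))),
      (z : ℕ) ≤ σ 0 → (P (insertDot 0 z σ) ↔ P' z σ)) (y : ℕ) :
    {π | P π ∧ y ≤ (π 0 : ℕ)}.ncard =
      ∑ z ∈ ({z | y ≤ (z : ℕ)} : Finset (Fin (n + 2))), {σ | P' z σ ∧ (z : ℕ) ≤ σ 0}.ncard +
        {π | P π ∧ y ≤ (π 0 : ℕ) ∧ π 1 < π 0}.ncard := by
  rw [← ncard_setOf_and_add_ncard_setOf_and_not _ fun π : Perm (Fin (n + 2)) => π 0 < π 1,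
    ncard_eq_sum_insertDot_col_zero, Finset.sum_filter]
  congr 1
  · refine Finset.sum_congr rfl fun z _ => ?_
    simp only [insertDot_self, lt_insertDot_zero_apply_one]
    split_ifs with hz
    · congr 1
      ext σ
      simp only [Set.mem_ofPred_eq, hz, and_true]
      exact and_congr_left (h z σ)
    · simp [hz]
  · congr 1
    ext π
    have hne : π 0 ≠ π 1 := π.injective.ne (by simp)
    simp only [Set.mem_ofPred_eq, not_lt, and_assoc, hne.symm.le_iff_lt]

theorem fitsIn_insertDot_zero_col_zero (hB : Monotone B) (h0 : 0 < B 0) {z : Fin (n + 1)}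
    {σ : Perm (Fin n)} : FitsIn B (insertDot 0 z σ) ↔ FitsIn (deleteRow z B) σ := by
  rw [fitsIn_insertDot_col_zero, and_iff_right (h0.trans_le (hB (Nat.zero_le _)))]

theorem count312_succ (hB : Monotone B) (h0 : 0 < B 0) (y : ℕ) : count312 (n + 1) B y =
    ∑ z ∈ ({z | y ≤ (z : ℕ)} : Finset (Fin (n + 2))), count312 n (deleteRow z B) z +
      descentCount312 n B y :=
  ncard_first_ge_eq_sum_add_ncard_descent (fun z σ hz => by
    rw [fitsIn_insertDot_zero_col_zero hB h0, avoids312_insertDot_col_zero hz]) y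

theorem count321_succ (hB : Monotone B) (h0 : 0 < B 0) (y : ℕ) : count321 (n + 1) B y =
    ∑ z ∈ ({z | y ≤ (z : ℕ)} : Finset (Fin (n + 2))), count321 n (deleteRow z B) z +
      descentCount321 n B y :=
  ncard_first_ge_eq_sum_add_ncard_descent (fun z σ hz => by
    rw [fitsIn_insertDot_zero_col_zero hB h0, avoids321_insertDot_col_zero hz]) y

theorem FitsIn.symm_zero_lt {π : Perm (Fin (n + 1))} (h : FitsIn B π) :
    (π.symm 0 : ℕ) < B 0 := by
  simpa using h (π.symm 0)

theorem count321_of_eq_zero (h : B 0 = 0) (y : ℕ) : count321 n B y = 0 := by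
  rw [count321, Set.ncard_eq_zero]
  exact Set.eq_empty_of_forall_notMem fun π hπ => by
    have := hπ.1.1.symm_zero_lt
    lia

theorem count312_of_eq_zero (h : B 0 = 0) (y : ℕ) : count312 n B y = 0 := by
  rw [count312, Set.ncard_eq_zero]
  exact Set.eq_empty_of_forall_notMem fun π hπ => by
    have := hπ.1.1.symm_zero_lt
    lia

theorem two_le_of_descent {π : Perm (Fin (n + 2))} (h : FitsIn B π) (hdesc : π 1 < π 0) :
    2 ≤ B 0 := by
  have hne : π.symm 0 ≠ 0 := fun e => by
    rw [symm_apply_eq] at e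
    exact Fin.not_lt_zero _ (e.symm ▸ hdesc)
  have := h.symm_zero_lt
  have := Fin.val_ne_zero_iff.2 hne
  lia

theorem descentCount321_of_lt_two (h : B 0 < 2) (y : ℕ) : descentCount321 n B y = 0 := by
  rw [descentCount321, Set.ncard_eq_zero]
  exact Set.eq_empty_of_forall_notMem fun π hπ => h.not_ge (two_le_of_descent hπ.1.1 hπ.2.2)

theorem descentCount312_of_lt_two (h : B 0 < 2) (y : ℕ) : descentCount312 n B y = 0 := by
  rw [descentCount312, Set.ncard_eq_zero]
  exact Set.eq_empty_of_forall_notMem fun π hπ => h.not_ge (two_le_of_descent hπ.1.1 hπ.2.2)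

theorem count312_zero (B : ℕ → ℕ) (y : ℕ) : count312 0 B y = count321 0 B y := by
  have h (i j : Fin (0 + 1)) : ¬ i < j := by lia
  simp only [count312, count321, Avoids312, Avoids321, h, false_imp_iff, forall_const]

theorem insertDot_one_zero_apply_zero {σ : Perm (Fin (n + 1))} :
    (insertDot (1 : Fin (n + 2)) 0 σ 0 : ℕ) = σ 0 + 1 := by
  have h := insertDot_succAbove 1 0 σ 0
  rw [Fin.one_succAbove_zero, Fin.zero_succAbove] at h
  rw [h, Fin.val_succ]

theorem Avoids321.apply_one_eq_zero {π : Perm (Fin (n + 2))} (h : Avoids321 π)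
    (hdesc : π 1 < π 0) : π 1 = 0 := by
  by_contra hne
  obtain ⟨c, hc⟩ := π.surjective 0
  have hc0 : c ≠ 0 := by rintro rfl; simp [hc] at hdesc
  have hc1 : c ≠ 1 := by rintro rfl; exact hne hc
  refine h 0 1 c (by simp) ?_ (hc ▸ Fin.pos_iff_ne_zero.2 hne) hdesc
  simp only [Fin.lt_def, Fin.ext_iff, ne_eq, Fin.val_zero, Fin.val_one] at hc0 hc1 ⊢
  lia

theorem apply_one_lt_apply_zero_of_eq_zero {π : Perm (Fin (n + 2))} (h : π 1 = 0) :
    π 1 < π 0 := by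
  rw [h, Fin.pos_iff_ne_zero]
  exact fun e => absurd (π.injective (e.trans h.symm)) (by simp)

theorem descentCount321_eq (hB : Monotone B) (h0 : 2 ≤ B 0) (y : ℕ) :
    descentCount321 n B y = count321 n (deleteRow 0 B) (y - 1) := by
  have hdesc : ∀ π : Perm (Fin (n + 2)),
      ((FitsIn B π ∧ Avoids321 π) ∧ y ≤ (π 0 : ℕ) ∧ π 1 < π 0) ↔
        ((FitsIn B π ∧ Avoids321 π) ∧ y ≤ (π 0 : ℕ)) ∧ π 1 = 0 := fun π => by
    rw [← and_assoc]
    exact and_congr_right fun h => ⟨h.1.2.apply_one_eq_zero, apply_one_lt_apply_zero_of_eq_zero⟩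
  have hinc : ∀ σ : Perm (Fin (n + 1)), IncreasingUpTo 1 σ := fun σ i j hij hj => by lia
  simp only [descentCount321, hdesc, ncard_setOf_apply_eq, fitsIn_insertDot_row_zero hB,
    avoids321_insertDot, insertDot_one_zero_apply_zero, Fin.val_one, hinc, and_true, true_and,
    count321, show 1 < B 0 from h0, tsub_le_iff_right]

end FirstEntry

section CyclicShift

variable {α : Type*} [LinearOrder α] {T : Finset α} {a s t : α}

/-- The cyclic shift of a finite set `T`: it sends every element of `T` to its predecessor in `T`,
the least one to the greatest, and fixes all elements outside `T`. -/
noncomputable def cyclicShift (T : Finset α) : Perm α :=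
  Perm.extendDomain (finRotate T.card).symm (T.orderIsoOfFin rfl).toEquiv

theorem cyclicShift_of_notMem (h : t ∉ T) : cyclicShift T t = t :=
  Perm.extendDomain_apply_not_subtype _ _ h

theorem cyclicShift_orderIsoOfFin (i : Fin T.card) :
    cyclicShift T (T.orderIsoOfFin rfl i) = T.orderIsoOfFin rfl ((finRotate T.card).symm i) :=
  Perm.extendDomain_apply_image _ (T.orderIsoOfFin rfl).toEquiv i

theorem exists_orderIsoOfFin_eq (h : t ∈ T) : ∃ i, (T.orderIsoOfFin rfl i : α) = t :=
  ((T.orderIsoOfFin rfl).surjective ⟨t, h⟩).imp fun _ => congrArg Subtype.val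

theorem cyclicShift_mem_iff : cyclicShift T t ∈ T ↔ t ∈ T := by
  refine ⟨fun h => ?_, fun h => ?_⟩
  · by_contra ht
    exact ht (cyclicShift_of_notMem ht ▸ h)
  · obtain ⟨i, rfl⟩ := exists_orderIsoOfFin_eq h
    rw [cyclicShift_orderIsoOfFin]
    exact Subtype.coe_prop _

theorem val_finRotate_symm {k : ℕ} (i : Fin k) :
    ((finRotate k).symm i : ℕ) = if (i : ℕ) = 0 then k - 1 else i - 1 := by
  obtain ⟨j, rfl⟩ := (finRotate k).surjective i
  cases k with
  | zero => exact j.elim0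
  | succ k =>
    rw [symm_apply_apply, coe_finRotate]
    split_ifs with h <;> simp_all

theorem le_cyclicShift_of_forall_le (ha : a ∈ T) (hmin : ∀ s ∈ T, a ≤ s) (ht : t ∈ T) :
    t ≤ cyclicShift T a := by
  obtain ⟨i, rfl⟩ := exists_orderIsoOfFin_eq ha
  obtain ⟨j, rfl⟩ := exists_orderIsoOfFin_eq ht
  have h0 : (i : ℕ) = 0 := by
    have : i ≤ ⟨0, i.pos⟩ := (T.orderIsoOfFin rfl).le_iff_le.1 (hmin _ (Subtype.coe_prop _))
    exact Nat.le_zero.1 this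
  rw [cyclicShift_orderIsoOfFin,
    Subtype.coe_le_coe, OrderIso.le_iff_le, Fin.le_def, val_finRotate_symm, if_pos h0]
  lia

theorem le_cyclicShift_lt (hs : s ∈ T) (ht : t ∈ T) (hst : s < t) :
    s ≤ cyclicShift T t ∧ cyclicShift T t < t := by
  obtain ⟨i, rfl⟩ := exists_orderIsoOfFin_eq hs
  obtain ⟨j, rfl⟩ := exists_orderIsoOfFin_eq ht
  rw [Subtype.coe_lt_coe, OrderIso.lt_iff_lt, Fin.lt_def] at hst
  rw [cyclicShift_orderIsoOfFin, Subtype.coe_le_coe, Subtype.coe_lt_coe, OrderIso.le_iff_le,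
    OrderIso.lt_iff_lt, Fin.le_def, Fin.lt_def, val_finRotate_symm, if_neg (by lia)]
  lia

end CyclicShift

section ShiftLow

variable {n m : ℕ} {π : Perm (Fin (n + 1))} {c t : Fin (n + 1)}

/-- The values below the first entry of `π` that occur in its first `m` columns. -/
def lowValues (m : ℕ) (π : Perm (Fin (n + 1))) : Finset (Fin (n + 1)) :=
  {t | t < π 0 ∧ (π.symm t : ℕ) < m}

theorem mem_lowValues : t ∈ lowValues m π ↔ t < π 0 ∧ (π.symm t : ℕ) < m := by
  simp [lowValues]

theorem apply_mem_lowValues : π c ∈ lowValues m π ↔ π c < π 0 ∧ (c : ℕ) < m := by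
  simp [lowValues]

theorem lowValues_mul {C : Perm (Fin (n + 1))} (hfix : ∀ t ∉ lowValues m π, C t = t)
    (hmem : ∀ t, C t ∈ lowValues m π ↔ t ∈ lowValues m π) :
    lowValues m (C * π) = lowValues m π := by
  have h0 : C (π 0) = π 0 := hfix _ (by simp [lowValues])
  ext t
  obtain ⟨c, rfl⟩ := (C * π).surjective t
  rw [apply_mem_lowValues, Perm.mul_apply, Perm.mul_apply, h0, hmem, apply_mem_lowValues]
  refine and_congr_left fun hc => ⟨fun h => ?_, fun h => ?_⟩
  · by_contra hlt
    rw [hfix _ fun hmem => hlt (apply_mem_lowValues.1 hmem).1] at h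
    exact hlt h
  · exact (mem_lowValues.1 ((hmem _).2 (apply_mem_lowValues.2 ⟨h, hc⟩))).1

theorem lowValues_cyclicShift_mul :
    lowValues m (cyclicShift (lowValues m π) * π) = lowValues m π :=
  lowValues_mul (fun _ => cyclicShift_of_notMem) fun _ => cyclicShift_mem_iff

theorem lowValues_cyclicShift_inv_mul :
    lowValues m ((cyclicShift (lowValues m π))⁻¹ * π) = lowValues m π :=
  lowValues_mul (fun _ ht => Perm.inv_eq_iff_eq.2 (cyclicShift_of_notMem ht).symm) fun t => by
    rw [← cyclicShift_mem_iff, ← Perm.mul_apply, mul_inv_cancel, Perm.one_apply]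

/-- The bijection of permutations that cyclically shifts the low values. -/
noncomputable def shiftLow (m : ℕ) : Perm (Fin (n + 1)) ≃ Perm (Fin (n + 1)) where
  toFun π := cyclicShift (lowValues m π) * π
  invFun π := (cyclicShift (lowValues m π))⁻¹ * π
  left_inv π := by simp only [lowValues_cyclicShift_mul, inv_mul_cancel_left]
  right_inv π := by simp only [lowValues_cyclicShift_inv_mul, mul_inv_cancel_left]

theorem lowValues_shiftLow : lowValues m (shiftLow m π) = lowValues m π :=
  lowValues_cyclicShift_mul

theorem shiftLow_apply : shiftLow m π c = cyclicShift (lowValues m π) (π c) := rfl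

theorem shiftLow_apply_of_notMem (h : π c ∉ lowValues m π) : shiftLow m π c = π c :=
  cyclicShift_of_notMem h

@[simp] theorem shiftLow_apply_zero : shiftLow m π 0 = π 0 :=
  shiftLow_apply_of_notMem (by simp [lowValues])

theorem shiftLow_apply_mem : shiftLow m π c ∈ lowValues m π ↔ π c ∈ lowValues m π :=
  cyclicShift_mem_iff

theorem fitsIn_shiftLow {B : ℕ → ℕ} (hB : Monotone B) :
    FitsIn B (shiftLow (B 0) π) ↔ FitsIn B π := by
  refine forall_congr' fun c => ?_
  by_cases hc : π c ∈ lowValues (B 0) π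
  · have hcB : (c : ℕ) < B 0 := (apply_mem_lowValues.1 hc).2
    exact iff_of_true (hcB.trans_le (hB (Nat.zero_le _))) (hcB.trans_le (hB (Nat.zero_le _)))
  · rw [shiftLow_apply_of_notMem hc]

end ShiftLow

section ShiftLow312

variable {n m : ℕ} {B : ℕ → ℕ} {τ : Perm (Fin (n + 2))} {c i j k s t : Fin (n + 2)}

/-- Avoidance of `312` in the diagram `B` by the dots outside column `1`. -/
def Avoids312Off (B : ℕ → ℕ) (π : Perm (Fin (n + 2))) : Prop :=
  ∀ i j k, i ≠ 1 → j ≠ 1 → k ≠ 1 → i < j → j < k → π j < π k → π k < π i → ¬ (k : ℕ) < B (π j)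

theorem zero_mem_lowValues (hm : 2 ≤ m) (h1 : τ 1 = 0) : 0 ∈ lowValues m τ := by
  rw [← h1, apply_mem_lowValues]
  exact ⟨apply_one_lt_apply_zero_of_eq_zero h1, hm⟩

theorem le_shiftLow_apply_one (hm : 2 ≤ m) (h1 : τ 1 = 0) (ht : t ∈ lowValues m τ) :
    t ≤ shiftLow m τ 1 := by
  rw [shiftLow_apply, h1]
  exact le_cyclicShift_of_forall_le (zero_mem_lowValues hm h1) (fun s _ => Fin.zero_le s) ht

theorem shiftLow_apply_one_mem (hm : 2 ≤ m) (h1 : τ 1 = 0) :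
    shiftLow m τ 1 ∈ lowValues m τ := by
  rw [shiftLow_apply_mem, h1]
  exact zero_mem_lowValues hm h1

theorem shiftLow_apply_lt (hm : 2 ≤ m) (h1 : τ 1 = 0) (hc : c ≠ 1)
    (hcT : τ c ∈ lowValues m τ) : shiftLow m τ c < τ c :=
  (le_cyclicShift_lt (zero_mem_lowValues hm h1) hcT
    (Fin.pos_iff_ne_zero.2 fun e => hc (τ.injective (e.trans h1.symm)))).2

theorem le_shiftLow_apply (hs : s ∈ lowValues m τ) (hsc : s < τ c) : s ≤ shiftLow m τ c := by
  by_cases hc : τ c ∈ lowValues m τ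
  · exact (le_cyclicShift_lt hs hc hsc).1
  · exact hsc.le.trans_eq (shiftLow_apply_of_notMem hc).symm

theorem shiftLow_apply_of_lt (h : τ 0 < τ c) : shiftLow m τ c = τ c :=
  shiftLow_apply_of_notMem fun hc => lt_asymm h (apply_mem_lowValues.1 hc).1

theorem le_of_notMem_lowValues (hc : τ c ∉ lowValues m τ) (h : τ c < τ 0) : m ≤ c := by
  by_contra! hcm
  exact hc (apply_mem_lowValues.2 ⟨h, hcm⟩)

/-- A pattern below the first entry survives the inverse shift, except that the dot of its least
entry may have to be replaced by the dot of the same height. -/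
theorem Avoids312Off.shiftLow_of_lt (hB : Monotone B) (h2 : 2 ≤ B 0) (h1 : τ 1 = 0)
    (ha : Avoids312Off B τ) (hj0 : 0 < j) (hjk : j < k)
    (hlt : shiftLow (B 0) τ j < shiftLow (B 0) τ k) (hk0 : shiftLow (B 0) τ k < τ 0) :
    ¬ (k : ℕ) < B (shiftLow (B 0) τ j) := by
  intro hkB
  have hk1 : k ≠ 1 := by
    rintro rfl
    exact hj0.ne' ((Fin.lt_one_iff j).1 hjk)
  have hB0 : ∀ i, B 0 ≤ B i := fun i => hB (Nat.zero_le i)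
  have hoff : ∀ j, j ≠ 0 → j ≠ 1 → j < k → τ j < τ k → τ k < τ 0 → ¬ (k : ℕ) < B (τ j) :=
    fun j hj0 hj1 hjk => ha 0 j k (by simp) hj1 hk1 (Fin.pos_iff_ne_zero.2 hj0) hjk
  by_cases hkT : τ k ∈ lowValues (B 0) τ
  · have hkm := (apply_mem_lowValues.1 hkT).2
    have hjT : τ j ∈ lowValues (B 0) τ := by
      by_contra hjT
      have := le_of_notMem_lowValues hjT (by rw [← shiftLow_apply_of_notMem hjT]; order)
      lia
    have hj1 : j ≠ 1 := by
      rintro rfl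
      exact hlt.not_ge (le_shiftLow_apply_one h2 h1 (shiftLow_apply_mem.2 hkT))
    have hlt' : τ j < τ k := by
      refine lt_of_le_of_ne (not_lt.1 fun hgt => ?_) (τ.injective.ne hjk.ne)
      have := le_shiftLow_apply hkT hgt
      have := shiftLow_apply_lt h2 h1 hk1 hkT
      order
    exact hoff j hj0.ne' hj1 hjk hlt' (apply_mem_lowValues.1 hkT).1 (hkm.trans_le (hB0 _))
  · rw [shiftLow_apply_of_notMem hkT] at hlt hk0
    have hkm := le_of_notMem_lowValues hkT hk0
    by_cases hjT : τ j ∈ lowValues (B 0) τ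
    · obtain ⟨c, hc⟩ := τ.surjective (shiftLow (B 0) τ j)
      have hcT := apply_mem_lowValues.1 (hc ▸ shiftLow_apply_mem.2 hjT)
      rw [← hc] at hlt hkB
      have hc1 : c ≠ 1 := by
        rintro rfl
        rw [h1, Fin.val_zero] at hkB
        lia
      have hc0 : c ≠ 0 := by rintro rfl; exact lt_irrefl _ hcT.1
      exact hoff c hc0 hc1 (by lia) hlt hk0 hkB
    · rw [shiftLow_apply_of_notMem hjT] at hlt hkB
      have hj1 : j ≠ 1 := by
        rintro rfl
        exact hjT (h1 ▸ zero_mem_lowValues h2 h1)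
      exact hoff j hj0.ne' hj1 hjk hlt hk0 hkB

theorem Avoids312Off.shiftLow_of_gt (hB : Monotone B) (h2 : 2 ≤ B 0) (h1 : τ 1 = 0)
    (ha : Avoids312Off B τ) (hij : i < j) (hjk : j < k)
    (hlt : shiftLow (B 0) τ j < shiftLow (B 0) τ k)
    (hki : shiftLow (B 0) τ k < shiftLow (B 0) τ i) (hk0 : τ 0 < shiftLow (B 0) τ k) :
    ¬ (k : ℕ) < B (shiftLow (B 0) τ j) := by
  have hfix : ∀ c, τ 0 < shiftLow (B 0) τ c → shiftLow (B 0) τ c = τ c := fun c hc =>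
    shiftLow_apply_of_notMem fun hcT =>
      lt_asymm hc (mem_lowValues.1 (shiftLow_apply_mem.2 hcT)).1
  have h10 := (mem_lowValues.1 (shiftLow_apply_one_mem h2 h1)).1
  have hk1 : k ≠ 1 := by
    rintro rfl
    exact (Fin.not_lt_zero i) (((Fin.lt_one_iff j).1 hjk) ▸ hij)
  have hi1 : i ≠ 1 := by rintro rfl; order
  have hi0 : i ≠ 0 := by rintro rfl; rw [shiftLow_apply_zero] at hki; order
  have hj1 : j ≠ 1 := by rintro rfl; exact hi0 ((Fin.lt_one_iff i).1 hij)
  rw [hfix k hk0] at hlt hki hk0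
  rw [hfix i (hk0.trans hki)] at hki
  intro hkB
  by_cases hjT : τ j ∈ lowValues (B 0) τ
  · refine ha i j k hi1 hj1 hk1 hij hjk ((mem_lowValues.1 hjT).1.trans hk0) hki ?_
    exact hkB.trans_le (hB (Fin.le_def.1 (shiftLow_apply_lt h2 h1 hj1 hjT).le))
  · rw [shiftLow_apply_of_notMem hjT] at hlt hkB
    exact ha i j k hi1 hj1 hk1 hij hjk hlt hki hkB

theorem Avoids312Off.shiftLow (hB : Monotone B) (h2 : 2 ≤ B 0) (h1 : τ 1 = 0)
    (ha : Avoids312Off B τ) : Avoids312 B (shiftLow (B 0) τ) := by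
  intro i j k hij hjk hlt hki
  have hk0 : ShapeWilf.shiftLow (B 0) τ k ≠ τ 0 := by
    rw [← shiftLow_apply_zero (m := B 0)]
    exact (Equiv.injective _).ne (Fin.ne_zero_of_lt hjk)
  rcases lt_or_gt_of_ne hk0 with hk0 | hk0
  · exact ha.shiftLow_of_lt hB h2 h1 ((Fin.zero_le i).trans_lt hij) hjk hlt hk0
  · exact ha.shiftLow_of_gt hB h2 h1 hij hjk hlt hki hk0

theorem apply_one_eq_zero_of_shiftLow (hB : Monotone B) (h2 : 2 ≤ B 0) (ht : FitsIn B τ)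
    (ha : Avoids312 B (shiftLow (B 0) τ)) (hd : shiftLow (B 0) τ 1 < shiftLow (B 0) τ 0) :
    τ 1 = 0 := by
  rw [shiftLow_apply_zero] at hd
  have hmem (c) : shiftLow (B 0) τ c ∈ lowValues (B 0) τ ↔
      shiftLow (B 0) τ c < τ 0 ∧ (c : ℕ) < B 0 := by
    rw [← lowValues_shiftLow, apply_mem_lowValues, shiftLow_apply_zero]
  have h0T : 0 ∈ lowValues (B 0) τ :=
    mem_lowValues.2 ⟨(Fin.zero_le _).trans_lt hd, ht.symm_zero_lt⟩
  have htop : ∀ t ∈ lowValues (B 0) τ, t ≤ shiftLow (B 0) τ 1 := fun t htT => by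
    by_contra! hlt
    obtain ⟨c, rfl⟩ := (shiftLow (B 0) τ).surjective t
    have hc := (hmem c).1 htT
    have hc0 : c ≠ 0 := by rintro rfl; rw [shiftLow_apply_zero] at hc; exact lt_irrefl _ hc.1
    have hc1 : c ≠ 1 := by rintro rfl; exact lt_irrefl _ hlt
    refine ha 0 1 c (by simp) (lt_of_le_of_ne (Fin.one_le_of_ne_zero hc0) hc1.symm) hlt
      (hc.1.trans_eq shiftLow_apply_zero.symm) ?_
    exact hc.2.trans_le (hB (Nat.zero_le _))
  have h1T : shiftLow (B 0) τ 1 ∈ lowValues (B 0) τ := (hmem 1).2 ⟨hd, h2⟩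
  refine (cyclicShift (lowValues (B 0) τ)).injective (le_antisymm ?_ ?_)
  · exact le_cyclicShift_of_forall_le h0T (fun s _ => Fin.zero_le s) h1T
  · exact htop _ (cyclicShift_mem_iff.2 h0T)

theorem exists_le_lt_succ {a b x : ℕ} (ha : B a ≤ x) (hb : x < B b) (hab : a ≤ b) :
    ∃ r, a ≤ r ∧ r < b ∧ B r ≤ x ∧ x < B (r + 1) := by
  set r := Nat.findGreatest (fun r => B r ≤ x) b
  have hr : B r ≤ x := Nat.findGreatest_spec (P := fun r => B r ≤ x) hab ha
  have hrb : r < b := lt_of_le_of_ne (Nat.findGreatest_le b) fun e => hb.not_ge (e ▸ hr)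
  exact ⟨r, Nat.le_findGreatest hab ha, hrb, hr,
    not_le.1
      (Nat.findGreatest_is_greatest (P := fun r => B r ≤ x) (Nat.lt_succ_self r) hrb)⟩

theorem FitsIn.card_add_le {N r : ℕ} {π : Perm (Fin N)} (hB : Monotone B) (hπ : FitsIn B π)
    (hr : r < N) {D : Finset (Fin N)} (hD : ∀ c ∈ D, (c : ℕ) < B r ∧ r < π c) :
    D.card + (r + 1) ≤ B r := by
  set S := (Finset.Iic (⟨r, hr⟩ : Fin N)).map π.symm.toEmbedding
  have hS : ∀ c, c ∈ S ↔ (π c : ℕ) ≤ r := by simp [S, Fin.le_def]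
  have hdisj : Disjoint D S :=
    Finset.disjoint_left.2 fun c hc hcS => (hD c hc).2.not_ge ((hS c).1 hcS)
  have hmaps : Set.MapsTo (fun c : Fin N => (c : ℕ)) (D ∪ S : Finset (Fin N))
      (Finset.range (B r)) := fun c hc => by
    rw [Finset.mem_coe, Finset.mem_union, hS] at hc
    rw [Finset.mem_coe, Finset.mem_range]
    exact hc.elim (fun h => (hD c h).1) fun h => (hπ c).trans_le (hB h)
  have hcard := Finset.card_le_card_of_injOn _ hmaps Fin.val_injective.injOn
  rwa [Finset.card_union_of_disjoint hdisj, Finset.card_map, Fin.card_Iic, Finset.card_range]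
    at hcard

theorem FitsIn.apply_le_of_row_le (hB : Monotone B) (hτ : FitsIn B τ) {r : ℕ} (hr : r < n + 2)
    (hBr : B r ≤ r + 3) (h2 : 2 ≤ B r) (h0 : r < τ 0) (h1 : r < τ 1) (hc : (c : ℕ) < B r)
    (hc0 : c ≠ 0) (hc1 : c ≠ 1) : (τ c : ℕ) ≤ r := by
  by_contra! hrc
  have hcard : ({0, 1, c} : Finset (Fin (n + 2))).card = 3 :=
    Finset.card_eq_three.2 ⟨0, 1, c, by simp, hc0.symm, hc1.symm, rfl⟩
  have := hτ.card_add_le (D := {0, 1, c}) hB hr <| by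
    simp only [Finset.forall_mem_insert, Finset.mem_singleton, forall_eq, Fin.val_zero,
      Fin.val_one]
    lia
  lia

theorem Avoids312.not_lt_of_shiftLow_lt (ha : Avoids312 B (ShapeWilf.shiftLow m τ)) (hij : i < j)
    (hjk : j < k) (hki : τ k < τ i) (hlt : ShapeWilf.shiftLow m τ j < ShapeWilf.shiftLow m τ k) :
    ¬ (k : ℕ) < B (ShapeWilf.shiftLow m τ j) := by
  have hj0 : 0 < j := (Fin.zero_le i).trans_lt hij
  rcases lt_trichotomy (ShapeWilf.shiftLow m τ k) (τ 0) with hk | hk | hk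
  · exact ha 0 j k hj0 hjk hlt (hk.trans_eq shiftLow_apply_zero.symm)
  · rw [← shiftLow_apply_zero (m := m)] at hk
    exact absurd ((ShapeWilf.shiftLow m τ).injective hk) (hj0.trans hjk).ne'
  · have hkT : τ k ∉ lowValues m τ := fun h =>
      lt_asymm hk (mem_lowValues.1 (shiftLow_apply_mem.2 h)).1
    refine ha i j k hij hjk hlt ?_
    rw [shiftLow_apply_of_notMem hkT] at hk ⊢
    rwa [shiftLow_apply_of_lt (hk.trans hki)]

/-- A pattern of `τ` whose least entry is a low value can only disappear under the shift if a row
between the new and the old height of this entry ends before column `k`. Without critical points of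
index `3` this row is so short that only columns `0` and `1` carry dots above it. -/
theorem not_pattern_of_avoids312_shiftLow (hB : Monotone B) (h2 : 2 ≤ B 0)
    (hcrit : ¬ HasCriticalPoint 3 (n + 2) B) (hfit : FitsIn B (shiftLow (B 0) τ))
    (ha : Avoids312 B (shiftLow (B 0) τ)) (h1 : τ 1 = 0) (hi1 : i ≠ 1) (hj1 : j ≠ 1) (hij : i < j)
    (hjk : j < k) (hlt : τ j < τ k) (hki : τ k < τ i) (hjT : τ j ∈ lowValues (B 0) τ) :
    ¬ (k : ℕ) < B (τ j) := by
  intro hkB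
  have hjB := (apply_mem_lowValues.1 hjT).2
  have hj0 : 0 < j := (Fin.zero_le i).trans_lt hij
  have hπj : shiftLow (B 0) τ j < τ j := shiftLow_apply_lt h2 h1 hj1 hjT
  have hkB' : B (shiftLow (B 0) τ j) ≤ k := not_lt.1 <|
    ha.not_lt_of_shiftLow_lt hij hjk hki (hπj.trans_le (le_shiftLow_apply hjT hlt))
  have hkT : τ k ∉ lowValues (B 0) τ := fun h =>
    ((apply_mem_lowValues.1 h).2.trans_le (hB (Nat.zero_le _))).not_ge hkB'
  obtain ⟨r, -, hrj, hrk, hkr⟩ := exists_le_lt_succ hkB' hkB (Fin.le_def.1 hπj.le)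
  have hBr : B r ≤ r + 3 := by
    by_contra! h
    exact hcrit ⟨r, by lia, hrk.trans_lt hkr, by lia⟩
  have hB0r : B 0 ≤ B r := hB (Nat.zero_le r)
  have hj_le : τ j ≤ shiftLow (B 0) τ 1 := le_shiftLow_apply_one h2 h1 hjT
  have hmax : ∀ c : Fin (n + 2), (c : ℕ) < B 0 → c ≠ 0 → c ≠ 1 → τ c ≤ τ j := fun c hc hc0 hc1 => by
    by_contra! h
    have hle : τ j ≤ shiftLow (B 0) τ c := le_shiftLow_apply hjT h
    refine (hrj.trans_le (Fin.le_def.1 hle)).not_ge <|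
      hfit.apply_le_of_row_le hB (by lia) hBr (h2.trans hB0r) ?_ (hrj.trans_le hj_le)
        (hc.trans_le hB0r) hc0 hc1
    rw [shiftLow_apply_zero]
    exact hrj.trans (apply_mem_lowValues.1 hjT).1
  have hi0 : i = 0 := by
    by_contra hi0
    exact ((hlt.trans hki).trans_le (hmax i (by lia) hi0 hi1)).false
  have h1_le : shiftLow (B 0) τ 1 ≤ τ j := by
    obtain ⟨z, hz⟩ := τ.surjective (shiftLow (B 0) τ 1)
    obtain ⟨hz0, hzB⟩ := apply_mem_lowValues.1 (hz ▸ shiftLow_apply_one_mem h2 h1)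
    rw [← hz]
    rcases eq_or_ne z 1 with rfl | hz1
    · exact h1 ▸ Fin.zero_le _
    · exact hmax z hzB (fun e => lt_irrefl _ (e ▸ hz0)) hz1
  have h1k : (1 : Fin (n + 2)) < k := (Fin.one_le_of_ne_zero hj0.ne').trans_lt hjk
  refine ha 0 1 k (by simp) h1k ?_ ?_ (hkB.trans_le (hB hj_le))
  · rw [shiftLow_apply_of_notMem hkT]
    exact h1_le.trans_lt hlt
  · rw [shiftLow_apply_of_notMem hkT, shiftLow_apply_zero]
    exact hi0 ▸ hki

theorem avoids312Off_of_avoids312_shiftLow (hB : Monotone B) (h2 : 2 ≤ B 0)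
    (hcrit : ¬ HasCriticalPoint 3 (n + 2) B) (hfit : FitsIn B (shiftLow (B 0) τ))
    (ha : Avoids312 B (shiftLow (B 0) τ)) (h1 : τ 1 = 0) : Avoids312Off B τ := by
  intro i j k hi1 hj1 _ hij hjk hlt hki
  by_cases hjT : τ j ∈ lowValues (B 0) τ
  · exact not_pattern_of_avoids312_shiftLow hB h2 hcrit hfit ha h1 hi1 hj1 hij hjk hlt hki hjT
  · have hkT : τ k ∉ lowValues (B 0) τ := fun h => hjT <| by
      rw [apply_mem_lowValues] at h ⊢
      exact ⟨hlt.trans h.1, (Fin.lt_def.1 hjk).trans h.2⟩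
    have hnot := ha.not_lt_of_shiftLow_lt hij hjk hki
    rw [shiftLow_apply_of_notMem hjT, shiftLow_apply_of_notMem hkT] at hnot
    exact hnot hlt

theorem avoids312Off_insertDot (hB : Monotone B) (h2 : 2 ≤ B 0) {σ : Perm (Fin (n + 1))} :
    Avoids312Off B (insertDot 1 0 σ) ↔ Avoids312 (deleteRow 0 B) σ := by
  have hshape : ∀ c d : Fin (n + 1), (((1 : Fin (n + 2)).succAbove c : Fin (n + 2)) : ℕ) <
      B ((0 : Fin (n + 2)).succAbove d) ↔ (c : ℕ) < deleteRow 0 B d := fun c d =>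
    val_succAbove_lt_row_iff (.inr <| (Fin.val_one n).trans_lt (h2.trans (hB (Nat.zero_le _)))) c
  simp only [Avoids312Off, Avoids312, Fin.forall_iff_succAbove (1 : Fin (n + 2)), ne_eq,
    Fin.succAbove_ne, insertDot_succAbove, Fin.succAbove_lt_succAbove_iff, hshape,
    not_true_eq_false, not_false_eq_true, false_imp_iff, implies_true, forall_const, true_and]

theorem ncard_avoids312Off_eq_count312 (hB : Monotone B) (h2 : 2 ≤ B 0) (y : ℕ) :
    {τ : Perm (Fin (n + 2)) | ((FitsIn B τ ∧ Avoids312Off B τ) ∧ y ≤ τ 0) ∧ τ 1 = 0}.ncard =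
      count312 n (deleteRow 0 B) (y - 1) := by
  simp only [ncard_setOf_apply_eq, fitsIn_insertDot_row_zero hB, avoids312Off_insertDot hB h2,
    insertDot_one_zero_apply_zero, Fin.val_one, true_and,
    count312, show 1 < B 0 from h2, tsub_le_iff_right]

theorem descentCount312_eq_ncard_shiftLow (hB : Monotone B) (y : ℕ) : descentCount312 n B y =
    {τ : Perm (Fin (n + 2)) | ((FitsIn B τ ∧ Avoids312 B (shiftLow (B 0) τ)) ∧ y ≤ τ 0) ∧
      shiftLow (B 0) τ 1 < shiftLow (B 0) τ 0}.ncard := by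
  rw [descentCount312, eq_comm,
    ← Set.ncard_image_of_injective _ (shiftLow (n := n + 1) (B 0)).injective]
  congr 1
  ext π
  obtain ⟨τ, rfl⟩ := (shiftLow (B 0)).surjective π
  rw [(shiftLow (B 0)).injective.mem_set_image]
  simp only [Set.mem_ofPred_eq, fitsIn_shiftLow hB, shiftLow_apply_zero, and_assoc]

theorem avoids312Off_subset_avoids312_shiftLow (hB : Monotone B) (h2 : 2 ≤ B 0) (y : ℕ) :
    {τ : Perm (Fin (n + 2)) | ((FitsIn B τ ∧ Avoids312Off B τ) ∧ y ≤ τ 0) ∧ τ 1 = 0} ⊆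
      {τ | ((FitsIn B τ ∧ Avoids312 B (shiftLow (B 0) τ)) ∧ y ≤ τ 0) ∧
        shiftLow (B 0) τ 1 < shiftLow (B 0) τ 0} := by
  rintro τ ⟨⟨⟨hfit, ha⟩, hy⟩, h1⟩
  refine ⟨⟨⟨hfit, ha.shiftLow hB h2 h1⟩, hy⟩, ?_⟩
  rw [shiftLow_apply_zero]
  exact (mem_lowValues.1 (shiftLow_apply_one_mem h2 h1)).1

theorem count312_deleteRow_le_descentCount312 (hB : Monotone B) (h2 : 2 ≤ B 0) (y : ℕ) :
    count312 n (deleteRow 0 B) (y - 1) ≤ descentCount312 n B y := by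
  rw [descentCount312_eq_ncard_shiftLow hB, ← ncard_avoids312Off_eq_count312 hB h2]
  exact Set.ncard_le_ncard (avoids312Off_subset_avoids312_shiftLow hB h2 y) (Set.toFinite _)

theorem descentCount312_eq (hB : Monotone B) (h2 : 2 ≤ B 0)
    (hcrit : ¬ HasCriticalPoint 3 (n + 2) B) (y : ℕ) :
    descentCount312 n B y = count312 n (deleteRow 0 B) (y - 1) := by
  refine le_antisymm ?_ (count312_deleteRow_le_descentCount312 hB h2 y)
  rw [descentCount312_eq_ncard_shiftLow hB, ← ncard_avoids312Off_eq_count312 hB h2]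
  refine Set.ncard_le_ncard ?_ (Set.toFinite _)
  rintro τ ⟨⟨⟨hfit, ha⟩, hy⟩, hd⟩
  have h1 := apply_one_eq_zero_of_shiftLow hB h2 hfit ha hd
  have hoff := avoids312Off_of_avoids312_shiftLow hB h2 hcrit ((fitsIn_shiftLow hB).2 hfit) ha h1
  exact ⟨⟨⟨hfit, hoff⟩, hy⟩, h1⟩

end ShiftLow312

section Compare312

variable {n : ℕ} {B : ℕ → ℕ}

theorem descentCount321_le_descentCount312 (hB : Monotone B)
    (h : ∀ y, count321 n (deleteRow 0 B) y ≤ count312 n (deleteRow 0 B) y) (y : ℕ) :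
    descentCount321 n B y ≤ descentCount312 n B y := by
  rcases Nat.lt_or_ge (B 0) 2 with h2 | h2
  · exact (descentCount321_of_lt_two h2 y).trans_le (Nat.zero_le _)
  · exact (descentCount321_eq hB h2 y).trans_le <|
      (h _).trans (count312_deleteRow_le_descentCount312 hB h2 y)

theorem count321_le_count312 :
    ∀ (n : ℕ) {B : ℕ → ℕ}, Monotone B → ∀ y, count321 n B y ≤ count312 n B y
  | 0, B, _, y => (count312_zero B y).ge
  | n + 1, B, hB, y => by
    rcases Nat.eq_zero_or_pos (B 0) with h0 | h0
    · exact (count321_of_eq_zero h0 y).trans_le (Nat.zero_le _)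
    rw [count312_succ hB h0, count321_succ hB h0]
    exact Nat.add_le_add
      (Finset.sum_le_sum fun z _ => count321_le_count312 n (deleteRow_monotone hB z) z)
      (descentCount321_le_descentCount312 hB (count321_le_count312 n (deleteRow_monotone hB 0)) y)

theorem count312_eq_count321 : ∀ (n : ℕ) {B : ℕ → ℕ}, Monotone B →
    ¬ HasCriticalPoint 3 (n + 1) B → ∀ y, count312 n B y = count321 n B y
  | 0, B, _, _, y => count312_zero B y
  | n + 1, B, hB, hcrit, y => by
    have ih (z y) : count312 n (deleteRow z B) y = count321 n (deleteRow z B) y :=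
      count312_eq_count321 n (deleteRow_monotone hB z)
        (mt (HasCriticalPoint.of_deleteRow hB) hcrit) y
    rcases Nat.eq_zero_or_pos (B 0) with h0 | h0
    · rw [count312_of_eq_zero h0, count321_of_eq_zero h0]
    rw [count312_succ hB h0, count321_succ hB h0]
    congr 1
    · exact Finset.sum_congr rfl fun z _ => ih z z
    rcases Nat.lt_or_ge (B 0) 2 with h2 | h2
    · rw [descentCount312_of_lt_two h2, descentCount321_of_lt_two h2]
    · rw [descentCount312_eq hB h2 hcrit, descentCount321_eq hB h2, ih]

/-- The entries `2, 1, 4, 0, 5, 6, …, m, 3, m + 1, m + 2, …` of a permutation that contains the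
pattern `312` only in a diagram whose lowest row has more than `m` cells, but acquires one in every
diagram whose second row is longer than `m` when its low values `0` and `1` are exchanged. -/
def strictWitness (m c : ℕ) : ℕ :=
  if c = 0 then 2 else if c = 1 then 1 else if c = 2 then 4 else if c = 3 then 0
  else if c < m then c + 1 else if c = m then 3 else c

theorem strictWitness_pattern {m i j k : ℕ} (hm : 4 ≤ m) (hij : i < j) (hjk : j < k)
    (hlt : strictWitness m j < strictWitness m k) (hki : strictWitness m k < strictWitness m i) :
    j = 3 ∧ k = m := by
  unfold strictWitness at hlt hki
  grind (splits := 20)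

theorem strictWitness_injective {m : ℕ} (hm : 4 ≤ m) : Function.Injective (strictWitness m) :=
  fun c d h => by
    unfold strictWitness at h
    grind (splits := 20)

theorem exists_strictWitness {N m : ℕ} (hm : 4 ≤ m) (hmN : m < N) :
    ∃ π : Perm (Fin N), ∀ c, (π c : ℕ) = strictWitness m c := by
  have hlt : ∀ c : Fin N, strictWitness m c < N := fun c => by
    unfold strictWitness
    grind
  have hinj : Function.Injective fun c : Fin N => (⟨strictWitness m c, hlt c⟩ : Fin N) :=
    fun c d h => Fin.ext (strictWitness_injective hm (congrArg Fin.val h))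
  exact ⟨Equiv.ofBijective _ (Finite.injective_iff_bijective.1 hinj), fun c => rfl⟩

theorem not_avoids312Off_of_shiftLow_eq_strictWitness {τ : Perm (Fin (n + 2))} (h4 : 4 ≤ B 0)
    (h01 : B 0 < B 1) (hn : B 0 < n + 2)
    (hτ : ∀ c, (shiftLow (B 0) τ c : ℕ) = strictWitness (B 0) c) (h1 : τ 1 = 0) :
    ¬ Avoids312Off B τ := fun ha => by
  have hτ0 : (τ 0 : ℕ) = 2 := by rw [← shiftLow_apply_zero, hτ]; rfl
  set a : Fin (n + 2) := ⟨2, by lia⟩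
  set b : Fin (n + 2) := ⟨3, by lia⟩
  set c : Fin (n + 2) := ⟨B 0, hn⟩
  have hfix : ∀ {d : Fin (n + 2)}, (τ 0 : ℕ) < shiftLow (B 0) τ d →
      (τ d : ℕ) = shiftLow (B 0) τ d := fun {d} hd =>
    congrArg Fin.val (shiftLow_apply_of_notMem fun h =>
      lt_asymm hd (mem_lowValues.1 (shiftLow_apply_mem.2 h)).1).symm
  have ha2 : (shiftLow (B 0) τ a : ℕ) = 4 := (hτ a).trans rfl
  have hc3 : (shiftLow (B 0) τ c : ℕ) = 3 := (hτ c).trans (by grind [strictWitness])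
  have hb1 : (τ b : ℕ) = 1 := by
    have hb0 : shiftLow (B 0) τ b = 0 := Fin.ext ((hτ b).trans rfl)
    have hlow := (apply_mem_lowValues.1 (shiftLow_apply_mem.1
      (hb0 ▸ zero_mem_lowValues (m := B 0) (by lia) h1))).1
    have hne : τ b ≠ 0 := fun e =>
      absurd (τ.injective (e.trans h1.symm)) (by simp [b, Fin.ext_iff])
    have := Fin.val_ne_zero_iff.2 hne
    lia
  have hne : ∀ {d : Fin (n + 2)}, 1 < (d : ℕ) → d ≠ 1 := by
    rintro d hd rfl
    exact hd.ne (Fin.val_one n).symm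
  have ha4 := (hfix (d := a) (by lia)).trans ha2
  have hc3' := (hfix (d := c) (by lia)).trans hc3
  refine ha a b c (hne ?_) (hne ?_) (hne ?_) ?_ ?_ ?_ ?_ ?_
  all_goals simp only [Fin.lt_def, ha4, hb1, hc3', a, b, c]
  all_goals lia

theorem exists_avoids312_shiftLow_not_avoids312Off (hB : Monotone B) (hp : Proper (n + 2) B)
    (h4 : 4 ≤ B 0) (h01 : B 0 < B 1) (hn : B 0 < n + 2) :
    ∃ τ : Perm (Fin (n + 2)), (FitsIn B τ ∧ Avoids312 B (shiftLow (B 0) τ)) ∧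
      shiftLow (B 0) τ 1 < shiftLow (B 0) τ 0 ∧ (τ 1 = 0 → ¬ Avoids312Off B τ) := by
  obtain ⟨π, hπ⟩ := exists_strictWitness h4 hn
  obtain ⟨τ, rfl⟩ := (shiftLow (B 0)).surjective π
  have hval : ∀ {c : Fin (n + 2)} {v w : ℕ}, (c : ℕ) = v → strictWitness (B 0) v = w →
      (shiftLow (B 0) τ c : ℕ) = w := fun hc hw => by rw [hπ, hc, hw]
  refine ⟨τ, ⟨(fitsIn_shiftLow hB).1 fun c => ?_, fun i j k hij hjk hlt hki hkB => ?_⟩, ?_,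
    not_avoids312Off_of_shiftLow_eq_strictWitness h4 h01 hn hπ⟩
  · have hw : strictWitness (B 0) (B 0) = 3 := by grind [strictWitness]
    rcases lt_trichotomy (c : ℕ) (B 0) with hc | hc | hc
    · exact hc.trans_le (hB (Nat.zero_le _))
    · rw [hval hc hw, hc]
      exact h01.trans_le (hB (by lia))
    · rw [hval rfl (by grind [strictWitness] : _ = (c : ℕ))]
      exact hp c c.isLt
  · rw [Fin.lt_def, hπ, hπ] at hlt hki
    obtain ⟨hj, hk⟩ := strictWitness_pattern h4 hij hjk hlt hki
    have h0 : shiftLow (B 0) τ j = 0 := Fin.ext (hval hj rfl)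
    rw [h0, hk, Fin.val_zero] at hkB
    exact lt_irrefl _ hkB
  · rw [Fin.lt_def, hval (Fin.val_one n) rfl, hval (Fin.val_zero _) rfl]
    exact Nat.one_lt_two

theorem count312_deleteRow_lt_descentCount312 (hB : Monotone B) (hp : Proper (n + 2) B)
    (h4 : 4 ≤ B 0) (h01 : B 0 < B 1) (hn : B 0 < n + 2) :
    count312 n (deleteRow 0 B) 0 < descentCount312 n B 0 := by
  have h2 : 2 ≤ B 0 := by lia
  obtain ⟨τ, hτ, hd, hoff⟩ := exists_avoids312_shiftLow_not_avoids312Off hB hp h4 h01 hn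
  rw [descentCount312_eq_ncard_shiftLow hB]
  refine (ncard_avoids312Off_eq_count312 hB h2 0).symm.trans_lt <|
    Set.ncard_lt_ncard (Set.ssubset_iff_exists.2 ⟨?_, τ, ?_, ?_⟩) (Set.toFinite _)
  · exact avoids312Off_subset_avoids312_shiftLow hB h2 0
  · exact ⟨⟨hτ, Nat.zero_le _⟩, hd⟩
  · exact fun h => hoff h.2 h.1.1.2

theorem count321_lt_count312 : ∀ (n : ℕ) {B : ℕ → ℕ}, Monotone B → (∀ i, B i ≤ n + 1) →
    Proper (n + 1) B → HasCriticalPoint 3 (n + 1) B → count321 n B 0 < count312 n B 0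
  | 0, B, _, _, _, ⟨j, hj, _⟩ => by lia
  | n + 1, B, hB, hn, hp, ⟨j, hj, hlt, h3⟩ => by
    have h0 : 0 < B 0 := hp 0 (by lia)
    have hle : ∀ z : Fin (n + 2), count321 n (deleteRow z B) z ≤ count312 n (deleteRow z B) z :=
      fun z => count321_le_count312 n (deleteRow_monotone hB z) z
    rw [count312_succ hB h0, count321_succ hB h0]
    rcases j with _ | j
    · refine Nat.add_lt_add_of_le_of_lt (Finset.sum_le_sum fun z _ => hle z) ?_
      rw [descentCount321_eq hB (by lia)]
      exact (count321_le_count312 n (deleteRow_monotone hB 0) _).trans_lt <|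
        count312_deleteRow_lt_descentCount312 hB hp h3 hlt (hlt.trans_le (hn 1))
    · refine Nat.add_lt_add_of_lt_of_le (Finset.sum_lt_sum (fun z _ => hle z) ⟨0, by simp, ?_⟩)
        (descentCount321_le_descentCount312 hB
          (count321_le_count312 n (deleteRow_monotone hB 0)) 0)
      have hcrit : HasCriticalPoint 3 (n + 1) (deleteRow 0 B) :=
        ⟨j, by lia, by simp only [deleteRow_zero_apply]; lia, by rw [deleteRow_zero_apply]; lia⟩
      exact count321_lt_count312 n (deleteRow_monotone hB 0) (deleteRow_le hn) hp.deleteRow_zero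
        hcrit

theorem count321_lt_count312_iff (hB : Monotone B) (hn : ∀ i, B i ≤ n + 1)
    (hp : Proper (n + 1) B) :
    count321 n B 0 < count312 n B 0 ↔ HasCriticalPoint 3 (n + 1) B := by
  refine ⟨fun h => ?_, count321_lt_count312 n hB hn hp⟩
  by_contra hcrit
  exact h.ne' (count312_eq_count321 n hB hcrit 0)

end Compare312

/-! ### Reflection in the antidiagonal -/

section Reflection

variable {n i : ℕ} {B C : ℕ → ℕ}

/-- Avoidance of the pattern `213` in the diagram with row lengths `B`. -/
def Avoids213 (B : ℕ → ℕ) (π : Perm (Fin n)) : Prop :=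
  ∀ i j k : Fin n, i < j → j < k → π j < π i → π i < π k → ¬ (k : ℕ) < B (π j)

/-- The diagrams of size `n` with row lengths `B` and `C` are mirror images in the antidiagonal: the
cell in column `c` and row `r` corresponds to the cell in column `r.rev` and row `c.rev`. -/
def IsReflection (n : ℕ) (B C : ℕ → ℕ) : Prop :=
  ∀ c r : Fin n, (c : ℕ) < B r ↔ (r.rev : ℕ) < C c.rev

theorem IsReflection.symm (h : IsReflection n B C) : IsReflection n C B := fun c r => by
  rw [h r.rev c.rev, Fin.rev_rev, Fin.rev_rev]

theorem IsReflection.proper (h : IsReflection n B C) (hp : Proper n B) : Proper n C :=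
  fun j hj => Nat.succ_le_of_lt <| by
    simpa only [Fin.rev_rev] using (h (Fin.rev ⟨j, hj⟩) (Fin.rev ⟨j, hj⟩)).1 (hp _ (Fin.is_lt _))

/-- The critical point between rows `j` and `j + 1` corresponds to the one between the mirror images
of columns `B j` and `B j - 1`. -/
theorem IsReflection.hasCriticalPoint (h : IsReflection n B C) (hn : ∀ j, B j ≤ n)
    (hc : HasCriticalPoint i n B) : HasCriticalPoint i n C := by
  obtain ⟨j, hj, hlt, hi⟩ := hc
  have hBn : B j < n := hlt.trans_le (hn _)
  have hcell : ∀ c r, (hc : c < n) → (hr : r < n) → (c < B r ↔ n - (r + 1) < C (n - (c + 1))) :=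
    fun c r hc hr => h ⟨c, hc⟩ ⟨r, hr⟩
  have hupper := (hcell (B j) (j + 1) hBn hj).1 hlt
  have hlower := mt (hcell (B j) j hBn (by lia)).2 (lt_irrefl _)
  have hleft := (hcell (B j - 1) j (by lia) (by lia)).1 (by lia)
  rw [show n - (B j - 1 + 1) = n - (B j + 1) + 1 by lia] at hleft
  exact ⟨n - (B j + 1), by lia, by lia, by lia⟩

/-- The row lengths of the mirror image of `B`: row `r` of the image is column `n - 1 - r` of `B`,
whose cells lie in the rows of length at least `n - r`. -/
def reflection (n : ℕ) (B : ℕ → ℕ) (r : ℕ) : ℕ := {j ∈ Finset.range n | n ≤ B j + r}.card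

theorem reflection_monotone : Monotone (reflection n B) := fun _ _ hrs =>
  Finset.card_le_card <| Finset.monotone_filter_right _ fun _ _ h => h.trans (by gcongr)

theorem reflection_le (r : ℕ) : reflection n B r ≤ n :=
  (Finset.card_filter_le _ _).trans (Finset.card_range n).le

theorem isReflection_reflection (hB : Monotone B) : IsReflection n B (reflection n B) := by
  intro c r
  rw [Fin.val_rev, Fin.val_rev]
  constructor
  · intro hlt
    have hsub : Finset.Ico (r : ℕ) n ⊆ {j ∈ Finset.range n | n ≤ B j + (n - (c + 1))} :=
      fun j hj => by
        rw [Finset.mem_Ico] at hj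
        rw [Finset.mem_filter, Finset.mem_range]
        have := hB hj.1
        lia
    have := Finset.card_le_card hsub
    rw [Nat.card_Ico] at this
    exact lt_of_lt_of_le (by lia) this
  · intro hlt
    by_contra hge
    have hsub : {j ∈ Finset.range n | n ≤ B j + (n - (c + 1))} ⊆ Finset.Ioo (r : ℕ) n :=
      fun j hj => by
        rw [Finset.mem_filter, Finset.mem_range] at hj
        rw [Finset.mem_Ioo]
        refine ⟨lt_of_not_ge fun hjr => ?_, hj.1⟩
        have := hB hjr
        lia
    have := hlt.trans_le (Finset.card_le_card hsub)
    rw [Nat.card_Ioo] at this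
    lia

/-- The reflection of permutation matrices in the antidiagonal. -/
def reflectPerm : Perm (Fin n) ≃ Perm (Fin n) where
  toFun π := Fin.revPerm.trans (π.symm.trans Fin.revPerm)
  invFun π := Fin.revPerm.trans (π.symm.trans Fin.revPerm)
  left_inv π := by ext; simp
  right_inv π := by ext; simp

theorem reflectPerm_apply_rev_apply (π : Perm (Fin n)) (c : Fin n) :
    reflectPerm π (π c).rev = c.rev := by simp [reflectPerm]

theorem rev_comp_surjective (π : Perm (Fin n)) : Function.Surjective fun c => (π c).rev :=
  Fin.rev_surjective.comp π.surjective

theorem IsReflection.fitsIn_reflectPerm (h : IsReflection n B C) (π : Perm (Fin n)) :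
    FitsIn C (reflectPerm π) ↔ FitsIn B π := by
  rw [FitsIn, (rev_comp_surjective π).forall]
  simp only [reflectPerm_apply_rev_apply, ← h _ _, FitsIn]

theorem IsReflection.avoids123_reflectPerm (h : IsReflection n B C) (π : Perm (Fin n)) :
    AvoidsMinFirst (· < ·) C (reflectPerm π) ↔ AvoidsMinFirst (· < ·) B π := by
  rw [AvoidsMinFirst, (rev_comp_surjective π).forall₃]
  simp only [reflectPerm_apply_rev_apply, Fin.rev_lt_rev, ← h _ _, Fin.val_fin_lt, AvoidsMinFirst]
  grind

theorem IsReflection.avoids132_reflectPerm (h : IsReflection n B C) (π : Perm (Fin n)) :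
    AvoidsMinFirst (· > ·) C (reflectPerm π) ↔ Avoids213 B π := by
  rw [AvoidsMinFirst, (rev_comp_surjective π).forall₃]
  simp only [reflectPerm_apply_rev_apply, Fin.rev_lt_rev, ← h _ _, gt_iff_lt, Fin.val_fin_lt,
    Avoids213]
  grind

theorem IsReflection.ncard_setOf_fitsIn_and (h : IsReflection n B C) {P Q : Perm (Fin n) → Prop}
    (hPQ : ∀ π, Q (reflectPerm π) ↔ P π) :
    {π | FitsIn B π ∧ P π}.ncard = {π | FitsIn C π ∧ Q π}.ncard := by
  simp only [← hPQ, ← h.fitsIn_reflectPerm]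
  exact Set.ncard_preimage_of_injective_subset_range reflectPerm.injective
    (s := {π | FitsIn C π ∧ Q π}) (by simp)

end Reflection

section Counts

variable {n : ℕ} {B : ℕ → ℕ}

theorem ncard_avoids123_eq_count123 (hB : Monotone B) (hn : ∀ i, B i ≤ n) :
    {π : Perm (Fin n) | FitsIn B π ∧ AvoidsMinFirst (· < ·) B π}.ncard = count123 n B ∅ := by
  rw [count123, ← ncard_minFirst_eq_forcedCount (.inl rfl) hB hn (by simp)]
  simp [Forced]

theorem ncard_avoids132_eq_count132 (hB : Monotone B) (hn : ∀ i, B i ≤ n) :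
    {π : Perm (Fin n) | FitsIn B π ∧ AvoidsMinFirst (· > ·) B π}.ncard = count132 n B ∅ := by
  rw [count132, ← ncard_minFirst_eq_forcedCount (.inr rfl) hB hn (by simp)]
  simp [Forced]

theorem ncard_avoids123_eq_ncard_avoids321 (hB : Monotone B) (hn : ∀ i, B i ≤ n) :
    {π : Perm (Fin n) | FitsIn B π ∧ AvoidsMinFirst (· < ·) B π}.ncard =
      {π : Perm (Fin n) | FitsIn B π ∧ Avoids321 π}.ncard := by
  rw [ncard_avoids123_eq_count123 hB hn, count123_eq_increasingCount hB hn,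
    ← ncard_avoids321_eq_increasingCount hB hn]
  simp [IncreasingUpTo]

theorem ncard_avoids213_lt_ncard_avoids123_iff (hB : Monotone B) (hn : ∀ i, B i ≤ n)
    (hp : Proper n B) :
    {π : Perm (Fin n) | FitsIn B π ∧ Avoids213 B π}.ncard <
      {π : Perm (Fin n) | FitsIn B π ∧ AvoidsMinFirst (· < ·) B π}.ncard ↔
    HasCriticalPoint 2 n B := by
  have hC := isReflection_reflection (n := n) hB
  rw [hC.ncard_setOf_fitsIn_and hC.avoids132_reflectPerm,
    hC.ncard_setOf_fitsIn_and hC.avoids123_reflectPerm,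
    ncard_avoids132_eq_count132 reflection_monotone reflection_le,
    ncard_avoids123_eq_count123 reflection_monotone reflection_le,
    count132_lt_count123_iff reflection_monotone reflection_le (hC.proper hp)]
  exact ⟨hC.symm.hasCriticalPoint reflection_le, hC.hasCriticalPoint hn⟩

theorem ncard_avoids123_lt_ncard_avoids312_iff (hB : Monotone B) (hn : ∀ i, B i ≤ n)
    (hp : Proper n B) :
    {π : Perm (Fin n) | FitsIn B π ∧ AvoidsMinFirst (· < ·) B π}.ncard <
      {π : Perm (Fin n) | FitsIn B π ∧ Avoids312 B π}.ncard ↔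
    HasCriticalPoint 3 n B := by
  rw [ncard_avoids123_eq_ncard_avoids321 hB hn]
  cases n with
  | zero =>
    rw [ncard_setOf_of_isEmpty_index fun π => ⟨fun i => i.elim0, fun i => i.elim0⟩,
      ncard_setOf_of_isEmpty_index fun π => ⟨fun i => i.elim0, fun i => i.elim0⟩]
    exact iff_of_false (lt_irrefl _) fun ⟨j, hj, _⟩ => absurd hj (Nat.not_lt_zero _)
  | succ n => simpa [count321, count312] using count321_lt_count312_iff hB hn hp

end Counts

section Statement

variable {n : ℕ} {b : Fin n → ℕ} {π : Perm (Fin n)}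

/-- The row lengths `b` as a function on all of `ℕ`, with the value `n` beyond the diagram. -/
def rowLen (b : Fin n → ℕ) (j : ℕ) : ℕ := if h : j < n then b ⟨j, h⟩ else n

theorem rowLen_of_lt {j : ℕ} (h : j < n) : rowLen b j = b ⟨j, h⟩ := dif_pos h

theorem rowLen_val (y : Fin n) : rowLen b y = b y := rowLen_of_lt y.isLt

theorem rowLen_le (hb : ∀ y, b y ≤ n) (j : ℕ) : rowLen b j ≤ n := by
  unfold rowLen
  split_ifs
  exacts [hb _, le_rfl]

theorem rowLen_monotone (hmono : Monotone b) (hb : ∀ y, b y ≤ n) : Monotone (rowLen b) := by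
  intro i j hij
  by_cases hj : j < n
  · rw [rowLen_of_lt hj, rowLen_of_lt (hij.trans_lt hj)]
    exact hmono hij
  · have hj' : rowLen b j = n := dif_neg hj
    exact (rowLen_le hb i).trans hj'.ge

theorem proper_rowLen (hb : ∀ y : Fin n, (y : ℕ) + 1 ≤ b y) : Proper n (rowLen b) := fun j hj => by
  rw [rowLen_of_lt hj]
  exact hb ⟨j, hj⟩

theorem hasCriticalPoint_rowLen_iff {i : ℕ} : HasCriticalPoint i n (rowLen b) ↔
    ∃ (j : ℕ) (h : j + 1 < n), b ⟨j, Nat.lt_of_succ_lt h⟩ < b ⟨j + 1, h⟩ ∧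
      j + (1 + i) ≤ b ⟨j, Nat.lt_of_succ_lt h⟩ := by
  refine exists_congr fun j => ?_
  rw [← exists_prop]
  refine exists_congr fun h => ?_
  rw [rowLen_of_lt h, rowLen_of_lt (Nat.lt_of_succ_lt h), add_assoc]

theorem SYcard_eq_ncard {k : ℕ} {τ : Perm (Fin k)} {A : Perm (Fin n) → Prop}
    (h : ∀ π, ContainsIn b π τ ↔ ¬ A π) :
    SYcard b τ = {π | FitsIn (rowLen b) π ∧ A π}.ncard := by
  rw [SYcard, ← Nat.card_coe_set_eq]
  simp only [h, not_not, IsTransversal, FitsIn, rowLen_val, Nat.succ_le_iff]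
  rfl

theorem containsIn_iff {k : ℕ} (hmono : Monotone b) {τ : Perm (Fin (k + 1))} :
    ContainsIn b π τ ↔ ∃ f : Fin (k + 1) → Fin n, StrictMono f ∧
      StrictMono (fun s => π (f (τ.symm s))) ∧ (f (Fin.last k) : ℕ) < b (π (f (τ.symm 0))) := by
  have horder : ∀ f : Fin (k + 1) → Fin n, (∀ s t, τ s < τ t ↔ π (f s) < π (f t)) ↔
      StrictMono fun s => π (f (τ.symm s)) := fun f => by
    refine ⟨fun h s t hst => (h _ _).1 (by simpa using hst), fun h s t => ?_⟩
    simpa using (h.lt_iff_lt (a := τ s) (b := τ t)).symm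
  simp only [ContainsIn, horder]
  refine exists_congr fun f => and_congr_right fun hf => and_congr_right fun hπ =>
    ⟨fun h => h _ _, fun h s t => ?_⟩
  have hlow : π (f (τ.symm 0)) ≤ π (f t) := by
    simpa using hπ.monotone (Fin.zero_le (τ t))
  exact (Nat.succ_le_succ (hf.monotone s.le_last)).trans (h.trans_le (hmono hlow))

theorem containsIn_three_iff (hmono : Monotone b) {τ : Perm (Fin 3)} :
    ContainsIn b π τ ↔ ∃ i j k : Fin n, i < j ∧ j < k ∧
      π (![i, j, k] (τ.symm 0)) < π (![i, j, k] (τ.symm 1)) ∧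
      π (![i, j, k] (τ.symm 1)) < π (![i, j, k] (τ.symm 2)) ∧
      (k : ℕ) < b (π (![i, j, k] (τ.symm 0))) := by
  rw [containsIn_iff hmono]
  simp only [Fin.exists_fin_succ_pi, Fin.exists_fin_zero_pi, Fin.strictMono_iff_lt_succ,
    Fin.forall_fin_two, and_assoc]
  rfl

theorem containsIn_p123_iff (hmono : Monotone b) :
    ContainsIn b π p123 ↔ ¬ AvoidsMinFirst (· < ·) (rowLen b) π := by
  rw [containsIn_three_iff hmono]
  simp only [AvoidsMinFirst, rowLen_val, not_forall, not_not, exists_prop]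
  exact exists₃_congr fun i j k => ⟨
    fun ⟨hij, hjk, h1, h2, h3⟩ => ⟨hij, hjk, h1, h1.trans h2, h2, h3⟩,
    fun ⟨hij, hjk, h1, _, h2, h3⟩ => ⟨hij, hjk, h1, h2, h3⟩⟩

theorem containsIn_p213_iff (hmono : Monotone b) :
    ContainsIn b π p213 ↔ ¬ Avoids213 (rowLen b) π := by
  rw [containsIn_three_iff hmono]
  simp only [Avoids213, rowLen_val, not_forall, not_not, exists_prop]
  rfl

theorem containsIn_p312_iff (hmono : Monotone b) :
    ContainsIn b π p312 ↔ ¬ Avoids312 (rowLen b) π := by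
  rw [containsIn_three_iff hmono]
  simp only [Avoids312, rowLen_val, not_forall, not_not, exists_prop]
  rfl

end Statement

end ShapeWilf

open ShapeWilf in
theorem stmt1 (n : ℕ) (b : Fin n → ℕ) (hmono : Monotone b)
    (hb : ∀ y : Fin n, (y : ℕ) + 1 ≤ b y ∧ b y ≤ n) :
    (SYcard b p213 < SYcard b p123 ↔
      ∃ (j : ℕ) (h : j + 1 < n), b ⟨j, Nat.lt_of_succ_lt h⟩ < b ⟨j + 1, h⟩ ∧
        j + 3 ≤ b ⟨j, Nat.lt_of_succ_lt h⟩) ∧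
    (SYcard b p123 < SYcard b p312 ↔
      ∃ (j : ℕ) (h : j + 1 < n), b ⟨j, Nat.lt_of_succ_lt h⟩ < b ⟨j + 1, h⟩ ∧
        j + 4 ≤ b ⟨j, Nat.lt_of_succ_lt h⟩) := by
  have hle : ∀ y, b y ≤ n := fun y => (hb y).2
  have hB : Monotone (rowLen b) := rowLen_monotone hmono hle
  have hn : ∀ j, rowLen b j ≤ n := rowLen_le hle
  have hp : Proper n (rowLen b) := proper_rowLen fun y => (hb y).1
  rw [SYcard_eq_ncard fun _ => containsIn_p213_iff hmono,
    SYcard_eq_ncard fun _ => containsIn_p123_iff hmono,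
    SYcard_eq_ncard fun _ => containsIn_p312_iff hmono]
  exact ⟨(ncard_avoids213_lt_ncard_avoids123_iff hB hn hp).trans hasCriticalPoint_rowLen_iff,
    (ncard_avoids123_lt_ncard_avoids312_iff hB hn hp).trans hasCriticalPoint_rowLen_iff⟩
end
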